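/- (Siegel–Walfisz theorem) Let A > 0 be fixed. There exists a constant C(A) > 0 such that for all integers q ≥ 1 and a with gcd(a,q) = 1 and all real x ≥ 2, |π(x;q,a) − (1/φ(q))·∫₂ˣ du/log u| ≤ C(A)·x/(log x)^A. -/

import Mathlib

/-!
Normalize the `L`-functions as `(s - 1) / (s + 1) * L(s, χ)` for the trivial character and `L(s, χ)`
otherwise, and put `N = q (|t| + 2)` with `t = Im s`. For `1 < Re s ≤ 2` they are at least
`c_ε N ^ (-ε)` in absolute value: for real nontrivial `χ` near `s = 1` this is Siegel's theorem,
proved by Estermann's argument, and elsewhere it follows from `3 + 4 cos θ + cos 2θ ≥ 0`, except for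
the trivial character near `s = 1`, where it is a bound for an Euler product. Together with a crude
upper bound this bounds the logarithmic derivatives by a small power of `N` on a disc of radius
`κ N ^ (-3 ε)`, and by Cauchy's estimates also every derivative of
`∑ (Λ(n) 1_{n ≡ a} - 1 / φ(q)) n ^ (-s)`.

No contour has to be moved into the critical strip: the `k`-th derivative puts a factor `log ^ k n`
into the coefficients, and a smoothed Perron integral on `Re s = 1 + 1 / log x` bounds their Riesz
sums up to `x` by `q ^ δ x ^ 2`, without any logarithm. Removing the smoothing costs only
`log ^ (k / 2) x`, and dividing by `log ^ (k + 1) n` through partial summation then saves an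
arbitrary power of `log x`.
-/

namespace SiegelWalfisz

open Finset Complex Filter Topology MeasureTheory

/-! ### Character sums and the approximate formula for `L(s, χ)` -/

lemma sum_Icc_one_ite_le (f : ℕ → ℂ) (M n : ℕ) :
    ∑ k ∈ Icc 1 n, (if k ≤ M then 0 else f k) =
      if n ≤ M then 0 else ∑ k ∈ Icc 1 n, f k - ∑ k ∈ Icc 1 M, f k := by
  induction n with
  | zero => simp
  | succ n ih =>
    rw [sum_Icc_succ_top (by omega), sum_Icc_succ_top (by omega), ih]
    rcases lt_trichotomy n M with h | rfl | h
    · simp [h.le, Nat.succ_le_of_lt h]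
    · simp
    · simp only [h.not_ge, show ¬ n + 1 ≤ M by omega, if_false]
      ring

lemma LSeries_ite_le {f : ℕ → ℂ} {s : ℂ} (hf : LSeriesSummable f s) (M : ℕ) :
    LSeries (fun n ↦ if n ≤ M then 0 else f n) s =
      LSeries f s - ∑ n ∈ Icc 1 M, f n * (n : ℂ) ^ (-s) := by
  have term_of_notMem : ∀ n ∉ Icc 1 M, LSeries.term (fun n ↦ if n ≤ M then f n else 0) s n = 0 := by
    intro n hn
    rcases eq_or_ne n 0 with rfl | hn0
    · simp
    · have : ¬ n ≤ M := fun h ↦ hn (mem_Icc.2 ⟨by omega, h⟩)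
      simp [LSeries.term_of_ne_zero hn0, this]
  have hhead : LSeriesHasSum (fun n ↦ if n ≤ M then f n else 0) s
      (∑ n ∈ Icc 1 M, f n * (n : ℂ) ^ (-s)) := by
    have : ∑ n ∈ Icc 1 M, f n * (n : ℂ) ^ (-s) =
        ∑ n ∈ Icc 1 M, LSeries.term (fun n ↦ if n ≤ M then f n else 0) s n :=
      sum_congr rfl fun n hn ↦ by
        rw [LSeries.term_of_ne_zero (by grind), if_pos (mem_Icc.1 hn).2, cpow_neg, div_eq_mul_inv]
    rw [this]
    exact hasSum_sum_of_ne_finset_zero term_of_notMem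
  have hsplit : (fun n ↦ if n ≤ M then 0 else f n) = f - fun n ↦ if n ≤ M then f n else 0 := by
    ext n
    by_cases h : n ≤ M <;> simp [h]
  rw [hsplit, LSeries_sub hf hhead.LSeriesSummable, hhead.LSeries_eq]

lemma LSeries_eq_sum_add_mul_integral {f : ℕ → ℂ} {r : ℝ} (hr : 0 ≤ r) {s : ℂ} (hs : r < s.re)
    (hf : LSeriesSummable f s)
    (hO : (fun n ↦ ∑ k ∈ Icc 1 n, f k) =O[atTop] fun n ↦ (n : ℝ) ^ r) {N : ℝ} (hN : 1 ≤ N) :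
    LSeries f s = ∑ n ∈ Icc 1 ⌊N⌋₊, f n * (n : ℂ) ^ (-s) +
      s * ∫ u in Set.Ioi N, (∑ k ∈ Icc 1 ⌊u⌋₊, f k - ∑ k ∈ Icc 1 ⌊N⌋₊, f k) *
        (u : ℂ) ^ (-(s + 1)) := by
  set M := ⌊N⌋₊
  set g : ℕ → ℂ := fun n ↦ if n ≤ M then 0 else f n with hg
  have hconst : (fun _ : ℕ ↦ ∑ k ∈ Icc 1 M, f k) =O[atTop] fun n : ℕ ↦ (n : ℝ) ^ r := by
    refine Asymptotics.IsBigO.of_bound ‖∑ k ∈ Icc 1 M, f k‖ ?_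
    filter_upwards [eventually_ge_atTop 1] with n hn
    refine le_mul_of_one_le_right (norm_nonneg _) ((Real.one_le_rpow ?_ hr).trans (le_abs_self _))
    exact_mod_cast hn
  have hgO : (fun n ↦ ∑ k ∈ Icc 1 n, g k) =O[atTop] fun n ↦ (n : ℝ) ^ r := by
    refine (hO.sub hconst).congr' ?_ .rfl
    filter_upwards [eventually_gt_atTop M] with n hn
    rw [hg, sum_Icc_one_ite_le, if_neg (by omega)]
  have hgs : LSeriesSummable g s := by
    refine Summable.of_norm_bounded hf.norm fun n ↦ ?_
    exact LSeries.norm_term_le s (by grind [norm_zero, norm_nonneg])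
  have hint : ∫ u in Set.Ioi (1 : ℝ), (∑ k ∈ Icc 1 ⌊u⌋₊, g k) * (u : ℂ) ^ (-(s + 1)) =
      ∫ u in Set.Ioi N, (∑ k ∈ Icc 1 ⌊u⌋₊, f k - ∑ k ∈ Icc 1 M, f k) * (u : ℂ) ^ (-(s + 1)) := by
    rw [setIntegral_eq_of_subset_of_forall_sdiff_eq_zero measurableSet_Ioi
      (Set.Ioi_subset_Ioi hN) fun u hu ↦ ?_]
    · refine setIntegral_congr_fun measurableSet_Ioi fun u hu ↦ ?_
      simp only [hg, sum_Icc_one_ite_le]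
      split_ifs with h
      · rw [h.antisymm (Nat.floor_mono (Set.mem_Ioi.1 hu).le), sub_self]
      · rfl
    · rw [hg, sum_Icc_one_ite_le, if_pos (Nat.floor_mono (by simpa using hu.2)), zero_mul]
  rw [← hint, ← LSeries_eq_mul_integral g hr hs hgs hgO, LSeries_ite_le hf]
  ring

/-- The summatory function `u ↦ ∑_{n ≤ u} χ(n)` of a Dirichlet character. -/
noncomputable def charSum {q : ℕ} (χ : DirichletCharacter ℂ q) (u : ℝ) : ℂ :=
  ∑ n ∈ Icc 1 ⌊u⌋₊, χ n

/-- The mean value of a Dirichlet character over a period: `φ(q) / q` for the trivial character,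
`0` for the others. -/
noncomputable def charMean {q : ℕ} [NeZero q] (χ : DirichletCharacter ℂ q) : ℂ :=
  (∑ a : ZMod q, χ a) / q

/-- The bounded error term in `∑_{n ≤ u} χ(n) = charMean χ * u + charSumError χ u`. -/
noncomputable def charSumError {q : ℕ} [NeZero q] (χ : DirichletCharacter ℂ q) (u : ℝ) : ℂ :=
  charSum χ u - charMean χ * u

lemma norm_charSum_le {q : ℕ} (χ : DirichletCharacter ℂ q) {u : ℝ} (hu : 0 ≤ u) :
    ‖charSum χ u‖ ≤ u :=
  calc ‖charSum χ u‖ ≤ ∑ _n ∈ Icc 1 ⌊u⌋₊, (1 : ℝ) := norm_sum_le_of_le _ fun n _ ↦ χ.norm_le_one n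
    _ ≤ u := by simpa using Nat.floor_le hu

lemma measurable_charSum {q : ℕ} (χ : DirichletCharacter ℂ q) : Measurable (charSum χ) :=
  (measurable_from_nat (f := fun m : ℕ ↦ ∑ n ∈ Icc 1 m, χ n)).comp Nat.measurable_floor

section

variable {q : ℕ} [NeZero q]

lemma sum_range_natCast_zmod (Φ : ZMod q → ℂ) : ∑ n ∈ range q, Φ n = ∑ a, Φ a := by
  refine sum_bij' (fun n _ ↦ (n : ZMod q)) (fun a _ ↦ a.val) (by simp)
    (fun a _ ↦ mem_range.2 a.val_lt) (fun n hn ↦ ?_) (by simp) (by simp)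
  exact ZMod.val_cast_of_lt (mem_range.1 hn)

lemma sum_range_mul_natCast_zmod (Φ : ZMod q → ℂ) (m : ℕ) :
    ∑ n ∈ range (q * m), Φ n = m * ∑ a, Φ a := by
  induction m with
  | zero => simp
  | succ m ih =>
    have hperiod : ∑ n ∈ range q, Φ ((q * m + n : ℕ) : ZMod q) = ∑ a, Φ a := by
      simpa using sum_range_natCast_zmod Φ
    rw [Nat.mul_succ, sum_range_add, ih, hperiod]
    push_cast
    ring

variable (χ : DirichletCharacter ℂ q)

lemma charMean_of_ne_one {χ : DirichletCharacter ℂ q} (hχ : χ ≠ 1) : charMean χ = 0 := by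
  rw [charMean, MulChar.sum_eq_zero_of_ne_one hχ, zero_div]

lemma norm_charMean_le_one : ‖charMean χ‖ ≤ 1 := by
  have hq : (0 : ℝ) < q := by exact_mod_cast NeZero.pos q
  rw [charMean, norm_div, Complex.norm_natCast, div_le_one hq]
  calc ‖∑ a, χ a‖ ≤ ∑ _a : ZMod q, (1 : ℝ) := norm_sum_le_of_le _ fun a _ ↦ χ.norm_le_one a
    _ = q := by simp [ZMod.card]

lemma norm_sum_range_sub_charMean_mul_le (M : ℕ) :
    ‖∑ n ∈ range M, χ n - charMean χ * M‖ ≤ 2 * q := by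
  have hq : (q : ℂ) ≠ 0 := NeZero.ne _
  have hr : ((M % q : ℕ) : ℝ) ≤ q := by exact_mod_cast (Nat.mod_lt M (NeZero.pos q)).le
  have hreduce : ∑ n ∈ range M, χ n - charMean χ * M =
      ∑ n ∈ range (M % q), χ ((q * (M / q) + n : ℕ) : ZMod q) - charMean χ * (M % q : ℕ) := by
    conv_lhs => rw [← Nat.div_add_mod M q]
    rw [sum_range_add, sum_range_mul_natCast_zmod, charMean]
    push_cast
    field_simp
    ring
  rw [hreduce, two_mul]
  refine (norm_sub_le _ _).trans (add_le_add ?_ ?_)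
  · refine (norm_sum_le_of_le _ fun n _ ↦ χ.norm_le_one _).trans ?_
    simpa using hr
  · rw [norm_mul, Complex.norm_natCast]
    exact (mul_le_of_le_one_left (by positivity) (norm_charMean_le_one χ)).trans hr

lemma norm_charSumError_le {u : ℝ} (hu : 0 ≤ u) : ‖charSumError χ u‖ ≤ 4 * q := by
  have hq : (1 : ℝ) ≤ q := by exact_mod_cast NeZero.one_le
  have hsplit : charSumError χ u =
      (∑ n ∈ range (⌊u⌋₊ + 1), χ n - charMean χ * (⌊u⌋₊ + 1 : ℕ)) - χ (0 : ℕ) +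
        charMean χ * ((⌊u⌋₊ + 1 - u : ℝ) : ℂ) := by
    rw [charSumError, charSum, range_eq_Ico, sum_eq_sum_Ico_succ_bot (by omega),
      show Ico (0 + 1) (⌊u⌋₊ + 1) = Icc 1 ⌊u⌋₊ from rfl]
    push_cast
    ring
  have hfrac : ‖charMean χ * ((⌊u⌋₊ + 1 - u : ℝ) : ℂ)‖ ≤ 1 := by
    have := Nat.floor_le hu
    have := Nat.lt_floor_add_one u
    rw [norm_mul, Complex.norm_real, Real.norm_of_nonneg (by linarith)]
    exact mul_le_one₀ (norm_charMean_le_one χ) (by linarith) (by linarith)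
  rw [hsplit]
  calc _ ≤ 2 * (q : ℝ) + 1 + 1 := (norm_add_le _ _).trans (add_le_add ((norm_sub_le _ _).trans
          (add_le_add (norm_sum_range_sub_charMean_mul_le χ _) (χ.norm_le_one _))) hfrac)
    _ ≤ 4 * q := by linarith

lemma measurable_charSumError : Measurable (charSumError χ) :=
  (measurable_charSum χ).sub (measurable_const.mul Complex.measurable_ofReal)

lemma norm_charSumError_mul_cpow_le (s : ℂ) {u : ℝ} (hu : 0 < u) :
    ‖charSumError χ u * (u : ℂ) ^ (-(s + 1))‖ ≤ 4 * q * u ^ (-(s.re + 1)) := by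
  rw [norm_mul, Complex.norm_cpow_eq_rpow_re_of_pos hu]
  simp only [neg_re, add_re, one_re]
  gcongr
  exact norm_charSumError_le χ hu.le

lemma integrableOn_charSumError_mul_cpow {s : ℂ} (hs : 0 < s.re) {a : ℝ} (ha : 0 < a) :
    IntegrableOn (fun u : ℝ ↦ charSumError χ u * (u : ℂ) ^ (-(s + 1))) (Set.Ioi a) := by
  refine Integrable.mono' (g := fun u ↦ 4 * q * u ^ (-(s.re + 1)))
    ((integrableOn_Ioi_rpow_of_lt (by linarith) ha).const_mul _) ?_ ?_
  · refine (measurable_charSumError χ).aestronglyMeasurable.mul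
      (ContinuousOn.aestronglyMeasurable (fun u hu ↦ ?_) measurableSet_Ioi)
    exact (Complex.continuousAt_ofReal_cpow_const u _
      (Or.inr (ha.trans hu).ne')).continuousWithinAt
  · filter_upwards [ae_restrict_mem measurableSet_Ioi] with u hu
    exact norm_charSumError_mul_cpow_le χ s (ha.trans hu)

lemma norm_integral_charSumError_mul_cpow_le {s : ℂ} (hs : 0 < s.re) {N : ℝ} (hN : 0 < N) :
    ‖∫ u in Set.Ioi N, charSumError χ u * (u : ℂ) ^ (-(s + 1))‖ ≤
      4 * q * (N ^ (-s.re) / s.re) :=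
  calc _ ≤ ∫ u in Set.Ioi N, 4 * q * u ^ (-(s.re + 1)) := by
        refine norm_integral_le_of_norm_le
          ((integrableOn_Ioi_rpow_of_lt (by linarith) hN).const_mul _) ?_
        filter_upwards [ae_restrict_mem measurableSet_Ioi] with u hu
        exact norm_charSumError_mul_cpow_le χ s (hN.trans hu)
    _ = 4 * q * (N ^ (-s.re) / s.re) := by
        rw [integral_const_mul, integral_Ioi_rpow_of_lt (by linarith) hN,
          show -(s.re + 1) + 1 = -s.re by ring, neg_div_neg_eq]

/-- The part of the approximate formula for `L(s, χ)` at height `N` that is regular at `s = 1`. -/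
noncomputable def approxL (N : ℝ) (s : ℂ) : ℂ :=
  ∑ n ∈ Icc 1 ⌊N⌋₊, χ n * (n : ℂ) ^ (-s) - charSumError χ N * (N : ℂ) ^ (-s) +
    s * ∫ u in Set.Ioi N, charSumError χ u * (u : ℂ) ^ (-(s + 1))

lemma integral_charSum_sub_mul_cpow {N : ℝ} (hN : 0 < N) {s : ℂ} (hs : 1 < s.re) :
    ∫ u in Set.Ioi N, (charSum χ u - charSum χ N) * (u : ℂ) ^ (-(s + 1)) =
      (∫ u in Set.Ioi N, charSumError χ u * (u : ℂ) ^ (-(s + 1))) +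
        charMean χ * ((N : ℂ) ^ (1 - s) / (s - 1)) - charSum χ N * ((N : ℂ) ^ (-s) / s) := by
  have hsplit : ∀ u ∈ Set.Ioi N, (charSum χ u - charSum χ N) * (u : ℂ) ^ (-(s + 1)) =
      charSumError χ u * (u : ℂ) ^ (-(s + 1)) +
        (charMean χ * (u : ℂ) ^ (-s) - charSum χ N * (u : ℂ) ^ (-(s + 1))) := fun u hu ↦ by
    have hu : (u : ℂ) ≠ 0 := ofReal_ne_zero.2 (hN.trans hu).ne'
    rw [charSumError, show -s = 1 + -(s + 1) by ring, cpow_add _ _ hu, cpow_one]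
    ring
  have hre : (-s).re < -1 := by simpa using hs
  have hre' : (-(s + 1)).re < -1 := by simp; linarith
  have hi₀ := integrableOn_charSumError_mul_cpow χ (s := s) (by linarith) hN
  have hi₁ := (integrableOn_Ioi_cpow_of_lt hre hN).const_mul (charMean χ)
  have hi₂ := (integrableOn_Ioi_cpow_of_lt hre' hN).const_mul (charSum χ N)
  have hi₁₂ : IntegrableOn (fun u : ℝ ↦ charMean χ * (u : ℂ) ^ (-s) -
    charSum χ N * (u : ℂ) ^ (-(s + 1))) (Set.Ioi N) := hi₁.sub hi₂
  rw [setIntegral_congr_fun measurableSet_Ioi hsplit, integral_add hi₀ hi₁₂,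
    integral_sub hi₁ hi₂, integral_const_mul, integral_const_mul,
    integral_Ioi_cpow_of_lt hre hN, integral_Ioi_cpow_of_lt hre' hN,
    show -(s + 1) + 1 = -s by ring, neg_div_neg_eq, show -s + 1 = 1 - s by ring,
    show 1 - s = -(s - 1) by ring, neg_div_neg_eq]
  ring

lemma LFunction_eq_approxL_of_one_lt_re {N : ℝ} (hN : 1 ≤ N) {s : ℂ} (hs : 1 < s.re) :
    χ.LFunction s = approxL χ N s + charMean χ * (N : ℂ) ^ (1 - s) / (s - 1) := by
  have hN0 : 0 < N := by linarith
  have hs0 : s ≠ 0 := by rintro rfl; simp at hs; linarith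
  have hs1 : s - 1 ≠ 0 := sub_ne_zero.2 (by rintro rfl; simp at hs)
  have hO : (fun n : ℕ ↦ ∑ k ∈ Icc 1 n, χ k) =O[atTop] fun n : ℕ ↦ (n : ℝ) ^ (1 : ℝ) := by
    refine Asymptotics.isBigO_of_le _ fun n ↦ ?_
    simpa [charSum] using norm_charSum_le χ n.cast_nonneg
  have hN1 : (N : ℂ) ^ (1 - s) = N * (N : ℂ) ^ (-s) := by
    rw [sub_eq_add_neg, cpow_add _ _ (ofReal_ne_zero.2 hN0.ne'), cpow_one]
  have habel : LSeries (fun n ↦ χ n) s = ∑ n ∈ Icc 1 ⌊N⌋₊, χ n * (n : ℂ) ^ (-s) +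
      s * ∫ u in Set.Ioi N, (charSum χ u - charSum χ N) * (u : ℂ) ^ (-(s + 1)) :=
    LSeries_eq_sum_add_mul_integral zero_le_one hs
      (DirichletCharacter.LSeriesSummable_of_one_lt_re χ hs) hO hN
  rw [DirichletCharacter.LFunction_eq_LSeries χ hs, habel,
    integral_charSum_sub_mul_cpow χ hN0 hs, approxL, charSumError, hN1]
  field_simp
  ring

lemma differentiableAt_integral_charSumError {N : ℝ} (hN : 0 < N) {s : ℂ} (hs : 0 < s.re) :
    DifferentiableAt ℂ
      (fun s : ℂ ↦ ∫ u in Set.Ioi N, charSumError χ u * (u : ℂ) ^ (-(s + 1))) s := by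
  set g := Set.indicator (Set.Ioi N) (charSumError χ) with hg
  have norm_g_le (u : ℝ) : ‖g u‖ ≤ 4 * q := by
    by_cases hu : u ∈ Set.Ioi N
    · rw [hg, Set.indicator_of_mem hu]
      exact norm_charSumError_le χ (hN.trans hu).le
    · rw [hg, Set.indicator_of_notMem hu, norm_zero]
      positivity
  have hmellin : (fun s : ℂ ↦ ∫ u in Set.Ioi N, charSumError χ u * (u : ℂ) ^ (-(s + 1))) =
      fun s ↦ mellin g (-s) := by
    funext s
    rw [mellin, setIntegral_eq_of_subset_of_forall_sdiff_eq_zero measurableSet_Ioi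
      (Set.Ioi_subset_Ioi hN.le) fun u hu ↦ ?_]
    · refine setIntegral_congr_fun measurableSet_Ioi fun u hu ↦ ?_
      simp only [hg, Set.indicator_of_mem hu, smul_eq_mul, neg_add', mul_comm]
    · rw [hg, Set.indicator_of_notMem hu.2, smul_zero]
  have hlocal : LocallyIntegrableOn g (Set.Ioi 0) := by
    refine (LocallyIntegrable.mono (locallyIntegrable_const (4 * (q : ℝ)))
      ((measurable_charSumError χ).indicator measurableSet_Ioi).aestronglyMeasurable
      (Eventually.of_forall fun u ↦ ?_)).locallyIntegrableOn _
    exact (norm_g_le u).trans (le_abs_self _)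
  have htop : g =O[atTop] fun u : ℝ ↦ u ^ (-(0 : ℝ)) :=
    Asymptotics.IsBigO.of_bound (4 * q) (Eventually.of_forall fun u ↦ by simpa using norm_g_le u)
  have hzero : g =O[𝓝[>] 0] fun u : ℝ ↦ u ^ (-(-s.re - 1)) := by
    refine Asymptotics.IsBigO.of_bound 1 ?_
    filter_upwards [mem_nhdsWithin_of_mem_nhds (Iio_mem_nhds hN)] with u hu
    rw [hg, Set.indicator_of_notMem (Set.notMem_Ioi.2 (le_of_lt hu)), norm_zero]
    positivity
  rw [hmellin]
  exact (mellin_differentiableAt_of_isBigO_rpow hlocal htop (by simpa using hs) hzero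
    (by simp)).comp s differentiableAt_id.neg

lemma differentiableOn_approxL {N : ℝ} (hN : 0 < N) :
    DifferentiableOn ℂ (approxL χ N) {s | 0 < s.re} := by
  intro s hs
  have hcpow {u : ℝ} (hu : 0 < u) : DifferentiableAt ℂ (fun s : ℂ ↦ (u : ℂ) ^ (-s)) s :=
    differentiableAt_id.neg.const_cpow (Or.inl (ofReal_ne_zero.2 hu.ne'))
  refine (((DifferentiableAt.fun_sum fun n hn ↦ ?_).sub ((hcpow hN).const_mul _)).add
    (differentiableAt_id.mul
      (differentiableAt_integral_charSumError χ hN hs))).differentiableWithinAt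
  exact (hcpow (Nat.cast_pos.2 (mem_Icc.1 hn).1)).const_mul _

lemma eqOn_re_pos_of_eqOn_one_lt_re {f g : ℂ → ℂ} (hf : DifferentiableOn ℂ f {s | 0 < s.re})
    (hg : DifferentiableOn ℂ g {s | 0 < s.re}) (hfg : Set.EqOn f g {s | 1 < s.re}) :
    Set.EqOn f g {s | 0 < s.re} := by
  have hopen (c : ℝ) : IsOpen {s : ℂ | c < s.re} := isOpen_lt continuous_const continuous_re
  refine (hf.analyticOnNhd (hopen 0)).eqOn_of_preconnected_of_eventuallyEq
    (hg.analyticOnNhd (hopen 0)) (convex_halfSpace_re_gt 0).isPreconnected (z₀ := 2) (by simp) ?_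
  filter_upwards [(hopen 1).mem_nhds (show (2 : ℂ) ∈ {s : ℂ | 1 < s.re} by simp)] using hfg

lemma LFunction_eq_approxL {χ : DirichletCharacter ℂ q} (hχ : χ ≠ 1) {N : ℝ} (hN : 1 ≤ N) {s : ℂ}
    (hs : 0 < s.re) : χ.LFunction s = approxL χ N s :=
  eqOn_re_pos_of_eqOn_one_lt_re (DirichletCharacter.differentiable_LFunction hχ).differentiableOn
    (differentiableOn_approxL χ (by linarith)) (fun s hs ↦ by
      rw [LFunction_eq_approxL_of_one_lt_re χ hN hs, charMean_of_ne_one hχ]; simp) hs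

lemma LFunctionTrivChar₁_eq_approxL {N : ℝ} (hN : 1 ≤ N) {s : ℂ} (hs : 0 < s.re) :
    DirichletCharacter.LFunctionTrivChar₁ q s = (s - 1) * approxL (1 : DirichletCharacter ℂ q) N s +
      charMean (1 : DirichletCharacter ℂ q) * (N : ℂ) ^ (1 - s) := by
  have hN0 : 0 < N := by linarith
  refine eqOn_re_pos_of_eqOn_one_lt_re
    (g := fun s ↦ (s - 1) * approxL (1 : DirichletCharacter ℂ q) N s +
      charMean (1 : DirichletCharacter ℂ q) * (N : ℂ) ^ (1 - s))
    (DirichletCharacter.differentiable_LFunctionTrivChar₁ q).differentiableOn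
    (((differentiableOn_id.sub_const 1).mul (differentiableOn_approxL 1 hN0)).add
      (DifferentiableOn.const_mul ?_ _)) (fun s hs ↦ ?_) hs
  · exact (differentiableOn_id.const_sub 1).const_cpow (Or.inl (ofReal_ne_zero.2 hN0.ne'))
  · have hs1 : s ≠ 1 := by rintro rfl; simp at hs
    have := sub_ne_zero.2 hs1
    rw [DirichletCharacter.LFunctionTrivChar₁, Function.update_of_ne hs1,
      DirichletCharacter.LFunctionTrivChar, LFunction_eq_approxL_of_one_lt_re 1 hN hs]
    field_simp

end

/-! ### The normalized `L`-function and its growth -/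

/-- The analytic conductor `q (|t| + 2)` of `s ↦ L(s, χ)` at height `t`, for `χ` modulo `q`. -/
noncomputable def analyticConductor (q : ℕ) (t : ℝ) : ℝ := q * (|t| + 2)

lemma analyticConductor_mono (q : ℕ) {t u : ℝ} (h : |t| ≤ |u|) :
    analyticConductor q t ≤ analyticConductor q u := by
  unfold analyticConductor
  gcongr

lemma natCast_le_analyticConductor (q : ℕ) (t : ℝ) : (q : ℝ) ≤ analyticConductor q t :=
  le_mul_of_one_le_right q.cast_nonneg (by linarith [abs_nonneg t])

section

variable (q : ℕ) [NeZero q]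

lemma two_le_analyticConductor (t : ℝ) : 2 ≤ analyticConductor q t := by
  have hq : (1 : ℝ) ≤ q := by exact_mod_cast NeZero.one_le
  unfold analyticConductor
  nlinarith [abs_nonneg t]

lemma one_le_analyticConductor (t : ℝ) : 1 ≤ analyticConductor q t :=
  one_le_two.trans (two_le_analyticConductor q t)

lemma analyticConductor_one_le (t : ℝ) : analyticConductor 1 t ≤ analyticConductor q t := by
  have hq : (1 : ℝ) ≤ q := by exact_mod_cast NeZero.one_le
  unfold analyticConductor
  rw [Nat.cast_one]
  gcongr

lemma analyticConductor_pos (t : ℝ) : 0 < analyticConductor q t :=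
  zero_lt_one.trans_le (one_le_analyticConductor q t)

end

section

variable {q : ℕ}

lemma norm_sum_mul_cpow_le (χ : DirichletCharacter ℂ q) {ε : ℝ} (hε : 0 < ε) {N : ℝ} (hN : 0 ≤ N)
    {s : ℂ} (hs : 1 - ε ≤ s.re) :
    ‖∑ n ∈ Icc 1 ⌊N⌋₊, χ n * (n : ℂ) ^ (-s)‖ ≤
      (∑' n : ℕ, (n : ℝ) ^ (-(1 + ε))) * N ^ (2 * ε) := by
  have hsummable : Summable fun n : ℕ ↦ (n : ℝ) ^ (-(1 + ε)) :=
    Real.summable_nat_rpow.2 (by linarith)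
  have norm_term_le : ∀ n ∈ Icc 1 ⌊N⌋₊,
      ‖χ n * (n : ℂ) ^ (-s)‖ ≤ (n : ℝ) ^ (-(1 + ε)) * N ^ (2 * ε) := fun n hn ↦ by
    have hn1 : (1 : ℝ) ≤ n := by exact_mod_cast (mem_Icc.1 hn).1
    have hn0 : (0 : ℝ) < n := by linarith
    have hnN : (n : ℝ) ≤ N := (Nat.le_floor_iff hN).1 (mem_Icc.1 hn).2
    rw [norm_mul, ← ofReal_natCast, norm_cpow_eq_rpow_re_of_pos hn0]
    calc ‖χ ((n : ℕ) : ZMod q)‖ * (n : ℝ) ^ (-s).re ≤ 1 * (n : ℝ) ^ (-(1 + ε) + 2 * ε) := by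
          gcongr
          · exact χ.norm_le_one _
          · simp; linarith
      _ = (n : ℝ) ^ (-(1 + ε)) * (n : ℝ) ^ (2 * ε) := by rw [one_mul, Real.rpow_add hn0]
      _ ≤ (n : ℝ) ^ (-(1 + ε)) * N ^ (2 * ε) := by gcongr
  calc _ ≤ ∑ n ∈ Icc 1 ⌊N⌋₊, (n : ℝ) ^ (-(1 + ε)) * N ^ (2 * ε) := norm_sum_le_of_le _ norm_term_le
    _ = (∑ n ∈ Icc 1 ⌊N⌋₊, (n : ℝ) ^ (-(1 + ε))) * N ^ (2 * ε) := (sum_mul ..).symm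
    _ ≤ (∑' n : ℕ, (n : ℝ) ^ (-(1 + ε))) * N ^ (2 * ε) := by
        gcongr
        exact hsummable.sum_le_tsum _ fun n _ ↦ by positivity

variable [NeZero q]

lemma norm_charSumError_mul_cpow_le_rpow (χ : DirichletCharacter ℂ q) {N : ℝ} (hN : 0 < N) (s : ℂ) :
    ‖charSumError χ N * (N : ℂ) ^ (-s)‖ ≤ 2 * N ^ (1 - s.re) := by
  have herror : ‖charSumError χ N‖ ≤ 2 * N := by
    have hmean : ‖charMean χ * N‖ ≤ N := by
      rw [norm_mul, norm_real, Real.norm_of_nonneg hN.le]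
      exact mul_le_of_le_one_left hN.le (norm_charMean_le_one χ)
    calc ‖charSumError χ N‖ ≤ ‖charSum χ N‖ + ‖charMean χ * N‖ := norm_sub_le _ _
      _ ≤ 2 * N := by linarith [norm_charSum_le χ hN.le]
  rw [norm_mul, norm_cpow_eq_rpow_re_of_pos hN, sub_eq_add_neg, Real.rpow_add hN, Real.rpow_one,
    ← mul_assoc, neg_re]
  gcongr

lemma norm_mul_integral_charSumError_le (χ : DirichletCharacter ℂ q) {s : ℂ}
    (hs : 1 / 2 ≤ s.re) :
    ‖s * ∫ u in Set.Ioi (analyticConductor q s.im), charSumError χ u * (u : ℂ) ^ (-(s + 1))‖ ≤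
      8 * analyticConductor q s.im ^ (1 - s.re) := by
  have hs0 : 0 < s.re := by linarith
  have hN := analyticConductor_pos q s.im
  have hnorm : ‖s‖ / s.re ≤ 2 * (|s.im| + 2) := by
    rw [div_le_iff₀ hs0]
    refine (norm_le_abs_re_add_abs_im s).trans ?_
    rw [abs_of_pos hs0]
    nlinarith [abs_nonneg s.im]
  rw [norm_mul]
  calc _ ≤ ‖s‖ * (4 * q * (analyticConductor q s.im ^ (-s.re) / s.re)) := by
        gcongr
        exact norm_integral_charSumError_mul_cpow_le χ hs0 hN
    _ = 4 * q * (‖s‖ / s.re) * analyticConductor q s.im ^ (-s.re) := by ring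
    _ ≤ 4 * q * (2 * (|s.im| + 2)) * analyticConductor q s.im ^ (-s.re) := by gcongr
    _ = 8 * (analyticConductor q s.im ^ (1 : ℝ) * analyticConductor q s.im ^ (-s.re)) := by
        rw [Real.rpow_one]
        nth_rw 2 [analyticConductor]
        ring
    _ = 8 * analyticConductor q s.im ^ (1 - s.re) := by rw [← Real.rpow_add hN, sub_eq_add_neg]

lemma norm_approxL_le (χ : DirichletCharacter ℂ q) {ε : ℝ} (hε : 0 < ε) (hε' : ε ≤ 1 / 2) {s : ℂ}
    (hs : 1 - ε ≤ s.re) :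
    ‖approxL χ (analyticConductor q s.im) s‖ ≤
      ((∑' n : ℕ, (n : ℝ) ^ (-(1 + ε))) + 10) * analyticConductor q s.im ^ (2 * ε) := by
  have hN := analyticConductor_pos q s.im
  have hpow : analyticConductor q s.im ^ (1 - s.re) ≤ analyticConductor q s.im ^ (2 * ε) :=
    Real.rpow_le_rpow_of_exponent_le (one_le_analyticConductor q s.im) (by linarith)
  have h₁ := norm_sum_mul_cpow_le χ hε hN.le hs
  have h₂ := norm_charSumError_mul_cpow_le_rpow χ hN s
  have h₃ := norm_mul_integral_charSumError_le χ (s := s) (by linarith)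
  rw [approxL]
  refine (norm_add_le _ _).trans ((add_le_add_left (norm_sub_le _ _) _).trans ?_)
  linarith

/-- The `L`-function of `χ`, made holomorphic at `s = 1`: for the trivial character the pole is
cancelled by the factor `(s - 1) / (s + 1)`, which is bounded on the right half-plane. -/
noncomputable def normalizedL (χ : DirichletCharacter ℂ q) (s : ℂ) : ℂ :=
  open Classical in
  if χ = 1 then DirichletCharacter.LFunctionTrivChar₁ q s / (s + 1) else χ.LFunction s

lemma normalizedL_of_ne_one {χ : DirichletCharacter ℂ q} (hχ : χ ≠ 1) :
    normalizedL χ = χ.LFunction :=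
  funext fun _ ↦ if_neg hχ

lemma normalizedL_one (s : ℂ) : normalizedL (1 : DirichletCharacter ℂ q) s =
    DirichletCharacter.LFunctionTrivChar₁ q s / (s + 1) :=
  if_pos rfl

lemma normalizedL_one_of_ne_one {s : ℂ} (hs : s ≠ 1) :
    normalizedL (1 : DirichletCharacter ℂ q) s =
      (s - 1) / (s + 1) * (1 : DirichletCharacter ℂ q).LFunction s := by
  rw [normalizedL_one, DirichletCharacter.LFunctionTrivChar₁, Function.update_of_ne hs,
    DirichletCharacter.LFunctionTrivChar, mul_div_right_comm]

lemma add_one_ne_zero_of_re_pos {s : ℂ} (hs : 0 < s.re) : s + 1 ≠ 0 := fun h ↦ by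
  have := congrArg re h
  simp at this
  linarith

lemma differentiableAt_normalizedL (χ : DirichletCharacter ℂ q) {s : ℂ} (hs : 0 < s.re) :
    DifferentiableAt ℂ (normalizedL χ) s := by
  by_cases hχ : χ = 1
  · subst hχ
    rw [funext normalizedL_one]
    exact (DirichletCharacter.differentiable_LFunctionTrivChar₁ q s).div
      (differentiableAt_id.add_const 1) (add_one_ne_zero_of_re_pos hs)
  · rw [normalizedL_of_ne_one hχ]
    exact DirichletCharacter.differentiable_LFunction hχ s

lemma norm_normalizedL_le_norm_approxL (χ : DirichletCharacter ℂ q) {s : ℂ} (hs : 0 < s.re) {N : ℝ}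
    (hN : 1 ≤ N) : ‖normalizedL χ s‖ ≤ ‖approxL χ N s‖ + N ^ (1 - s.re) := by
  have hN0 : 0 < N := by linarith
  by_cases hχ : χ = 1
  · subst hχ
    have hone : 1 ≤ ‖s + 1‖ := by
      have := re_le_norm (s + 1)
      simp at this
      linarith
    have hle : ‖s - 1‖ ≤ ‖s + 1‖ := by
      rw [norm_def, norm_def]
      refine Real.sqrt_le_sqrt ?_
      simp [normSq_apply]
      nlinarith
    have hmean : ‖charMean (1 : DirichletCharacter ℂ q) * (N : ℂ) ^ (1 - s)‖ ≤ N ^ (1 - s.re) := by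
      rw [norm_mul, norm_cpow_eq_rpow_re_of_pos hN0, sub_re, one_re]
      exact mul_le_of_le_one_left (by positivity) (norm_charMean_le_one _)
    rw [normalizedL_one, LFunctionTrivChar₁_eq_approxL hN hs, norm_div, div_le_iff₀ (by linarith)]
    calc _ ≤ ‖s - 1‖ * ‖approxL 1 N s‖ + N ^ (1 - s.re) * 1 := by
          rw [← norm_mul, mul_one]
          exact (norm_add_le _ _).trans (by gcongr)
      _ ≤ ‖s + 1‖ * ‖approxL 1 N s‖ + N ^ (1 - s.re) * ‖s + 1‖ := by gcongr
      _ = _ := by ring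
  · rw [normalizedL_of_ne_one hχ, LFunction_eq_approxL hχ hN hs]
    exact le_add_of_nonneg_right (by positivity)

end

theorem exists_norm_normalizedL_le {ε : ℝ} (hε : 0 < ε) (hε' : ε ≤ 1 / 2) :
    ∃ C : ℝ, 1 ≤ C ∧ ∀ (q : ℕ) [NeZero q] (χ : DirichletCharacter ℂ q) (s : ℂ), 1 - ε ≤ s.re →
      ‖normalizedL χ s‖ ≤ C * analyticConductor q s.im ^ (2 * ε) := by
  have hZ : 0 ≤ ∑' n : ℕ, (n : ℝ) ^ (-(1 + ε)) := tsum_nonneg fun n ↦ by positivity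
  refine ⟨(∑' n : ℕ, (n : ℝ) ^ (-(1 + ε))) + 11, by linarith, fun q _ χ s hs ↦ ?_⟩
  have hN := one_le_analyticConductor q s.im
  have hpow : analyticConductor q s.im ^ (1 - s.re) ≤ analyticConductor q s.im ^ (2 * ε) :=
    Real.rpow_le_rpow_of_exponent_le hN (by linarith)
  have h₁ := norm_normalizedL_le_norm_approxL χ (s := s) (by linarith) hN
  have h₂ := norm_approxL_le χ hε hε' hs
  linarith

lemma analyticConductor_le_two_mul {q : ℕ} {t u : ℝ} (h : |u| ≤ 2 * |t| + 2) :
    analyticConductor q u ≤ 2 * analyticConductor q t := by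
  have hu : |u| + 2 ≤ 2 * (|t| + 2) := by
    linarith
  calc (q : ℝ) * (|u| + 2) ≤ q * (2 * (|t| + 2)) := by gcongr
    _ = 2 * (q * (|t| + 2)) := by ring

lemma analyticConductor_rpow_le_two_mul {q : ℕ} {t u δ : ℝ} (h : |u| ≤ 2 * |t| + 2) (hδ : 0 ≤ δ)
    (hδ' : δ ≤ 1) : analyticConductor q u ^ δ ≤ 2 * analyticConductor q t ^ δ := by
  have hnonneg (t : ℝ) : 0 ≤ analyticConductor q t := by unfold analyticConductor; positivity
  calc analyticConductor q u ^ δ ≤ (2 * analyticConductor q t) ^ δ :=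
        Real.rpow_le_rpow (hnonneg u) (analyticConductor_le_two_mul h) hδ
    _ = 2 ^ δ * analyticConductor q t ^ δ := Real.mul_rpow zero_le_two (hnonneg t)
    _ ≤ 2 * analyticConductor q t ^ δ := by
        gcongr
        · exact Real.rpow_nonneg (hnonneg t) δ
        · exact (Real.rpow_le_rpow_of_exponent_le one_le_two hδ').trans_eq (Real.rpow_one 2)

lemma sub_le_re_of_mem_closedBall {s z : ℂ} {r : ℝ} (hz : z ∈ Metric.closedBall s r) :
    s.re - r ≤ z.re := by
  have := abs_le.1 ((abs_re_le_norm (z - s)).trans (mem_closedBall_iff_norm.1 hz))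
  rw [sub_re] at this
  linarith

lemma abs_im_le_of_mem_closedBall {s z : ℂ} {r : ℝ} (hz : z ∈ Metric.closedBall s r) :
    |z.im| ≤ |s.im| + r := by
  have := (abs_im_le_norm (z - s)).trans (mem_closedBall_iff_norm.1 hz)
  rw [sub_im] at this
  linarith [abs_sub_abs_le_abs_sub z.im s.im]

lemma exists_norm_deriv_normalizedL_le {ε : ℝ} (hε : 0 < ε) (hε' : ε ≤ 1 / 2) :
    ∃ C : ℝ, 1 ≤ C ∧ ∀ (q : ℕ) [NeZero q] (χ : DirichletCharacter ℂ q) (s : ℂ),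
      1 - ε / 2 ≤ s.re → ‖deriv (normalizedL χ) s‖ ≤ C * analyticConductor q s.im ^ (2 * ε) := by
  obtain ⟨C, hC, hbound⟩ := exists_norm_normalizedL_le hε hε'
  refine ⟨C * 2 / (ε / 2), ?_, fun q _ χ s hs ↦ ?_⟩
  · rw [le_div_iff₀ (by linarith)]
    nlinarith
  have hdiff : DifferentiableOn ℂ (normalizedL χ) {s | 0 < s.re} := fun z hz ↦
    (differentiableAt_normalizedL χ hz).differentiableWithinAt
  have hcauchy := norm_deriv_le_of_forall_mem_sphere_norm_le (R := ε / 2)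
    (C := C * (2 * analyticConductor q s.im ^ (2 * ε))) (by linarith)
    (hdiff.diffContOnCl_ball (c := s) fun z hz ↦ ?_) fun z hz ↦ ?_
  · exact hcauchy.trans_eq (by ring)
  · have := sub_le_re_of_mem_closedBall hz
    simp only [Set.mem_ofPred_eq]
    linarith
  · have hre := sub_le_re_of_mem_closedBall (Metric.sphere_subset_closedBall hz)
    have him := abs_im_le_of_mem_closedBall (Metric.sphere_subset_closedBall hz)
    refine (hbound q χ z (by linarith)).trans ?_
    gcongr
    exact analyticConductor_rpow_le_two_mul (by linarith [abs_nonneg s.im]) (by linarith)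
      (by linarith)

/-! ### Estermann's lower bound for a residue -/

lemma sub_one_mul_le_of_hasSum {a : ℕ → ℝ} {l w B X : ℝ} (hw : 1 < w) (hw' : w ≤ 5 / 4)
    (h₀ : 1 - l ≤ a 0) (hl : ∀ n, -l ≤ a n) (ha : ∀ n, |a n| ≤ B * (2 / 3) ^ n)
    (hsum : HasSum (fun n ↦ a n * w ^ n) X) (hX : X ≤ l / (w - 1)) {M : ℕ} (hM : M ≠ 0) :
    (w - 1) * (1 - 6 * B * (5 / 6) ^ M) ≤ l * w ^ M := by
  have hterm (n : ℕ) : |a n * w ^ n| ≤ B * (5 / 6) ^ n := by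
    rw [abs_mul, abs_of_pos (by positivity : 0 < w ^ n)]
    calc |a n| * w ^ n ≤ B * (2 / 3) ^ n * (5 / 4) ^ n :=
          mul_le_mul (ha n) (by gcongr) (by positivity) ((abs_nonneg _).trans (ha n))
      _ = B * (5 / 6) ^ n := by rw [mul_assoc, ← mul_pow]; norm_num
  have htail : ∑ n ∈ range M, a n * w ^ n ≤ X + 6 * B * (5 / 6) ^ M := by
    have h := dist_le_of_le_geometric_of_tendsto (5 / 6) B (by norm_num)
      (f := fun M ↦ ∑ n ∈ range M, a n * w ^ n)
      (fun n ↦ by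
        rw [sum_range_succ, dist_comm, Real.dist_eq, add_sub_cancel_left]
        exact hterm n) hsum.tendsto_sum_nat M
    rw [Real.dist_eq] at h
    have heq : B * (5 / 6) ^ M / (1 - 5 / 6) = 6 * B * (5 / 6) ^ M := by ring
    linarith [le_of_abs_le h]
  have hhead : 1 - l * ((w ^ M - 1) / (w - 1)) ≤ ∑ n ∈ range M, a n * w ^ n := by
    obtain ⟨m, rfl⟩ := Nat.exists_eq_succ_of_ne_zero hM
    have h : ∑ n ∈ range m, -(l * w ^ (n + 1)) ≤ ∑ n ∈ range m, a (n + 1) * w ^ (n + 1) :=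
      sum_le_sum fun n _ ↦ by
        rw [← neg_mul]
        exact mul_le_mul_of_nonneg_right (hl _) (by positivity)
    rw [sum_neg_distrib] at h
    rw [← geom_sum_eq hw.ne', Nat.succ_eq_add_one, sum_range_succ', sum_range_succ', mul_add,
      mul_sum]
    simp only [pow_zero, mul_one]
    linarith
  have hw₁ : 0 < w - 1 := by linarith
  have hle : 1 - 6 * B * (5 / 6) ^ M ≤ l * w ^ M / (w - 1) := by
    have : l * w ^ M / (w - 1) = l * ((w ^ M - 1) / (w - 1)) + l / (w - 1) := by ring
    linarith
  rw [mul_comm]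
  exact (le_div_iff₀ hw₁).1 hle

lemma exists_nat_mul_pow_le_half {B w : ℝ} (hB : 1 ≤ B) (hw : 1 ≤ w) :
    ∃ M : ℕ, M ≠ 0 ∧ B * (5 / 6) ^ M ≤ 1 / 2 ∧
      w ^ M ≤ Real.exp (w - 1) * (2 * B) ^ (6 * (w - 1)) := by
  have hB₀ : 0 < 2 * B := by linarith
  have hlog : 0 < Real.log (2 * B) := Real.log_pos (by linarith)
  refine ⟨⌈6 * Real.log (2 * B)⌉₊, (Nat.ceil_pos.2 (by positivity)).ne', ?_, ?_⟩
  · have h₅ : (5 / 6 : ℝ) ≤ Real.exp (-(1 / 6)) := by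
      linarith [Real.add_one_le_exp (-(1 / 6) : ℝ)]
    calc B * (5 / 6) ^ ⌈6 * Real.log (2 * B)⌉₊
        ≤ B * Real.exp (-(1 / 6)) ^ ⌈6 * Real.log (2 * B)⌉₊ := by gcongr
      _ ≤ B * Real.exp (-Real.log (2 * B)) := by
          rw [← Real.exp_nat_mul]
          gcongr
          linarith [Nat.le_ceil (6 * Real.log (2 * B))]
      _ = 1 / 2 := by
          rw [Real.exp_neg, Real.exp_log hB₀]
          field_simp
  · calc w ^ ⌈6 * Real.log (2 * B)⌉₊ ≤ Real.exp (w - 1) ^ ⌈6 * Real.log (2 * B)⌉₊ := by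
          gcongr
          linarith [Real.add_one_le_exp (w - 1)]
      _ = Real.exp (⌈6 * Real.log (2 * B)⌉₊ * (w - 1)) := by rw [← Real.exp_nat_mul]
      _ ≤ Real.exp ((6 * Real.log (2 * B) + 1) * (w - 1)) := by
          gcongr
          exact (Nat.ceil_lt_add_one (by positivity)).le
      _ = Real.exp (w - 1) * (2 * B) ^ (6 * (w - 1)) := by
          rw [Real.rpow_def_of_pos hB₀, ← Real.exp_add]
          ring_nf

lemma sub_one_le_of_hasSum {a : ℕ → ℝ} {l w B X : ℝ} (hw : 1 < w) (hw' : w ≤ 5 / 4) (hB : 1 ≤ B)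
    (h₀ : 1 - l ≤ a 0) (hl : ∀ n, -l ≤ a n) (ha : ∀ n, |a n| ≤ B * (2 / 3) ^ n)
    (hsum : HasSum (fun n ↦ a n * w ^ n) X) (hX : X ≤ l / (w - 1)) :
    w - 1 ≤ 2 * Real.exp 1 * l * (12 * B) ^ (6 * (w - 1)) := by
  obtain ⟨M, hM, hhalf, hpow⟩ := exists_nat_mul_pow_le_half (B := 6 * B) (by linarith) hw.le
  have hmain := sub_one_mul_le_of_hasSum hw hw' h₀ hl ha hsum hX hM
  have hle : (w - 1) / 2 ≤ l * w ^ M := by nlinarith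
  have hl₀ : 0 ≤ l := le_of_mul_le_mul_right (by linarith) (by positivity : 0 < w ^ M)
  calc w - 1 ≤ 2 * (l * w ^ M) := by linarith
    _ ≤ 2 * (l * (Real.exp 1 * (2 * (6 * B)) ^ (6 * (w - 1)))) := by
        gcongr
        refine hpow.trans ?_
        gcongr
        linarith
    _ = 2 * Real.exp 1 * l * (12 * B) ^ (6 * (w - 1)) := by ring_nf

open scoped ComplexOrder in
/-- `RemovesPole P f` says that `f` is a nonnegative coefficient sequence with `f 1 = 1`, that its
Dirichlet series converges on `Re s > 1`, and that the entire function `P` equals `(s - 1)` times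
this series there; hence `P 1` is the residue of the series at its possible pole `s = 1`. -/
structure RemovesPole (P : ℂ → ℂ) (f : ℕ → ℂ) : Prop where
  differentiable : Differentiable ℂ P
  nonneg : 0 ≤ f
  apply_one : f 1 = 1
  summable : ∀ ⦃s : ℂ⦄, 1 < s.re → LSeriesSummable f s
  eq_mul_LSeries : ∀ ⦃s : ℂ⦄, 1 < s.re → P s = (s - 1) * LSeries f s

/-- The `n`-th coefficient of the expansion of `(P s - P 1) / (s - 1)` in powers of `2 - s`, for
`P` real on the real axis. -/
noncomputable def dslopeCoeff (P : ℂ → ℂ) (n : ℕ) : ℝ :=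
  ((-1) ^ n * iteratedDeriv n (dslope P 1) 2 / n.factorial).re

lemma differentiable_dslope_one {P : ℂ → ℂ} (hP : Differentiable ℂ P) :
    Differentiable ℂ (dslope P 1) :=
  differentiableOn_univ.1 ((differentiableOn_dslope univ_mem).2 hP.differentiableOn)

lemma dslope_one_of_ne (P : ℂ → ℂ) {s : ℂ} (hs : s ≠ 1) :
    dslope P 1 s = (P s - P 1) / (s - 1) := by
  rw [dslope_of_ne _ hs, slope_def_field]

lemma norm_dslope_one_le {P : ℂ → ℂ} {B : ℝ} (hB : ∀ s ∈ Metric.closedBall 2 (3 / 2), ‖P s‖ ≤ B)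
    {s : ℂ} (hs : s ∈ Metric.sphere 2 (3 / 2)) : ‖dslope P 1 s‖ ≤ 4 * B := by
  have hdist : 1 / 2 ≤ ‖s - 1‖ := by
    have h := norm_sub_le (s - 1) 1
    rw [show s - 1 - 1 = s - 2 by ring, mem_sphere_iff_norm.1 hs, norm_one] at h
    linarith
  have hs₁ : s ≠ 1 := by rintro rfl; norm_num at hdist
  have hP₁ : ‖P 1‖ ≤ B := hB 1 (by rw [mem_closedBall_iff_norm]; norm_num)
  rw [dslope_one_of_ne P hs₁, norm_div, div_le_iff₀ (by linarith)]
  calc ‖P s - P 1‖ ≤ B + B :=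
        (norm_sub_le _ _).trans (add_le_add (hB s (Metric.sphere_subset_closedBall hs)) hP₁)
    _ ≤ 4 * B * ‖s - 1‖ := by nlinarith [norm_nonneg (P 1)]

lemma abs_dslopeCoeff_le {P : ℂ → ℂ} (hP : Differentiable ℂ P) {B : ℝ}
    (hB : ∀ s ∈ Metric.closedBall 2 (3 / 2), ‖P s‖ ≤ B) (n : ℕ) :
    |dslopeCoeff P n| ≤ 4 * B * (2 / 3) ^ n := by
  have hcauchy : ‖iteratedDeriv n (dslope P 1) 2‖ ≤ n.factorial * (4 * B) / (3 / 2) ^ n :=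
    norm_iteratedDeriv_le_of_forall_mem_sphere_norm_le n (by norm_num)
      (differentiable_dslope_one hP).diffContOnCl fun s hs ↦ norm_dslope_one_le hB hs
  refine (abs_re_le_norm _).trans ?_
  rw [norm_div, norm_mul, norm_pow, norm_neg, norm_one, one_pow, one_mul, norm_natCast,
    div_le_iff₀ (by positivity)]
  refine hcauchy.trans_eq ?_
  rw [div_eq_mul_inv, ← inv_pow, inv_div]
  ring

lemma hasSum_dslopeCoeff {P : ℂ → ℂ} (hP : Differentiable ℂ P) (σ : ℝ) :
    HasSum (fun n ↦ dslopeCoeff P n * (2 - σ) ^ n) (dslope P 1 σ).re := by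
  have htaylor := hasSum_re (hasSum_taylorSeries_of_entire (differentiable_dslope_one hP) 2 σ)
  refine htaylor.congr_fun fun n ↦ ?_
  have hterm : (n.factorial : ℂ)⁻¹ • ((σ : ℂ) - 2) ^ n • iteratedDeriv n (dslope P 1) 2 =
      ((-1) ^ n * iteratedDeriv n (dslope P 1) 2 / n.factorial) * ((2 - σ) ^ n : ℝ) := by
    push_cast
    rw [show (σ : ℂ) - 2 = -1 * (2 - σ) by ring, mul_pow, smul_eq_mul, smul_eq_mul]
    ring
  rw [hterm, re_mul_ofReal, dslopeCoeff]

namespace RemovesPole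

variable {P : ℂ → ℂ} {f : ℕ → ℂ}

lemma abscissaOfAbsConv_le (h : RemovesPole P f) : LSeries.abscissaOfAbsConv f ≤ 1 :=
  LSeries.abscissaOfAbsConv_le_of_forall_lt_LSeriesSummable' fun y hy ↦
    h.summable (by simpa using (by exact_mod_cast hy : (1 : ℝ) < y))

lemma abscissaOfAbsConv_lt (h : RemovesPole P f) {x : ℝ} (hx : 1 < x) :
    LSeries.abscissaOfAbsConv f < x :=
  h.abscissaOfAbsConv_le.trans_lt (by exact_mod_cast hx)

lemma one_le_LSeries_two_re (h : RemovesPole P f) : 1 ≤ (LSeries f 2).re := by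
  have hterm (n : ℕ) : 0 ≤ (LSeries.term f 2 n).re := by
    simpa using (Complex.le_def.1 (LSeries.term_nonneg (h.nonneg n) 2)).1
  have hone : (LSeries.term f 2 1).re = 1 := by simp [h.apply_one]
  rw [← hone]
  exact le_hasSum (hasSum_re (h.summable (by simp)).hasSum) 1 fun n _ ↦ hterm n

lemma iteratedDeriv_dslope_two (h : RemovesPole P f) (n : ℕ) :
    iteratedDeriv n (dslope P 1) 2 =
      iteratedDeriv n (LSeries f) 2 - P 1 * ((-1) ^ n * n.factorial) := by
  have hdslope : dslope P 1 =ᶠ[𝓝 2] (LSeries f - fun s ↦ P 1 * (1 * s - 1)⁻¹) := by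
    have hnhds : {s : ℂ | 1 < s.re} ∈ 𝓝 2 :=
      (isOpen_lt continuous_const continuous_re).mem_nhds (by simp)
    filter_upwards [hnhds] with s hs
    have hs₁ : s ≠ 1 := by rintro rfl; simp at hs
    have hs₁' : s - 1 ≠ 0 := sub_ne_zero.2 hs₁
    rw [dslope_one_of_ne P hs₁, h.eq_mul_LSeries hs, Pi.sub_apply]
    field_simp
  have hL : AnalyticAt ℂ (LSeries f) 2 :=
    LSeries_analyticOnNhd f 2 (by simpa using h.abscissaOfAbsConv_lt one_lt_two)
  have hinv : AnalyticAt ℂ (fun s : ℂ ↦ P 1 * (1 * s - 1)⁻¹) 2 :=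
    analyticAt_const.mul (AnalyticAt.inv (by fun_prop) (by norm_num))
  rw [hdslope.iteratedDeriv_eq, iteratedDeriv_sub hL.contDiffAt hinv.contDiffAt,
    iteratedDeriv_const_mul_field, iteratedDeriv_eq_iterate (f := fun s : ℂ ↦ (1 * s - 1)⁻¹),
    iter_deriv_inv_linear_sub]
  norm_num

lemma dslopeCoeff_eq (h : RemovesPole P f) (n : ℕ) :
    dslopeCoeff P n =
      ((-1) ^ n * iteratedDeriv n (LSeries f) 2).re / n.factorial - (P 1).re := by
  have hfac : (n.factorial : ℂ) ≠ 0 := by exact_mod_cast n.factorial_ne_zero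
  have hsign : (-1 : ℂ) ^ n * (-1) ^ n = 1 := by rw [← mul_pow]; norm_num
  have heq : (-1) ^ n * iteratedDeriv n (dslope P 1) 2 / n.factorial =
      (-1) ^ n * iteratedDeriv n (LSeries f) 2 / (n.factorial : ℝ) - P 1 := by
    rw [h.iteratedDeriv_dslope_two, ofReal_natCast]
    field_simp
    linear_combination (-(P 1) * n.factorial) * hsign
  rw [dslopeCoeff, heq, sub_re, div_ofReal_re]

lemma neg_le_dslopeCoeff (h : RemovesPole P f) (n : ℕ) : -(P 1).re ≤ dslopeCoeff P n := by
  have hpos : 0 ≤ ((-1) ^ n * iteratedDeriv n (LSeries f) 2).re := by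
    simpa using (Complex.le_def.1
      (LSeries.iteratedDeriv_alternating h.nonneg (h.abscissaOfAbsConv_lt one_lt_two) n)).1
  rw [h.dslopeCoeff_eq, neg_eq_zero_sub]
  gcongr
  positivity

lemma one_sub_le_dslopeCoeff_zero (h : RemovesPole P f) : 1 - (P 1).re ≤ dslopeCoeff P 0 := by
  rw [h.dslopeCoeff_eq]
  simpa using h.one_le_LSeries_two_re

/-- The slope `(P σ - P 1) / (σ - 1)` of `P` expands at `2` with coefficients `≥ -P 1`, the zeroth
one being `≥ 1 - P 1`; if `P σ ≥ 0` then its value at `σ` is at most `P 1 / (1 - σ)`. -/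
theorem one_sub_le (h : RemovesPole P f) {B σ : ℝ} (hB : 1 ≤ B)
    (hPB : ∀ s ∈ Metric.closedBall (2 : ℂ) (3 / 2), ‖P s‖ ≤ B) (hσ : 3 / 4 ≤ σ) (hσ₁ : σ < 1)
    (hPσ : 0 ≤ (P σ).re) :
    1 - σ ≤ 2 * Real.exp 1 * (P 1).re * (48 * B) ^ (6 * (1 - σ)) := by
  have hvalue : (dslope P 1 σ).re ≤ (P 1).re / (1 - σ) := by
    have hne : (σ : ℂ) ≠ 1 := by exact_mod_cast hσ₁.ne
    have heq : (P σ - P 1) / (σ - 1) = (P 1 - P σ) / (1 - σ : ℝ) := by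
      rw [← neg_sub (P 1), ← neg_sub (1 : ℂ), neg_div_neg_eq]
      push_cast
      rfl
    rw [dslope_one_of_ne P hne, heq, div_ofReal_re, sub_re]
    gcongr
    linarith
  have hmain := sub_one_le_of_hasSum (w := 2 - σ) (by linarith) (by linarith)
    (by linarith : 1 ≤ 4 * B) h.one_sub_le_dslopeCoeff_zero h.neg_le_dslopeCoeff
    (abs_dslopeCoeff_le h.differentiable hPB) (hasSum_dslopeCoeff h.differentiable σ)
    (hvalue.trans_eq (by ring_nf))
  rwa [show 2 - σ - 1 = 1 - σ by ring, ← mul_assoc, show (12 : ℝ) * 4 = 48 by norm_num] at hmain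

lemma one_sub_le_mul_rpow (h : RemovesPole P f) {K y σ : ℝ} (hK : 1 ≤ K) (hy : 1 ≤ y)
    (hPK : ∀ s ∈ Metric.closedBall (2 : ℂ) (3 / 2), ‖P s‖ ≤ K * y) (hσ : 3 / 4 ≤ σ) (hσ₁ : σ < 1)
    (hPσ : 0 ≤ (P σ).re) :
    1 - σ ≤ 2 * Real.exp 1 * (48 * K) ^ 2 * ‖P 1‖ * y ^ (6 * (1 - σ)) :=
  calc 1 - σ ≤ 2 * Real.exp 1 * (P 1).re * (48 * (K * y)) ^ (6 * (1 - σ)) :=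
        h.one_sub_le (one_le_mul_of_one_le_of_one_le hK hy) hPK hσ hσ₁ hPσ
    _ = 2 * Real.exp 1 * (P 1).re * ((48 * K) ^ (6 * (1 - σ)) * y ^ (6 * (1 - σ))) := by
        rw [← mul_assoc 48, Real.mul_rpow (by positivity) (by positivity)]
    _ ≤ 2 * Real.exp 1 * ‖P 1‖ * ((48 * K) ^ (2 : ℝ) * y ^ (6 * (1 - σ))) := by
        gcongr
        · exact re_le_norm _
        · linarith
        · linarith
    _ = 2 * Real.exp 1 * (48 * K) ^ 2 * ‖P 1‖ * y ^ (6 * (1 - σ)) := by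
        rw [Real.rpow_two]
        ring

end RemovesPole

/-! ### Siegel's theorem -/

/-- The arithmetic function `n ↦ f n log n`. -/
noncomputable def mulLog (f : ArithmeticFunction ℂ) : ArithmeticFunction ℂ :=
  ⟨fun n ↦ f n * Real.log n, by simp⟩

lemma mulLog_apply (f : ArithmeticFunction ℂ) (n : ℕ) : mulLog f n = f n * Real.log n := rfl

lemma mulLog_mul (f g : ArithmeticFunction ℂ) : mulLog (f * g) = mulLog f * g + f * mulLog g := by
  ext n
  simp only [mulLog_apply, ArithmeticFunction.add_apply, ArithmeticFunction.mul_apply, sum_mul,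
    ← sum_add_distrib]
  refine sum_congr rfl fun ⟨d, e⟩ hde ↦ ?_
  obtain ⟨rfl, hn⟩ := Nat.mem_divisorsAntidiagonal.1 hde
  obtain ⟨hd, he⟩ := mul_ne_zero_iff.1 hn
  rw [Nat.cast_mul, Real.log_mul (by exact_mod_cast hd) (by exact_mod_cast he)]
  push_cast
  ring

lemma mulLog_mul_of_eq_mul {f g u v : ArithmeticFunction ℂ} (hf : mulLog f = f * u)
    (hg : mulLog g = g * v) : mulLog (f * g) = f * g * (u + v) := by
  rw [mulLog_mul, hf, hg]
  ring

open scoped ComplexOrder in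
lemma nonneg_of_mulLog_eq_mul {f u : ArithmeticFunction ℂ} (h : mulLog f = f * u) (h₁ : f 1 = 1)
    (hu : ∀ n, 0 ≤ u n) (hu₁ : u 1 = 0) (n : ℕ) : 0 ≤ f n := by
  induction n using Nat.strong_induction_on with
  | _ n ih =>
  rcases lt_trichotomy n 1 with hn | rfl | hn
  · rw [Nat.lt_one_iff.1 hn, ArithmeticFunction.map_zero]
  · rw [h₁]; exact zero_le_one
  have hlog : 0 < Real.log n := Real.log_pos (by exact_mod_cast hn)
  have hsum : 0 ≤ ∑ x ∈ n.divisorsAntidiagonal, f x.1 * u x.2 := by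
    refine sum_nonneg fun ⟨d, e⟩ hde ↦ ?_
    obtain ⟨rfl, hn₀⟩ := Nat.mem_divisorsAntidiagonal.1 hde
    obtain ⟨hd, he⟩ := mul_ne_zero_iff.1 hn₀
    rcases eq_or_ne e 1 with rfl | he₁
    · rw [hu₁, mul_zero]
    · exact mul_nonneg (ih d (lt_mul_of_one_lt_right (by omega) (by omega))) (hu e)
  have hfn : f n = (∑ x ∈ n.divisorsAntidiagonal, f x.1 * u x.2) * ((Real.log n)⁻¹ : ℝ) := by
    rw [← ArithmeticFunction.mul_apply, ← h, mulLog_apply, mul_assoc, ← ofReal_mul,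
      mul_inv_cancel₀ hlog.ne', ofReal_one, mul_one]
  rw [hfn]
  exact mul_nonneg hsum (by exact_mod_cast (inv_pos.2 hlog).le)

section

variable {q : ℕ}

/-- The Dirichlet character `χ` as an arithmetic function. -/
noncomputable def charFun (χ : DirichletCharacter ℂ q) : ArithmeticFunction ℂ :=
  toArithmeticFunction (χ ·)

/-- The twist `χ Λ` of the von Mangoldt function as an arithmetic function. -/
noncomputable def twistedLambda (χ : DirichletCharacter ℂ q) : ArithmeticFunction ℂ :=
  ⟨fun n ↦ χ n * ArithmeticFunction.vonMangoldt n, by simp⟩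

lemma charFun_apply (χ : DirichletCharacter ℂ q) {n : ℕ} (hn : n ≠ 0) : charFun χ n = χ n :=
  (χ.apply_eq_toArithmeticFunction_apply hn).symm

lemma charFun_one (χ : DirichletCharacter ℂ q) : charFun χ 1 = 1 := by
  simp [charFun_apply χ one_ne_zero]

lemma twistedLambda_apply (χ : DirichletCharacter ℂ q) (n : ℕ) :
    twistedLambda χ n = χ n * ArithmeticFunction.vonMangoldt n := rfl

lemma twistedLambda_one (χ : DirichletCharacter ℂ q) : twistedLambda χ 1 = 0 := by
  simp [twistedLambda_apply]

lemma mulLog_charFun (χ : DirichletCharacter ℂ q) :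
    mulLog (charFun χ) = charFun χ * twistedLambda χ := by
  have hΛ : toArithmeticFunction ((fun n ↦ χ n : ℕ → ℂ) * fun n ↦
      (ArithmeticFunction.vonMangoldt n : ℂ)) = twistedLambda χ := by
    ext n
    rcases eq_or_ne n 0 with rfl | hn
    · simp
    · simp [toArithmeticFunction, hn, twistedLambda_apply]
  ext n
  rcases eq_or_ne n 0 with rfl | hn
  · simp
  have h := congrFun (DirichletCharacter.convolution_twist_vonMangoldt χ) n
  rw [LSeries.convolution, hΛ] at h
  rw [mulLog_apply, charFun_apply χ hn, mul_comm (charFun χ), charFun, h]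
  simp

lemma LSeriesSummable_charFun (χ : DirichletCharacter ℂ q) {s : ℂ} (hs : 1 < s.re) :
    LSeriesSummable (charFun χ) s :=
  (LSeriesSummable_congr s fun hn ↦ charFun_apply χ hn).2
    (DirichletCharacter.LSeriesSummable_of_one_lt_re χ hs)

lemma LSeries_charFun [NeZero q] (χ : DirichletCharacter ℂ q) {s : ℂ} (hs : 1 < s.re) :
    LSeries (charFun χ) s = χ.LFunction s :=
  (LSeries_congr (fun hn ↦ charFun_apply χ hn) s).trans
    (DirichletCharacter.LFunction_eq_LSeries χ hs).symm

open scoped ComplexOrder in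
lemma one_add_apply_nonneg {χ : DirichletCharacter ℂ q} (hχ : χ ^ 2 = 1) (n : ZMod q) :
    0 ≤ 1 + χ n := by
  rcases MulChar.isQuadratic_iff_sq_eq_one.mpr hχ n with h | h | h
  · simp [h]
  · rw [h]; exact add_nonneg zero_le_one zero_le_one
  · simp [h]

end

lemma LFunctionTrivChar₁_modOne_one : DirichletCharacter.LFunctionTrivChar₁ 1 1 = 1 := by
  simp [DirichletCharacter.LFunctionTrivChar₁]

lemma LFunctionTrivChar₁_modOne {s : ℂ} (hs : s ≠ 1) :
    DirichletCharacter.LFunctionTrivChar₁ 1 s =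
      (s - 1) * (1 : DirichletCharacter ℂ 1).LFunction s := by
  rw [DirichletCharacter.LFunctionTrivChar₁, Function.update_of_ne hs]

section

variable {q r : ℕ}

/-- The product of characters modulo `q` and `r`, a character modulo `q r`. -/
noncomputable def prodChar (χ : DirichletCharacter ℂ q) (ψ : DirichletCharacter ℂ r) :
    DirichletCharacter ℂ (q * r) :=
  DirichletCharacter.changeLevel (dvd_mul_right q r) χ *
    DirichletCharacter.changeLevel (dvd_mul_left r q) ψ

lemma prodChar_apply (χ : DirichletCharacter ℂ q) (ψ : DirichletCharacter ℂ r) (n : ℕ) :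
    prodChar χ ψ n = χ n * ψ n := by
  by_cases h : IsUnit (n : ZMod (q * r))
  · have hχ := DirichletCharacter.changeLevel_eq_cast_of_dvd χ (dvd_mul_right q r) h.unit
    have hψ := DirichletCharacter.changeLevel_eq_cast_of_dvd ψ (dvd_mul_left r q) h.unit
    rw [IsUnit.unit_spec] at hχ hψ
    rw [prodChar, MulChar.mul_apply, hχ, hψ, ZMod.cast_natCast (dvd_mul_right q r),
      ZMod.cast_natCast (dvd_mul_left r q)]
  · rw [MulChar.map_nonunit _ h]
    rw [ZMod.isUnit_iff_coprime, Nat.coprime_mul_iff_right, not_and_or] at h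
    rcases h with h | h
    · rw [MulChar.map_nonunit χ (by rwa [ZMod.isUnit_iff_coprime]), zero_mul]
    · rw [MulChar.map_nonunit ψ (by rwa [ZMod.isUnit_iff_coprime]), mul_zero]

/-- The coefficients of `ζ(s) L(s, χ)`. -/
noncomputable def twoFold (χ : DirichletCharacter ℂ q) : ArithmeticFunction ℂ :=
  charFun (1 : DirichletCharacter ℂ 1) * charFun χ

/-- The coefficients of `ζ(s) L(s, χ) L(s, ψ) L(s, χψ)`. -/
noncomputable def fourFold (χ : DirichletCharacter ℂ q) (ψ : DirichletCharacter ℂ r) :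
    ArithmeticFunction ℂ :=
  twoFold χ * (charFun ψ * charFun (prodChar χ ψ))

lemma mulLog_twoFold (χ : DirichletCharacter ℂ q) :
    mulLog (twoFold χ) =
      twoFold χ * (twistedLambda (1 : DirichletCharacter ℂ 1) + twistedLambda χ) :=
  mulLog_mul_of_eq_mul (mulLog_charFun _) (mulLog_charFun _)

lemma one_apply_modOne (n : ZMod 1) : (1 : DirichletCharacter ℂ 1) n = 1 :=
  MulChar.one_apply (isUnit_of_subsingleton n)

open scoped ComplexOrder in
lemma twoFold_nonneg {χ : DirichletCharacter ℂ q} (hχ : χ ^ 2 = 1) (n : ℕ) : 0 ≤ twoFold χ n := by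
  refine nonneg_of_mulLog_eq_mul (mulLog_twoFold χ) (by simp [twoFold, charFun_one]) (fun n ↦ ?_)
    (by simp [twistedLambda_one]) n
  rw [ArithmeticFunction.add_apply, twistedLambda_apply, twistedLambda_apply, one_apply_modOne,
    ← add_mul]
  exact mul_nonneg (one_add_apply_nonneg hχ _)
    (by exact_mod_cast ArithmeticFunction.vonMangoldt_nonneg)

open scoped ComplexOrder in
lemma fourFold_nonneg {χ : DirichletCharacter ℂ q} {ψ : DirichletCharacter ℂ r} (hχ : χ ^ 2 = 1)
    (hψ : ψ ^ 2 = 1) (n : ℕ) : 0 ≤ fourFold χ ψ n := by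
  refine nonneg_of_mulLog_eq_mul (mulLog_mul_of_eq_mul (mulLog_twoFold χ)
    (mulLog_mul_of_eq_mul (mulLog_charFun ψ) (mulLog_charFun (prodChar χ ψ))))
    (by simp [twoFold, charFun_one]) (fun n ↦ ?_) (by simp [twistedLambda_one]) n
  have hfactor : (1 + χ n) * (1 + ψ n) * ArithmeticFunction.vonMangoldt n =
      (twistedLambda (1 : DirichletCharacter ℂ 1) + twistedLambda χ +
        (twistedLambda ψ + twistedLambda (prodChar χ ψ))) n := by
    simp only [ArithmeticFunction.add_apply, twistedLambda_apply, one_apply_modOne, prodChar_apply]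
    ring
  rw [← hfactor]
  exact mul_nonneg (mul_nonneg (one_add_apply_nonneg hχ _) (one_add_apply_nonneg hψ _))
    (by exact_mod_cast ArithmeticFunction.vonMangoldt_nonneg)

lemma LSeriesSummable_twoFold (χ : DirichletCharacter ℂ q) {s : ℂ} (hs : 1 < s.re) :
    LSeriesSummable (twoFold χ) s :=
  ArithmeticFunction.LSeriesSummable_mul (LSeriesSummable_charFun _ hs)
    (LSeriesSummable_charFun _ hs)

variable [NeZero q] [NeZero r] {χ : DirichletCharacter ℂ q} {ψ : DirichletCharacter ℂ r}

lemma sub_one_mul_LSeries_twoFold (χ : DirichletCharacter ℂ q) {s : ℂ} (hs : 1 < s.re) :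
    DirichletCharacter.LFunctionTrivChar₁ 1 s * χ.LFunction s =
      (s - 1) * LSeries (twoFold χ) s := by
  have hs₁ : s ≠ 1 := by rintro rfl; simp at hs
  rw [LFunctionTrivChar₁_modOne hs₁, twoFold, ArithmeticFunction.LSeries_mul'
    (LSeriesSummable_charFun _ hs) (LSeriesSummable_charFun _ hs), LSeries_charFun _ hs,
    LSeries_charFun _ hs, mul_assoc]

lemma removesPole_twoFold (hχ : χ ≠ 1) (hχ₂ : χ ^ 2 = 1) :
    RemovesPole (fun s ↦ DirichletCharacter.LFunctionTrivChar₁ 1 s * χ.LFunction s)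
      (twoFold χ) where
  differentiable := (DirichletCharacter.differentiable_LFunctionTrivChar₁ 1).mul
    (DirichletCharacter.differentiable_LFunction hχ)
  nonneg := twoFold_nonneg hχ₂
  apply_one := by simp [twoFold, charFun_one]
  summable _ hs := LSeriesSummable_twoFold χ hs
  eq_mul_LSeries _ hs := sub_one_mul_LSeries_twoFold χ hs

lemma removesPole_fourFold (hχ : χ ≠ 1) (hχ₂ : χ ^ 2 = 1) (hψ : ψ ≠ 1) (hψ₂ : ψ ^ 2 = 1)
    (hχψ : prodChar χ ψ ≠ 1) :
    RemovesPole (fun s ↦ DirichletCharacter.LFunctionTrivChar₁ 1 s * χ.LFunction s *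
      (ψ.LFunction s * (prodChar χ ψ).LFunction s)) (fourFold χ ψ) where
  differentiable := (removesPole_twoFold hχ hχ₂).differentiable.mul
    ((DirichletCharacter.differentiable_LFunction hψ).mul
      (DirichletCharacter.differentiable_LFunction hχψ))
  nonneg := fourFold_nonneg hχ₂ hψ₂
  apply_one := by simp [fourFold, twoFold, charFun_one]
  summable _ hs := ArithmeticFunction.LSeriesSummable_mul (LSeriesSummable_twoFold χ hs)
    (ArithmeticFunction.LSeriesSummable_mul (LSeriesSummable_charFun _ hs)
      (LSeriesSummable_charFun _ hs))
  eq_mul_LSeries s hs := by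
    have hψs := LSeriesSummable_charFun ψ hs
    have hχψs := LSeriesSummable_charFun (prodChar χ ψ) hs
    rw [sub_one_mul_LSeries_twoFold χ hs, fourFold,
      ArithmeticFunction.LSeries_mul' (LSeriesSummable_twoFold χ hs)
        (ArithmeticFunction.LSeriesSummable_mul hψs hχψs),
      ArithmeticFunction.LSeries_mul' hψs hχψs, LSeries_charFun _ hs, LSeries_charFun _ hs,
      mul_assoc]

end

namespace RemovesPole

variable {P : ℂ → ℂ} {f : ℕ → ℂ}

open scoped ComplexConjugate

lemma conj_LSeries {f : ℕ → ℂ} (hf : ∀ n, conj (f n) = f n) (s : ℂ) :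
    conj (LSeries f s) = LSeries f (conj s) := by
  rw [LSeries, LSeries, conj_tsum]
  refine tsum_congr fun n ↦ ?_
  rw [LSeries.term_def, LSeries.term_def]
  split
  · exact map_zero _
  · rw [map_div₀, hf, cpow_conj _ _ (by rw [natCast_arg]; exact Real.pi_pos.ne), conj_natCast]

lemma conj_apply (h : RemovesPole P f) {s : ℂ} (hs : 0 < s.re) : conj (P (conj s)) = P s := by
  refine eqOn_re_pos_of_eqOn_one_lt_re (f := conj ∘ P ∘ conj) (g := P)
    (fun z _ ↦ ?_) h.differentiable.differentiableOn (fun z hz ↦ ?_) hs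
  · exact (differentiableAt_conj_conj_iff.2 (h.differentiable _)).differentiableWithinAt
  · have hf (n : ℕ) : conj (f n) = f n := conj_eq_iff_im.2 (le_def.1 (h.nonneg n)).2.symm
    have hz' : 1 < (conj z).re := by simpa using hz
    simp only [Function.comp_apply]
    rw [h.eq_mul_LSeries hz', h.eq_mul_LSeries hz, map_mul, conj_LSeries hf, conj_conj, map_sub,
      conj_conj, map_one]

lemma im_apply_ofReal (h : RemovesPole P f) {σ : ℝ} (hσ : 0 < σ) : (P σ).im = 0 := by
  have hconj := h.conj_apply (s := σ) (by simpa using hσ)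
  rw [conj_ofReal] at hconj
  exact conj_eq_iff_im.1 hconj

open scoped ComplexOrder in
lemma re_apply_one_nonneg (h : RemovesPole P f) : 0 ≤ (P 1).re := by
  have hcont : Continuous fun x : ℝ ↦ (P x).re :=
    continuous_re.comp (h.differentiable.continuous.comp continuous_ofReal)
  have hlim : Tendsto (fun x : ℝ ↦ (P x).re) (𝓝[>] 1) (𝓝 (P 1).re) := by
    simpa using (hcont.tendsto 1).mono_left nhdsWithin_le_nhds
  refine ge_of_tendsto hlim ?_
  filter_upwards [self_mem_nhdsWithin] with x (hx : 1 < x)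
  have hpos := (lt_def.1 (LSeries.positive h.nonneg (by rw [h.apply_one]; exact zero_lt_one)
    (h.abscissaOfAbsConv_lt hx))).1
  rw [h.eq_mul_LSeries (by simpa using hx), ← ofReal_one, ← ofReal_sub, re_ofReal_mul]
  exact mul_nonneg (by linarith) hpos.le

lemma exists_zero (h : RemovesPole P f) {σ : ℝ} (hσ : 0 < σ) (hσ₁ : σ < 1) (hneg : (P σ).re < 0)
    (hP₁ : P 1 ≠ 0) : ∃ β : ℝ, σ < β ∧ β < 1 ∧ P β = 0 := by
  have hcont : Continuous fun x : ℝ ↦ (P x).re :=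
    continuous_re.comp (h.differentiable.continuous.comp continuous_ofReal)
  have hpos : 0 < (P (1 : ℝ)).re := by
    rw [ofReal_one]
    refine h.re_apply_one_nonneg.lt_of_ne' fun hre ↦ hP₁ (Complex.ext hre ?_)
    simpa using h.im_apply_ofReal one_pos
  obtain ⟨β, ⟨hσβ, hβ₁⟩, hβ⟩ := intermediate_value_Ioo hσ₁.le hcont.continuousOn ⟨hneg, hpos⟩
  exact ⟨β, hσβ, hβ₁, Complex.ext hβ (h.im_apply_ofReal (hσ.trans hσβ))⟩

end RemovesPole

lemma exists_norm_le_on_closedBall :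
    ∃ K : ℝ, 1 ≤ K ∧ (∀ s ∈ Metric.closedBall (2 : ℂ) (3 / 2),
      ‖DirichletCharacter.LFunctionTrivChar₁ 1 s‖ ≤ K) ∧
      ∀ (q : ℕ) [NeZero q] (χ : DirichletCharacter ℂ q), χ ≠ 1 →
        ∀ s ∈ Metric.closedBall (2 : ℂ) (3 / 2), ‖χ.LFunction s‖ ≤ K * q := by
  obtain ⟨C, hC, hbound⟩ := exists_norm_normalizedL_le one_half_pos le_rfl
  obtain ⟨D, hD⟩ := (isCompact_closedBall (2 : ℂ) (3 / 2)).exists_bound_of_continuousOn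
    (DirichletCharacter.differentiable_LFunctionTrivChar₁ 1).continuous.continuousOn
  refine ⟨max D (C * 4), le_max_of_le_right (by linarith),
    fun s hs ↦ (hD s hs).trans (le_max_left _ _), fun q _ χ hχ s hs ↦ ?_⟩
  have hs₂ : ‖s - 2‖ ≤ 3 / 2 := mem_closedBall_iff_norm.1 hs
  have hre := abs_le.1 ((abs_re_le_norm (s - 2)).trans hs₂)
  have him := (abs_im_le_norm (s - 2)).trans hs₂
  simp only [sub_re, re_ofNat, sub_im, im_ofNat, sub_zero] at hre him
  calc ‖χ.LFunction s‖ ≤ C * analyticConductor q s.im ^ (2 * (1 / 2 : ℝ)) := by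
        rw [← normalizedL_of_ne_one hχ]
        exact hbound q χ s (by linarith [hre.1])
    _ = C * (q * (|s.im| + 2)) := by norm_num [analyticConductor]
    _ ≤ C * (q * 4) := by gcongr; linarith
    _ ≤ max D (C * 4) * q := by
        rw [mul_left_comm, mul_comm]
        gcongr
        exact le_max_right _ _

lemma exists_one_sub_le_norm_LFunction_one :
    ∃ K : ℝ, 1 ≤ K ∧ ∀ (q : ℕ) [NeZero q] (χ : DirichletCharacter ℂ q), χ ≠ 1 → χ ^ 2 = 1 →
      ∀ σ : ℝ, 3 / 4 ≤ σ → σ < 1 →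
        0 ≤ (DirichletCharacter.LFunctionTrivChar₁ 1 σ * χ.LFunction σ).re →
        1 - σ ≤ K * ‖χ.LFunction 1‖ * (q : ℝ) ^ (6 * (1 - σ)) := by
  obtain ⟨K, hK, hZ, hL⟩ := exists_norm_le_on_closedBall
  have hexp : 1 ≤ Real.exp 1 := Real.one_le_exp zero_le_one
  have hK₂ : 1 ≤ K * K := by nlinarith
  refine ⟨2 * Real.exp 1 * (48 * (K * K)) ^ 2, by nlinarith, fun q _ χ hχ hχ₂ σ hσ hσ₁ hre ↦ ?_⟩
  have hmain := (removesPole_twoFold hχ hχ₂).one_sub_le_mul_rpow hK₂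
    (by exact_mod_cast NeZero.one_le : (1 : ℝ) ≤ q)
    (fun s hs ↦ by
      rw [norm_mul, mul_assoc]
      exact mul_le_mul (hZ s hs) (hL q χ hχ s hs) (norm_nonneg _) (by linarith)) hσ hσ₁ hre
  rwa [LFunctionTrivChar₁_modOne_one, one_mul] at hmain

lemma exists_one_sub_le_norm_LFunction_one_mul :
    ∃ K : ℝ, 1 ≤ K ∧ ∀ (q r : ℕ) [NeZero q] [NeZero r] (χ : DirichletCharacter ℂ q)
      (ψ : DirichletCharacter ℂ r), χ ≠ 1 → χ ^ 2 = 1 → ψ ≠ 1 → ψ ^ 2 = 1 → prodChar χ ψ ≠ 1 →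
      ∀ σ : ℝ, 3 / 4 ≤ σ → σ < 1 →
        DirichletCharacter.LFunctionTrivChar₁ 1 σ * χ.LFunction σ = 0 →
        1 - σ ≤ K * (‖χ.LFunction 1‖ * (‖ψ.LFunction 1‖ * ‖(prodChar χ ψ).LFunction 1‖)) *
          ((q * r : ℝ) ^ 2) ^ (6 * (1 - σ)) := by
  obtain ⟨K, hK, hZ, hL⟩ := exists_norm_le_on_closedBall
  have hexp : 1 ≤ Real.exp 1 := Real.one_le_exp zero_le_one
  have hK₄ : 1 ≤ K ^ 4 := one_le_pow₀ hK
  refine ⟨2 * Real.exp 1 * (48 * K ^ 4) ^ 2, by nlinarith,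
    fun q r _ _ χ ψ hχ hχ₂ hψ hψ₂ hχψ σ hσ hσ₁ hzero ↦ ?_⟩
  have hq : (1 : ℝ) ≤ q := by exact_mod_cast NeZero.one_le
  have hr : (1 : ℝ) ≤ r := by exact_mod_cast NeZero.one_le
  have hmain := (removesPole_fourFold hχ hχ₂ hψ hψ₂ hχψ).one_sub_le_mul_rpow hK₄
    (one_le_pow₀ (one_le_mul_of_one_le_of_one_le hq hr) : (1 : ℝ) ≤ (q * r) ^ 2)
    (fun s hs ↦ by
      rw [norm_mul, norm_mul, norm_mul]
      calc ‖DirichletCharacter.LFunctionTrivChar₁ 1 s‖ * ‖χ.LFunction s‖ *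
            (‖ψ.LFunction s‖ * ‖(prodChar χ ψ).LFunction s‖)
          ≤ K * (K * q) * (K * r * (K * (q * r : ℕ))) := by
            gcongr
            exacts [hZ s hs, hL q χ hχ s hs, hL r ψ hψ s hs, hL _ _ hχψ s hs]
        _ = K ^ 4 * (q * r) ^ 2 := by push_cast; ring) hσ hσ₁ (by rw [hzero, zero_mul, zero_re])
  rwa [LFunctionTrivChar₁_modOne_one, one_mul, norm_mul, norm_mul] at hmain

section

variable {q r : ℕ}

lemma prod_one_sub_apply_mul_cpow_ne_zero (χ : DirichletCharacter ℂ q) (N : ℕ) {s : ℂ}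
    (hs : 0 < s.re) : ∏ p ∈ N.primeFactors, (1 - χ p * (p : ℂ) ^ (-s)) ≠ 0 := by
  refine prod_ne_zero_iff.2 fun p hp hzero ↦ ?_
  have hp := Nat.prime_of_mem_primeFactors hp
  have hlt : ‖χ p * (p : ℂ) ^ (-s)‖ < 1 := by
    rw [norm_mul, norm_natCast_cpow_of_pos hp.pos]
    exact mul_lt_one_of_nonneg_of_lt_one_right (χ.norm_le_one _) (by positivity)
      (Real.rpow_lt_one_of_one_lt_of_neg (by exact_mod_cast hp.one_lt) (by simpa using hs))
  rw [← sub_eq_zero.1 hzero, norm_one] at hlt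
  exact hlt.false

lemma changeLevel_eq_of_prodChar_eq_one {χ : DirichletCharacter ℂ q} {ψ : DirichletCharacter ℂ r}
    (hχ₂ : χ ^ 2 = 1) (h : prodChar χ ψ = 1) :
    DirichletCharacter.changeLevel (dvd_mul_right q r) χ =
      DirichletCharacter.changeLevel (dvd_mul_left r q) ψ := by
  have hsq : DirichletCharacter.changeLevel (dvd_mul_right q r) χ *
      DirichletCharacter.changeLevel (dvd_mul_right q r) χ = 1 := by
    rw [← map_mul, ← sq, hχ₂, map_one]
  exact mul_left_cancel (hsq.trans h.symm)

variable [NeZero q] [NeZero r] in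
lemma LFunction_eq_zero_of_prodChar_eq_one {χ : DirichletCharacter ℂ q}
    {ψ : DirichletCharacter ℂ r} (hχ : χ ≠ 1) (hχ₂ : χ ^ 2 = 1) (hψ : ψ ≠ 1)
    (h : prodChar χ ψ = 1) {s : ℂ} (hs : 0 < s.re) (hzero : χ.LFunction s = 0) :
    ψ.LFunction s = 0 := by
  have hLχ := DirichletCharacter.LFunction_changeLevel (dvd_mul_right q r) χ (s := s) (.inl hχ)
  have hLψ := DirichletCharacter.LFunction_changeLevel (dvd_mul_left r q) ψ (s := s) (.inl hψ)
  rw [changeLevel_eq_of_prodChar_eq_one hχ₂ h, hLψ, hzero, zero_mul] at hLχ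
  exact (mul_eq_zero.1 hLχ).resolve_right (prod_one_sub_apply_mul_cpow_ne_zero ψ _ hs)

end

lemma mul_rpow_neg_le_of_le_mul_rpow {c K L y e ε : ℝ} (hy : 1 ≤ y) (hK : 0 < K) (hL : 0 ≤ L)
    (he : e ≤ ε) (h : c ≤ K * L * y ^ e) : c / K * y ^ (-ε) ≤ L := by
  have hy₀ : 0 < y := by linarith
  rw [Real.rpow_neg hy₀.le, ← div_eq_mul_inv, div_div, div_le_iff₀ (by positivity)]
  calc c ≤ K * L * y ^ e := h
    _ ≤ K * L * y ^ ε := by gcongr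
    _ = L * (K * y ^ ε) := by ring

/-- Given one real zero `β` of `ζ(s) L(s, χ)` close to `1`, every other quadratic character `ψ`
satisfies a lower bound for `L(1, ψ)`: apply Estermann's inequality at `β` to the fourfold product
of `χ` and `ψ`. -/
lemma exists_le_norm_LFunction_one_of_zero {ε δ : ℝ} (hδ : 0 < δ) (hδ₄ : δ ≤ 1 / 4)
    (hδε : 14 * δ ≤ ε) {q₁ : ℕ} [NeZero q₁] {χ : DirichletCharacter ℂ q₁} (hχ : χ ≠ 1)
    (hχ₂ : χ ^ 2 = 1) {β : ℝ} (hδβ : 1 - δ < β) (hβ : β < 1)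
    (hzero : DirichletCharacter.LFunctionTrivChar₁ 1 β * χ.LFunction β = 0) :
    ∃ c : ℝ, 0 < c ∧ ∀ (q : ℕ) [NeZero q] (ψ : DirichletCharacter ℂ q), ψ ^ 2 = 1 → ψ ≠ 1 →
      prodChar χ ψ ≠ 1 → c * (q : ℝ) ^ (-ε) ≤ ‖ψ.LFunction 1‖ := by
  obtain ⟨K, hK, hfour⟩ := exists_one_sub_le_norm_LFunction_one_mul
  obtain ⟨C, hC, hbound⟩ := exists_norm_normalizedL_le hδ (by linarith)
  have hq₁ : (1 : ℝ) ≤ q₁ := by exact_mod_cast NeZero.one_le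
  have hL₁ : 0 < ‖χ.LFunction 1‖ :=
    norm_pos_iff.2 (DirichletCharacter.LFunction_apply_one_ne_zero hχ)
  set M : ℝ := K * ‖χ.LFunction 1‖ * C * 2 ^ (2 * δ) * (q₁ : ℝ) ^ (14 * δ) with hM
  have hM₀ : 0 < M := by positivity
  refine ⟨(1 - β) / M, div_pos (by linarith) hM₀, fun q _ ψ hψ₂ hψ hχψ ↦ ?_⟩
  have hq : (1 : ℝ) ≤ q := by exact_mod_cast NeZero.one_le
  have hq₁q : 1 ≤ (q₁ * q : ℝ) := one_le_mul_of_one_le_of_one_le hq₁ hq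
  have hprod : ‖(prodChar χ ψ).LFunction 1‖ ≤ C * (2 ^ (2 * δ) * (q₁ * q : ℝ) ^ (2 * δ)) := by
    have h := hbound (q₁ * q) (prodChar χ ψ) 1 (by rw [one_re]; linarith)
    have hcond : analyticConductor (q₁ * q) (1 : ℂ).im = 2 * (q₁ * q) := by
      rw [analyticConductor, one_im, abs_zero, zero_add, Nat.cast_mul, mul_comm]
    rwa [normalizedL_of_ne_one hχψ, hcond, Real.mul_rpow zero_le_two (by positivity)] at h
  have hpow : ((q₁ * q : ℝ) ^ 2) ^ (6 * (1 - β)) ≤ (q₁ * q : ℝ) ^ (12 * δ) := by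
    rw [← Real.rpow_two, ← Real.rpow_mul (by linarith)]
    exact Real.rpow_le_rpow_of_exponent_le hq₁q (by linarith)
  refine mul_rpow_neg_le_of_le_mul_rpow hq hM₀ (norm_nonneg _) hδε ?_
  calc 1 - β ≤ _ := hfour q₁ q χ ψ hχ hχ₂ hψ hψ₂ hχψ β (by linarith) hβ hzero
    _ ≤ K * (‖χ.LFunction 1‖ * (‖ψ.LFunction 1‖ *
          (C * (2 ^ (2 * δ) * (q₁ * q : ℝ) ^ (2 * δ))))) * (q₁ * q : ℝ) ^ (12 * δ) := by gcongr
    _ = K * ‖χ.LFunction 1‖ * C * 2 ^ (2 * δ) * ‖ψ.LFunction 1‖ * (q₁ * q : ℝ) ^ (14 * δ) := by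
        rw [show 14 * δ = 2 * δ + 12 * δ by ring, Real.rpow_add (by linarith)]
        ring
    _ = M * ‖ψ.LFunction 1‖ * (q : ℝ) ^ (14 * δ) := by
        rw [hM, Real.mul_rpow (by linarith) (by linarith)]
        ring

/-- **Siegel's theorem**, with an ineffective constant: it depends on whether some quadratic
character has a real zero close to `1`. -/
theorem exists_mul_rpow_neg_le_norm_LFunction_one {ε : ℝ} (hε : 0 < ε) :
    ∃ c : ℝ, 0 < c ∧ ∀ (q : ℕ) [NeZero q] (χ : DirichletCharacter ℂ q), χ ^ 2 = 1 → χ ≠ 1 →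
      c * (q : ℝ) ^ (-ε) ≤ ‖χ.LFunction 1‖ := by
  obtain ⟨δ, hδ, hδ'⟩ : ∃ δ : ℝ, 0 < δ ∧ δ ≤ min (1 / 4) (ε / 14) :=
    ⟨min (1 / 4) (ε / 14), by positivity, le_rfl⟩
  have hδ₄ : δ ≤ 1 / 4 := hδ'.trans (min_le_left _ _)
  have hδε : 14 * δ ≤ ε := by linarith [hδ'.trans (min_le_right _ _)]
  obtain ⟨K, hK, htwo⟩ := exists_one_sub_le_norm_LFunction_one
  have hK₀ : 0 < K := by linarith
  by_cases hall : ∀ (q : ℕ) [NeZero q] (χ : DirichletCharacter ℂ q), χ ^ 2 = 1 → χ ≠ 1 →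
      0 ≤ (DirichletCharacter.LFunctionTrivChar₁ 1 (1 - δ : ℝ) * χ.LFunction (1 - δ : ℝ)).re
  · refine ⟨δ / K, by positivity, fun q _ χ hχ₂ hχ ↦ ?_⟩
    have h := htwo q χ hχ hχ₂ (1 - δ) (by linarith) (by linarith) (hall q χ hχ₂ hχ)
    rw [sub_sub_cancel] at h
    exact mul_rpow_neg_le_of_le_mul_rpow (by exact_mod_cast NeZero.one_le) hK₀ (norm_nonneg _)
      (by linarith) h
  push Not at hall
  obtain ⟨q₁, _, χ, hχ₂, hχ, hneg⟩ := hall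
  obtain ⟨β, hδβ, hβ, hzero⟩ := (removesPole_twoFold hχ hχ₂).exists_zero (by linarith)
    (by linarith) hneg (by
      rw [LFunctionTrivChar₁_modOne_one, one_mul]
      exact DirichletCharacter.LFunction_apply_one_ne_zero hχ)
  obtain ⟨c, hc, hfour⟩ := exists_le_norm_LFunction_one_of_zero hδ hδ₄ hδε hχ hχ₂ hδβ hβ hzero
  refine ⟨min c ((1 - β) / K), lt_min hc (div_pos (by linarith) hK₀), fun q _ ψ hψ₂ hψ ↦ ?_⟩
  by_cases hχψ : prodChar χ ψ = 1
  · have hψzero : DirichletCharacter.LFunctionTrivChar₁ 1 β * ψ.LFunction β = 0 := by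
      rcases mul_eq_zero.1 hzero with h | h
      · rw [h, zero_mul]
      · rw [LFunction_eq_zero_of_prodChar_eq_one hχ hχ₂ hψ hχψ
          (by rw [ofReal_re]; linarith) h, mul_zero]
    have h := htwo q ψ hψ hψ₂ β (by linarith) hβ (by rw [hψzero, zero_re])
    refine le_trans ?_ (mul_rpow_neg_le_of_le_mul_rpow (by exact_mod_cast NeZero.one_le) hK₀
      (norm_nonneg _) (by linarith : 6 * (1 - β) ≤ ε) h)
    gcongr
    exact min_le_right _ _
  · refine le_trans ?_ (hfour q ψ hψ₂ hψ hχψ)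
    gcongr
    exact min_le_left _ _

/-! ### Lower bounds near the line `Re s = 1` -/

lemma div_le_of_mul_cube_le_pow_four {g : ℝ → ℝ} {a b : ℝ} (ha : 0 < a) (ha₁ : a ≤ 1) (hb : 1 ≤ b)
    (hg₀ : ∀ y, 0 < y → y ≤ 1 → 0 ≤ g y) (hg : ∀ y, 0 < y → y ≤ 1 → a * y ^ 3 ≤ g y ^ 4)
    (hlip : ∀ x y, 0 < x → x ≤ y → y ≤ 1 → g y ≤ g x + b * (y - x)) {x : ℝ} (hx : 0 < x)
    (hx₁ : x ≤ 1) : a / (16 * b ^ 3) ≤ g x := by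
  by_contra! hlt
  obtain ⟨d, hd⟩ : ∃ d, d = a / (16 * b ^ 4) := ⟨_, rfl⟩
  have hd₀ : 0 < d := by rw [hd]; positivity
  have hd₁ : d ≤ 1 := by
    rw [hd, div_le_one (by positivity)]
    linarith [one_le_pow₀ hb (n := 4)]
  have ha' : a = 16 * b ^ 4 * d := by rw [hd]; field_simp
  have hgx : g x < b * d := by
    rwa [show a / (16 * b ^ 3) = b * d by rw [hd]; field_simp] at hlt
  have hbd : 0 < b ^ 4 * d ^ 4 := by positivity
  rcases le_total d x with hdx | hxd
  · have hgx₄ : g x ^ 4 < (b * d) ^ 4 := pow_lt_pow_left₀ hgx (hg₀ x hx hx₁) (by norm_num)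
    have hadx : a * d ^ 3 ≤ a * x ^ 3 := by gcongr
    rw [ha'] at hadx
    linarith [ha' ▸ hg x hx hx₁]
  · have hgd : g d < 2 * b * d := by nlinarith [hlip x d hx hxd hd₁]
    have hgd₄ : g d ^ 4 < (2 * b * d) ^ 4 := pow_lt_pow_left₀ hgd (hg₀ d hd₀ hd₁) (by norm_num)
    linarith [ha' ▸ hg d hd₀ hd₁]

section

variable {q : ℕ} [NeZero q]

lemma norm_LFunction_le_norm_normalizedL_mul (χ : DirichletCharacter ℂ q) {s : ℂ} (hs : 1 < s.re)
    {m : ℝ} (hm : 0 < m) (hm₁ : m ≤ 1) (h : χ ≠ 1 ∨ m ≤ ‖s - 1‖) :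
    ‖χ.LFunction s‖ ≤ ‖normalizedL χ s‖ * (3 / m) := by
  rcases eq_or_ne χ 1 with rfl | hχ
  · have hsm : m ≤ ‖s - 1‖ := h.resolve_left fun h ↦ h rfl
    have hs₁ : s - 1 ≠ 0 := norm_pos_iff.1 (hm.trans_le hsm)
    have hs₁' : s + 1 ≠ 0 := add_one_ne_zero_of_re_pos (by linarith)
    have hL : (1 : DirichletCharacter ℂ q).LFunction s =
        normalizedL (1 : DirichletCharacter ℂ q) s * ((s + 1) / (s - 1)) := by
      rw [normalizedL_one_of_ne_one (sub_ne_zero.1 hs₁)]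
      field_simp
    have hadd : ‖s + 1‖ ≤ ‖s - 1‖ + 2 := by
      rw [show s + 1 = (s - 1) + 2 by ring]
      exact (norm_add_le _ _).trans_eq (by rw [RCLike.norm_ofNat])
    rw [hL, norm_mul, norm_div]
    refine mul_le_mul_of_nonneg_left ?_ (norm_nonneg _)
    rw [div_le_div_iff₀ (by linarith) hm]
    nlinarith
  · rw [normalizedL_of_ne_one hχ]
    exact le_mul_of_one_le_right (norm_nonneg _) (by rw [le_div_iff₀ hm]; linarith)

lemma one_le_norm_normalizedL_product (χ : DirichletCharacter ℂ q) {x t m₁ m₂ : ℝ} (hx : 0 < x)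
    (hx₁ : x ≤ 1) (hm₁ : 0 < m₁) (hm₁' : m₁ ≤ 1) (hm₂ : 0 < m₂) (hm₂' : m₂ ≤ 1)
    (h₁ : χ ≠ 1 ∨ m₁ ≤ |t|) (h₂ : χ ^ 2 ≠ 1 ∨ m₂ ≤ |t| ∨ m₂ ≤ x) :
    1 ≤ (‖normalizedL (1 : DirichletCharacter ℂ q) (1 + x)‖ * (3 / x)) ^ 3 *
      (‖normalizedL χ (1 + x + I * t)‖ * (3 / m₁)) ^ 4 *
        (‖normalizedL (χ ^ 2) (1 + x + 2 * I * t)‖ * (3 / m₂)) := by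
  refine (DirichletCharacter.norm_LFunction_product_ge_one χ hx t).trans ?_
  rw [norm_mul, norm_mul, norm_pow, norm_pow]
  gcongr
  · refine norm_LFunction_le_norm_normalizedL_mul _ (by simpa using hx) hx hx₁ (.inr ?_)
    rw [add_sub_cancel_left, norm_real, Real.norm_of_nonneg hx.le]
  · refine norm_LFunction_le_norm_normalizedL_mul _ (by simpa using hx) hm₁ hm₁'
      (h₁.imp_right fun h ↦ h.trans ?_)
    simpa using abs_im_le_norm (1 + x + I * t - 1)
  · refine norm_LFunction_le_norm_normalizedL_mul _ (by simpa using hx) hm₂ hm₂'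
      (h₂.imp_right fun h ↦ ?_)
    rcases h with h | h
    · have him : |2 * t| ≤ ‖1 + x + 2 * I * t - 1‖ := by
        simpa using abs_im_le_norm (1 + x + 2 * I * t - 1)
      rw [abs_mul, abs_two] at him
      linarith [abs_nonneg t]
    · have hre : |x| ≤ ‖1 + x + 2 * I * t - 1‖ := by
        simpa using abs_re_le_norm (1 + x + 2 * I * t - 1)
      exact h.trans ((le_abs_self x).trans hre)

end

lemma exists_mul_le_norm_normalizedL_pow_four {ε : ℝ} (hε : 0 < ε) (hε' : ε ≤ 1 / 2) :
    ∃ K : ℝ, 1 ≤ K ∧ ∀ (q : ℕ) [NeZero q] (χ : DirichletCharacter ℂ q) (x t m₁ m₂ : ℝ),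
      0 < x → x ≤ 1 → 0 < m₁ → m₁ ≤ 1 → 0 < m₂ → m₂ ≤ 1 → (χ ≠ 1 ∨ m₁ ≤ |t|) →
      (χ ^ 2 ≠ 1 ∨ m₂ ≤ |t| ∨ m₂ ≤ x) →
        x ^ 3 * m₁ ^ 4 * m₂ ≤
          (K * analyticConductor q t ^ (2 * ε) * ‖normalizedL χ (1 + x + I * t)‖) ^ 4 := by
  obtain ⟨C, hC, hbound⟩ := exists_norm_normalizedL_le hε hε'
  refine ⟨12 * C, by linarith, fun q _ χ x t m₁ m₂ hx hx₁ hm₁ hm₁' hm₂ hm₂' h₁ h₂ ↦ ?_⟩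
  have hN := analyticConductor_pos q t
  have hone : ‖normalizedL (1 : DirichletCharacter ℂ q) (1 + x)‖ ≤
      C * analyticConductor q t ^ (2 * ε) := by
    refine (hbound q 1 (1 + x) (by rw [add_re, one_re, ofReal_re]; linarith)).trans ?_
    gcongr
    · exact (analyticConductor_pos q _).le
    · exact analyticConductor_mono q (by simp)
  have hsq : ‖normalizedL (χ ^ 2) (1 + x + 2 * I * t)‖ ≤
      C * (2 * analyticConductor q t ^ (2 * ε)) := by
    refine (hbound q (χ ^ 2) (1 + x + 2 * I * t) (by simp; linarith)).trans ?_
    gcongr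
    exact analyticConductor_rpow_le_two_mul (by simp [abs_mul]) (by linarith) (by linarith)
  set M := analyticConductor q t ^ (2 * ε)
  set g := ‖normalizedL χ (1 + x + I * t)‖
  have hprod : 1 ≤ (C * M * (3 / x)) ^ 3 * (g * (3 / m₁)) ^ 4 * (C * (2 * M) * (3 / m₂)) := by
    refine (one_le_norm_normalizedL_product χ hx hx₁ hm₁ hm₁' hm₂ hm₂' h₁ h₂).trans ?_
    gcongr
  have hsimp : (C * M * (3 / x)) ^ 3 * (g * (3 / m₁)) ^ 4 * (C * (2 * M) * (3 / m₂)) =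
      13122 * (C * M * g) ^ 4 / (x ^ 3 * m₁ ^ 4 * m₂) := by
    field_simp
    ring
  rw [hsimp, le_div_iff₀ (by positivity), one_mul] at hprod
  have hnonneg : 0 ≤ (C * M * g) ^ 4 := by positivity
  calc x ^ 3 * m₁ ^ 4 * m₂ ≤ 13122 * (C * M * g) ^ 4 := hprod
    _ ≤ 12 ^ 4 * (C * M * g) ^ 4 := by linarith
    _ = (12 * C * M * g) ^ 4 := by ring

lemma exists_norm_normalizedL_sub_le {ε : ℝ} (hε : 0 < ε) (hε' : ε ≤ 1 / 2) :
    ∃ C : ℝ, 1 ≤ C ∧ ∀ (q : ℕ) [NeZero q] (χ : DirichletCharacter ℂ q) (T : ℝ) (z w : ℂ),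
      1 - ε / 2 ≤ z.re → 1 - ε / 2 ≤ w.re → |z.im| ≤ |T| → |w.im| ≤ |T| →
        ‖normalizedL χ w - normalizedL χ z‖ ≤
          C * analyticConductor q T ^ (2 * ε) * ‖w - z‖ := by
  obtain ⟨C, hC, hderiv⟩ := exists_norm_deriv_normalizedL_le hε hε'
  refine ⟨C, hC, fun q _ χ T z w hz hw hzT hwT ↦ ?_⟩
  have hconvex : Convex ℝ {s : ℂ | 1 - ε / 2 ≤ s.re ∧ s.im ∈ Set.Icc (-|T|) |T|} :=
    ((convex_Ici (1 - ε / 2)).linear_preimage reLm).inter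
      ((convex_Icc (-|T|) |T|).linear_preimage imLm)
  refine hconvex.norm_image_sub_le_of_norm_deriv_le (𝕜 := ℂ)
    (fun s hs ↦ differentiableAt_normalizedL χ (by linarith [hs.1])) (fun s hs ↦ ?_)
    ⟨hz, abs_le.1 hzT⟩ ⟨hw, abs_le.1 hwT⟩
  refine (hderiv q χ s hs.1).trans ?_
  gcongr
  · exact (analyticConductor_pos q _).le
  · exact analyticConductor_mono q (abs_le.2 hs.2)

lemma exists_le_norm_normalizedL_of_sq_ne_one_or {ε : ℝ} (hε : 0 < ε) (hε' : ε ≤ 1 / 2) :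
    ∃ c : ℝ, 0 < c ∧ ∀ η : ℝ, 0 < η → η ≤ 1 → ∀ (q : ℕ) [NeZero q] (χ : DirichletCharacter ℂ q)
      (x t : ℝ), 0 < x → x ≤ 1 → (χ ^ 2 ≠ 1 ∨ η ≤ |t|) →
        c * η ^ 5 * analyticConductor q t ^ (-(14 * ε)) ≤ ‖normalizedL χ (1 + x + I * t)‖ := by
  obtain ⟨K, hK, hpow⟩ := exists_mul_le_norm_normalizedL_pow_four hε hε'
  obtain ⟨C, hC, hlip⟩ := exists_norm_normalizedL_sub_le hε hε'
  refine ⟨1 / (16 * K ^ 4 * C ^ 3), by positivity, fun η hη hη₁ q _ χ x t hx hx₁ hcond ↦ ?_⟩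
  have hN := analyticConductor_pos q t
  set M := analyticConductor q t ^ (2 * ε) with hM
  have hM₁ : 1 ≤ M := Real.one_le_rpow (one_le_analyticConductor q t) (by linarith)
  have hKM : 1 ≤ K * M := one_le_mul_of_one_le_of_one_le hK hM₁
  have hχ : χ ≠ 1 ∨ η ≤ |t| := hcond.imp_left fun h hχ ↦ h (by rw [hχ, one_pow])
  have hmain := div_le_of_mul_cube_le_pow_four
    (g := fun y : ℝ ↦ ‖normalizedL χ (1 + y + I * t)‖) (a := η ^ 5 / (K * M) ^ 4) (b := C * M)
    (by positivity)
    (div_le_one_of_le₀ ((pow_le_one₀ hη.le hη₁).trans (one_le_pow₀ hKM)) (by positivity))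
    (one_le_mul_of_one_le_of_one_le hC hM₁) (fun _ _ _ ↦ norm_nonneg _)
    (fun y hy hy₁ ↦ ?_) (fun y z hy hyz _ ↦ ?_) hx hx₁
  · refine le_trans (le_of_eq ?_) hmain
    have hM₇ : analyticConductor q t ^ (-(14 * ε)) = (M ^ 7)⁻¹ := by
      rw [hM, ← Real.rpow_natCast, ← Real.rpow_mul hN.le, ← Real.rpow_neg hN.le]
      congr 1
      push_cast
      ring
    rw [hM₇]
    field_simp
  · have h := hpow q χ y t η η hy hy₁ hη hη₁ hη hη₁ hχ (hcond.imp_right .inl)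
    rw [div_mul_eq_mul_div, div_le_iff₀ (by positivity)]
    linarith
  · have h := hlip q χ t (1 + y + I * t) (1 + z + I * t) (by simp; linarith) (by simp; linarith)
      (by simp) (by simp)
    rw [show (1 + z + I * t - (1 + y + I * t) : ℂ) = ((z - y : ℝ) : ℂ) by push_cast; ring,
      norm_real, Real.norm_of_nonneg (by linarith)] at h
    linarith [norm_sub_norm_le (normalizedL χ (1 + z + I * t)) (normalizedL χ (1 + y + I * t))]

lemma half_mul_rpow_neg_le_one_sub_inv {ε : ℝ} (hε : 0 < ε) {P p : ℕ}
    (hP : (2 : ℝ) ^ (1 / ε) ≤ P) (hp : p.Prime) :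
    (if p < P then 1 / 2 else 1 : ℝ) * (p : ℝ) ^ (-ε) ≤ 1 - (p : ℝ)⁻¹ := by
  have hp₂ : (2 : ℝ) ≤ p := by exact_mod_cast hp.two_le
  have hhalf : 1 / 2 ≤ 1 - (p : ℝ)⁻¹ := by
    have : (p : ℝ)⁻¹ ≤ 2⁻¹ := inv_anti₀ two_pos hp₂
    linarith
  refine le_trans ?_ hhalf
  split_ifs with hpP
  · have : (p : ℝ) ^ (-ε) ≤ 1 := Real.rpow_le_one_of_one_le_of_nonpos (by linarith) (by linarith)
    linarith
  · have hPp : (P : ℝ) ≤ p := by exact_mod_cast not_lt.1 hpP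
    have hpε : (2 : ℝ) ≤ (p : ℝ) ^ ε := by
      rw [← Real.rpow_inv_le_iff_of_pos zero_le_two (by linarith) hε, ← one_div]
      exact hP.trans hPp
    rw [one_mul, Real.rpow_neg (by linarith), one_div]
    exact inv_anti₀ two_pos hpε

/-- The product is `φ(q) / q`. -/
lemma exists_mul_rpow_neg_le_prod_one_sub_inv {ε : ℝ} (hε : 0 < ε) :
    ∃ c : ℝ, 0 < c ∧ ∀ q : ℕ, q ≠ 0 →
      c * (q : ℝ) ^ (-ε) ≤ ∏ p ∈ q.primeFactors, (1 - (p : ℝ)⁻¹) := by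
  obtain ⟨P, hP⟩ : ∃ P : ℕ, (2 : ℝ) ^ (1 / ε) ≤ P := exists_nat_ge _
  refine ⟨(1 / 2) ^ P, by positivity, fun q hq ↦ ?_⟩
  have hsmall : (1 / 2 : ℝ) ^ P ≤ ∏ p ∈ q.primeFactors, (if p < P then 1 / 2 else 1 : ℝ) := by
    rw [prod_ite, prod_const, prod_const_one, mul_one]
    refine pow_le_pow_of_le_one (by norm_num) (by norm_num) ?_
    refine (card_le_card fun p hp ↦ ?_).trans_eq (card_range P)
    exact mem_range.2 (mem_filter.1 hp).2
  have hradical : (q : ℝ) ^ (-ε) ≤ ∏ p ∈ q.primeFactors, (p : ℝ) ^ (-ε) := by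
    rw [Real.finsetProd_rpow _ _ fun p _ ↦ p.cast_nonneg]
    refine Real.rpow_le_rpow_of_nonpos ?_ ?_ (by linarith)
    · exact prod_pos fun p hp ↦ by exact_mod_cast (Nat.prime_of_mem_primeFactors hp).pos
    · rw [← Nat.cast_prod]
      exact_mod_cast Nat.le_of_dvd (Nat.pos_of_ne_zero hq) (Nat.prod_primeFactors_dvd q)
  calc (1 / 2) ^ P * (q : ℝ) ^ (-ε)
      ≤ (∏ p ∈ q.primeFactors, (if p < P then 1 / 2 else 1 : ℝ)) *
          ∏ p ∈ q.primeFactors, (p : ℝ) ^ (-ε) := by gcongr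
    _ = ∏ p ∈ q.primeFactors, (if p < P then 1 / 2 else 1 : ℝ) * (p : ℝ) ^ (-ε) :=
        prod_mul_distrib.symm
    _ ≤ ∏ p ∈ q.primeFactors, (1 - (p : ℝ)⁻¹) := by
        refine prod_le_prod (fun p _ ↦ by positivity) fun p hp ↦ ?_
        exact half_mul_rpow_neg_le_one_sub_inv hε hP (Nat.prime_of_mem_primeFactors hp)

lemma prod_one_sub_inv_le_norm_prod_one_sub_cpow (q : ℕ) {s : ℂ} (hs : 1 ≤ s.re) :
    ∏ p ∈ q.primeFactors, (1 - (p : ℝ)⁻¹) ≤ ‖∏ p ∈ q.primeFactors, (1 - (p : ℂ) ^ (-s))‖ := by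
  rw [norm_prod]
  have hone {p : ℕ} (hp : p ∈ q.primeFactors) : (1 : ℝ) ≤ p := by
    exact_mod_cast (Nat.prime_of_mem_primeFactors hp).one_le
  refine prod_le_prod (fun p hp ↦ sub_nonneg.2 (inv_le_one_of_one_le₀ (hone hp)))
    fun p hp ↦ ?_
  have hnorm : ‖(p : ℂ) ^ (-s)‖ ≤ (p : ℝ)⁻¹ := by
    rw [norm_natCast_cpow_of_pos (Nat.prime_of_mem_primeFactors hp).pos, ← Real.rpow_neg_one]
    exact Real.rpow_le_rpow_of_exponent_le (hone hp) (by rw [neg_re]; linarith)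
  have := norm_sub_norm_le (1 : ℂ) ((p : ℂ) ^ (-s))
  rw [norm_one] at this
  linarith

lemma exists_le_norm_LFunctionTrivChar₁_modOne :
    ∃ m : ℝ, 0 < m ∧ ∀ s ∈ Set.Icc (1 : ℝ) 2 ×ℂ Set.Icc (-1 : ℝ) 1,
      m ≤ ‖DirichletCharacter.LFunctionTrivChar₁ 1 s‖ := by
  have hcont := (DirichletCharacter.differentiable_LFunctionTrivChar₁ 1).continuous.norm
  obtain ⟨s₀, hs₀, hmin⟩ := (isCompact_Icc.reProdIm isCompact_Icc).exists_isMinOn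
    (s := Set.Icc (1 : ℝ) 2 ×ℂ Set.Icc (-1 : ℝ) 1) ⟨1, by constructor <;> simp⟩ hcont.continuousOn
  refine ⟨_, norm_pos_iff.2 ?_, fun s hs ↦ hmin hs⟩
  rcases eq_or_ne s₀ 1 with rfl | hs₁
  · rw [LFunctionTrivChar₁_modOne_one]
    exact one_ne_zero
  · rw [LFunctionTrivChar₁_modOne hs₁]
    exact mul_ne_zero (sub_ne_zero.2 hs₁)
      (DirichletCharacter.LFunction_ne_zero_of_one_le_re 1 (.inr hs₁) hs₀.1.1)

lemma normalizedL_one_eq_prod_mul {q : ℕ} [NeZero q] {s : ℂ} (hs : s ≠ 1) :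
    normalizedL (1 : DirichletCharacter ℂ q) s = (∏ p ∈ q.primeFactors, (1 - (p : ℂ) ^ (-s))) *
      DirichletCharacter.LFunctionTrivChar₁ 1 s / (s + 1) := by
  rw [normalizedL_one_of_ne_one hs, LFunctionTrivChar₁_modOne hs,
    DirichletCharacter.LFunction_modOne_eq, show (1 : DirichletCharacter ℂ q).LFunction s = _ from
      DirichletCharacter.LFunctionTrivChar_eq_mul_riemannZeta hs]
  ring

lemma exists_le_norm_normalizedL_one {ε : ℝ} (hε : 0 < ε) :
    ∃ c : ℝ, 0 < c ∧ ∀ (q : ℕ) [NeZero q] (x t : ℝ), 0 < x → x ≤ 1 → |t| ≤ 1 →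
      c * analyticConductor q t ^ (-ε) ≤
        ‖normalizedL (1 : DirichletCharacter ℂ q) (1 + x + I * t)‖ := by
  obtain ⟨c, hc, hprod⟩ := exists_mul_rpow_neg_le_prod_one_sub_inv hε
  obtain ⟨m, hm, hzeta⟩ := exists_le_norm_LFunctionTrivChar₁_modOne
  refine ⟨c * m / 4, by positivity, fun q _ x t hx hx₁ ht ↦ ?_⟩
  set s : ℂ := 1 + x + I * t with hs
  have hre : s.re = 1 + x := by simp [hs]
  have him : s.im = t := by simp [hs]
  have hs₁ : s ≠ 1 := fun h ↦ by rw [h, one_re] at hre; linarith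
  have hs₄ : ‖s + 1‖ ≤ 4 := by
    refine (norm_le_abs_re_add_abs_im _).trans ?_
    rw [add_re, one_re, add_im, one_im, hre, him, add_zero, abs_of_nonneg (by linarith)]
    linarith
  have hs₀ : 0 < ‖s + 1‖ := norm_pos_iff.2 (add_one_ne_zero_of_re_pos (by linarith))
  have hq : (q : ℝ) ≠ 0 := by exact_mod_cast NeZero.ne q
  have hqN : analyticConductor q t ^ (-ε) ≤ (q : ℝ) ^ (-ε) :=
    Real.rpow_le_rpow_of_nonpos (by positivity) (natCast_le_analyticConductor q t) (by linarith)
  have hzetas := hzeta s ⟨by simp [hre]; constructor <;> linarith, by simpa [him] using abs_le.1 ht⟩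
  have hprods := (hprod q (NeZero.ne q)).trans
    (prod_one_sub_inv_le_norm_prod_one_sub_cpow q (s := s) (by linarith))
  rw [normalizedL_one_eq_prod_mul hs₁, norm_div, norm_mul]
  calc c * m / 4 * analyticConductor q t ^ (-ε) ≤ c * m / 4 * (q : ℝ) ^ (-ε) := by gcongr
    _ = c * (q : ℝ) ^ (-ε) * m / 4 := by ring
    _ ≤ _ := by gcongr

lemma mul_rpow_neg_le_mul_rpow_neg {c c' a b N : ℝ} (hN : 1 ≤ N) (hc : 0 ≤ c) (hcc' : c ≤ c')
    (hab : a ≤ b) : c * N ^ (-b) ≤ c' * N ^ (-a) :=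
  mul_le_mul hcc' (Real.rpow_le_rpow_of_exponent_le hN (by linarith))
    (Real.rpow_nonneg (by linarith) _) (hc.trans hcc')

/-- Near the real point `1`, `L(s, χ)` is close to `L(1, χ)`, which Siegel's theorem bounds from
below. -/
lemma exists_le_norm_normalizedL_near_one {ε : ℝ} (hε : 0 < ε) (hε' : ε ≤ 1 / 2) :
    ∃ κ c : ℝ, 0 < κ ∧ κ ≤ 1 ∧ 0 < c ∧
      ∀ (q : ℕ) [NeZero q] (χ : DirichletCharacter ℂ q) (x t : ℝ), χ ^ 2 = 1 → χ ≠ 1 → 0 < x →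
        x ≤ κ * analyticConductor q t ^ (-(3 * ε)) → |t| ≤ κ * analyticConductor q t ^ (-(3 * ε)) →
          c * analyticConductor q t ^ (-ε) ≤ ‖normalizedL χ (1 + x + I * t)‖ := by
  obtain ⟨C, hC, hlip⟩ := exists_norm_normalizedL_sub_le hε hε'
  obtain ⟨c, hc, hsiegel⟩ := exists_mul_rpow_neg_le_norm_LFunction_one hε
  obtain ⟨κ, hκ, hκ₁, hκc⟩ : ∃ κ : ℝ, 0 < κ ∧ κ ≤ 1 ∧ 4 * C * κ ≤ c :=
    ⟨min 1 (c / (4 * C)), by positivity, min_le_left _ _, by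
      rw [← le_div_iff₀' (by positivity)]; exact min_le_right _ _⟩
  refine ⟨κ, c / 2, hκ, hκ₁, by positivity, fun q _ χ x t hχ₂ hχ hx hxη ht ↦ ?_⟩
  have hN := analyticConductor_pos q t
  have hqN := natCast_le_analyticConductor q t
  set N := analyticConductor q t
  have hnear := hlip q χ t (1 + x + I * t) 1 (by simp; linarith) (by simp; linarith) (by simp)
    (by simp)
  have hdist : ‖1 - (1 + x + I * t)‖ ≤ 2 * (κ * N ^ (-(3 * ε))) :=
    calc ‖1 - (1 + x + I * t)‖ ≤ |x| + |t| := by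
          simpa using norm_le_abs_re_add_abs_im (1 - (1 + x + I * t))
      _ ≤ 2 * (κ * N ^ (-(3 * ε))) := by rw [abs_of_pos hx]; linarith
  have hone : c * N ^ (-ε) ≤ ‖normalizedL χ 1‖ := by
    rw [normalizedL_of_ne_one hχ]
    refine le_trans ?_ (hsiegel q χ hχ₂ hχ)
    exact mul_le_mul_of_nonneg_left (Real.rpow_le_rpow_of_nonpos
      (Nat.cast_pos.2 (NeZero.pos q)) hqN (by linarith)) hc.le
  have hdiff : C * N ^ (2 * ε) * ‖1 - (1 + x + I * t)‖ ≤ c / 2 * N ^ (-ε) := by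
    calc C * N ^ (2 * ε) * ‖1 - (1 + x + I * t)‖
        ≤ C * N ^ (2 * ε) * (2 * (κ * N ^ (-(3 * ε)))) := by gcongr
      _ = 4 * C * κ / 2 * (N ^ (2 * ε) * N ^ (-(3 * ε))) := by ring
      _ = 4 * C * κ / 2 * N ^ (-ε) := by
        rw [← Real.rpow_add hN]
        congr 2
        ring
      _ ≤ c / 2 * N ^ (-ε) := by gcongr
  linarith [norm_sub_norm_le (normalizedL χ 1) (normalizedL χ (1 + x + I * t))]

lemma exists_le_norm_normalizedL_of_sq_eq_one {ε : ℝ} (hε : 0 < ε) (hε' : ε ≤ 1 / 2) :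
    ∃ c : ℝ, 0 < c ∧ ∀ (q : ℕ) [NeZero q] (χ : DirichletCharacter ℂ q) (x t : ℝ), χ ^ 2 = 1 →
      χ ≠ 1 → 0 < x → x ≤ 1 →
        c * analyticConductor q t ^ (-(29 * ε)) ≤ ‖normalizedL χ (1 + x + I * t)‖ := by
  obtain ⟨κ, c, hκ, hκ₁, hc, hnear⟩ := exists_le_norm_normalizedL_near_one hε hε'
  obtain ⟨c₁, hc₁, hfar⟩ := exists_le_norm_normalizedL_of_sq_ne_one_or hε hε'
  obtain ⟨K, hK, hpow⟩ := exists_mul_le_norm_normalizedL_pow_four hε hε'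
  refine ⟨min (c₁ * κ ^ 5) (min c (κ / K)), by positivity, fun q _ χ x t hχ₂ hχ hx hx₁ ↦ ?_⟩
  have hnear := hnear q χ x t hχ₂ hχ hx
  have hN := analyticConductor_pos q t
  have hN₁ := one_le_analyticConductor q t
  set N := analyticConductor q t
  set η := κ * N ^ (-(3 * ε)) with hη
  have hη₀ : 0 < η := by positivity
  have hη₁ : η ≤ 1 :=
    mul_le_one₀ hκ₁ (by positivity) (Real.rpow_le_one_of_one_le_of_nonpos hN₁ (by linarith))
  rcases le_or_gt η |t| with ht | ht
  · calc _ ≤ c₁ * κ ^ 5 * N ^ (-(29 * ε)) := by gcongr; exact min_le_left _ _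
      _ = c₁ * (κ * N ^ (-(3 * ε))) ^ 5 * N ^ (-(14 * ε)) := by
        rw [mul_pow, ← Real.rpow_mul_natCast hN.le, mul_assoc, mul_assoc, mul_assoc,
          ← Real.rpow_add hN]
        congr 3
        push_cast
        ring
      _ ≤ _ := hfar η hη₀ hη₁ q χ x t hx hx₁ (.inr ht)
  rcases le_or_gt x η with hxη | hxη
  · exact (mul_rpow_neg_le_mul_rpow_neg hN₁ (by positivity)
      ((min_le_right _ _).trans (min_le_left _ _)) (by linarith)).trans (hnear hxη ht.le)
  · have h := hpow q χ x t 1 x hx hx₁ one_pos le_rfl hx hx₁ (.inl hχ) (.inr (.inr le_rfl))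
    rw [one_pow, mul_one, ← pow_succ] at h
    have hle := le_of_pow_le_pow_left₀ four_ne_zero (by positivity) h
    calc _ ≤ κ / K * N ^ (-(5 * ε)) := mul_rpow_neg_le_mul_rpow_neg hN₁ (by positivity)
          ((min_le_right _ _).trans (min_le_right _ _)) (by linarith)
      _ = η / (K * N ^ (2 * ε)) := by
        rw [hη, show -(5 * ε) = -(3 * ε) - 2 * ε by ring, Real.rpow_sub hN]
        field_simp
      _ ≤ _ := by
        rw [div_le_iff₀' (by positivity)]
        exact hxη.le.trans hle

theorem exists_le_norm_normalizedL {δ : ℝ} (hδ : 0 < δ) :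
    ∃ c : ℝ, 0 < c ∧ c ≤ 1 ∧ ∀ (q : ℕ) [NeZero q] (χ : DirichletCharacter ℂ q) (s : ℂ),
      1 < s.re → s.re ≤ 2 → c * analyticConductor q s.im ^ (-δ) ≤ ‖normalizedL χ s‖ := by
  obtain ⟨ε, hε, hε', hεδ⟩ : ∃ ε : ℝ, 0 < ε ∧ ε ≤ 1 / 2 ∧ 29 * ε ≤ δ :=
    ⟨min (1 / 2) (δ / 29), by positivity, min_le_left _ _, by
      rw [← le_div_iff₀' (by norm_num)]; exact min_le_right _ _⟩
  obtain ⟨c₁, hc₁, hgeneric⟩ := exists_le_norm_normalizedL_of_sq_ne_one_or hε hε'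
  obtain ⟨c₂, hc₂, htriv⟩ := exists_le_norm_normalizedL_one hε
  obtain ⟨c₃, hc₃, hquad⟩ := exists_le_norm_normalizedL_of_sq_eq_one hε hε'
  refine ⟨min (min c₁ c₂) (min c₃ 1), by positivity, (min_le_right _ _).trans (min_le_right _ _),
    fun q _ χ s hs₁ hs₂ ↦ ?_⟩
  obtain ⟨x, t, rfl⟩ : ∃ x t : ℝ, s = 1 + x + I * t :=
    ⟨s.re - 1, s.im, Complex.ext (by simp) (by simp)⟩
  have him : (1 + x + I * t : ℂ).im = t := by simp
  rw [him]
  have hx : 0 < x := by simpa using hs₁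
  have hx₁ : x ≤ 1 := by simp at hs₂; linarith
  have hN := one_le_analyticConductor q t
  have hother (h : χ ^ 2 ≠ 1 ∨ 1 ≤ |t|) : min (min c₁ c₂) (min c₃ 1) *
      analyticConductor q t ^ (-δ) ≤ ‖normalizedL χ (1 + x + I * t)‖ := by
    have hle := hgeneric 1 one_pos le_rfl q χ x t hx hx₁ h
    rw [one_pow, mul_one] at hle
    exact (mul_rpow_neg_le_mul_rpow_neg hN (by positivity)
      ((min_le_left _ _).trans (min_le_left _ _)) (by linarith)).trans hle
  rcases ne_or_eq (χ ^ 2) 1 with hχ₂ | hχ₂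
  · exact hother (.inl hχ₂)
  rcases ne_or_eq χ 1 with hχ | rfl
  · exact (mul_rpow_neg_le_mul_rpow_neg hN (by positivity)
      ((min_le_right _ _).trans (min_le_left _ _)) hεδ).trans (hquad q χ x t hχ₂ hχ hx hx₁)
  rcases le_total 1 |t| with ht | ht
  · exact hother (.inr ht)
  · exact (mul_rpow_neg_le_mul_rpow_neg hN (by positivity)
      ((min_le_left _ _).trans (min_le_right _ _)) (by linarith)).trans (htriv q x t hx hx₁ ht)

/-! ### The Dirichlet series of the von Mangoldt function in a residue class -/

lemma exists_le_norm_normalizedL_on_closedBall {ε : ℝ} (hε : 0 < ε) (hε' : ε ≤ 1 / 2) :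
    ∃ κ c : ℝ, 0 < κ ∧ κ ≤ ε / 2 ∧ 0 < c ∧
      ∀ (q : ℕ) [NeZero q] (χ : DirichletCharacter ℂ q) (s : ℂ), 1 < s.re → s.re ≤ 2 →
        ∀ z ∈ Metric.closedBall s (κ * analyticConductor q s.im ^ (-(3 * ε))),
          c * analyticConductor q s.im ^ (-ε) ≤ ‖normalizedL χ z‖ := by
  obtain ⟨C, hC, hlip⟩ := exists_norm_normalizedL_sub_le hε hε'
  obtain ⟨c, hc, -, hlow⟩ := exists_le_norm_normalizedL hε
  obtain ⟨κ, hκ, hκε, hκc⟩ : ∃ κ : ℝ, 0 < κ ∧ κ ≤ ε / 2 ∧ 4 * C * κ ≤ c :=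
    ⟨min (ε / 2) (c / (4 * C)), by positivity, min_le_left _ _, by
      rw [← le_div_iff₀' (by positivity)]; exact min_le_right _ _⟩
  refine ⟨κ, c / 2, hκ, hκε, by positivity, fun q _ χ s hs hs₂ z hz ↦ ?_⟩
  have hN := analyticConductor_pos q s.im
  have hdouble : analyticConductor q (|s.im| + 1) ^ (2 * ε) ≤
      2 * analyticConductor q s.im ^ (2 * ε) :=
    analyticConductor_rpow_le_two_mul
      (by rw [abs_of_nonneg (by positivity)]; linarith [abs_nonneg s.im]) (by linarith)
      (by linarith)
  have hlow := hlow q χ s hs hs₂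
  have hlip := hlip q χ (|s.im| + 1) z s
  rw [abs_of_nonneg (by positivity : 0 ≤ |s.im| + 1)] at hlip
  have hpow : analyticConductor q s.im ^ (-(3 * ε)) ≤ 1 :=
    Real.rpow_le_one_of_one_le_of_nonpos (one_le_analyticConductor q s.im) (by linarith)
  set N := analyticConductor q s.im
  have hz' := Metric.closedBall_subset_closedBall
    ((mul_le_of_le_one_right hκ.le hpow).trans hκε) hz
  have hdiff := hlip (by linarith [sub_le_re_of_mem_closedBall hz']) (by linarith)
    (by linarith [abs_im_le_of_mem_closedBall hz']) (by linarith)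
  have hsmall : C * analyticConductor q (|s.im| + 1) ^ (2 * ε) * ‖s - z‖ ≤ c / 2 * N ^ (-ε) :=
    calc _ ≤ C * (2 * N ^ (2 * ε)) * (κ * N ^ (-(3 * ε))) := by
          rw [norm_sub_rev]
          gcongr
          exact mem_closedBall_iff_norm.1 hz
      _ = 4 * C * κ / 2 * (N ^ (2 * ε) * N ^ (-(3 * ε))) := by ring
      _ = 4 * C * κ / 2 * N ^ (-ε) := by
        rw [← Real.rpow_add hN]
        congr 2
        ring
      _ ≤ c / 2 * N ^ (-ε) := by gcongr
  linarith [norm_sub_norm_le (normalizedL χ s) (normalizedL χ z)]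

lemma differentiableAt_logDeriv_normalizedL {q : ℕ} [NeZero q] (χ : DirichletCharacter ℂ q) {s : ℂ}
    (hs : 0 < s.re) (h : normalizedL χ s ≠ 0) :
    DifferentiableAt ℂ (logDeriv (normalizedL χ)) s := by
  have hopen : IsOpen {s : ℂ | 0 < s.re} := isOpen_lt continuous_const continuous_re
  have hdiff : DifferentiableOn ℂ (normalizedL χ) {s | 0 < s.re} := fun z hz ↦
    (differentiableAt_normalizedL χ hz).differentiableWithinAt
  exact ((hdiff.deriv hopen).differentiableAt (hopen.mem_nhds hs)).div
    (differentiableAt_normalizedL χ hs) h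

lemma exists_norm_logDeriv_normalizedL_le {ε : ℝ} (hε : 0 < ε) (hε' : ε ≤ 1 / 2) :
    ∃ κ C : ℝ, 0 < κ ∧ κ ≤ ε / 2 ∧ 0 < C ∧
      ∀ (q : ℕ) [NeZero q] (χ : DirichletCharacter ℂ q) (s : ℂ), 1 < s.re → s.re ≤ 2 →
        ∀ z ∈ Metric.closedBall s (κ * analyticConductor q s.im ^ (-(3 * ε))),
          DifferentiableAt ℂ (logDeriv (normalizedL χ)) z ∧
            ‖logDeriv (normalizedL χ) z‖ ≤ C * analyticConductor q s.im ^ (3 * ε) := by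
  obtain ⟨C, hC, hderiv⟩ := exists_norm_deriv_normalizedL_le hε hε'
  obtain ⟨κ, c, hκ, hκε, hc, hlow⟩ := exists_le_norm_normalizedL_on_closedBall hε hε'
  refine ⟨κ, 2 * C / c, hκ, hκε, by positivity, fun q _ χ s hs hs₂ z hz ↦ ?_⟩
  have hN := analyticConductor_pos q s.im
  have hlow := hlow q χ s hs hs₂ z hz
  have hpow : analyticConductor q s.im ^ (-(3 * ε)) ≤ 1 :=
    Real.rpow_le_one_of_one_le_of_nonpos (one_le_analyticConductor q s.im) (by linarith)
  have hz' := Metric.closedBall_subset_closedBall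
    ((mul_le_of_le_one_right hκ.le hpow).trans hκε) hz
  have hre := sub_le_re_of_mem_closedBall hz'
  have hpos : 0 < ‖normalizedL χ z‖ := lt_of_lt_of_le (by positivity) hlow
  refine ⟨differentiableAt_logDeriv_normalizedL χ (by linarith) (norm_pos_iff.1 hpos), ?_⟩
  rw [logDeriv_apply, norm_div, div_le_iff₀ hpos]
  calc ‖deriv (normalizedL χ) z‖ ≤ C * analyticConductor q z.im ^ (2 * ε) :=
        hderiv q χ z (by linarith)
    _ ≤ C * (2 * analyticConductor q s.im ^ (2 * ε)) := by
        gcongr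
        exact analyticConductor_rpow_le_two_mul
          (by linarith [abs_im_le_of_mem_closedBall hz', abs_nonneg s.im]) (by linarith)
          (by linarith)
    _ = 2 * C / c * analyticConductor q s.im ^ (3 * ε) *
          (c * analyticConductor q s.im ^ (-ε)) := by
        rw [show 2 * ε = 3 * ε + -ε by ring, Real.rpow_add hN]
        field_simp
    _ ≤ _ := by gcongr

/-- The entire function `ζ(s) - 1 / (s - 1)`. -/
noncomputable def zetaRegular : ℂ → ℂ := dslope (DirichletCharacter.LFunctionTrivChar₁ 1) 1

lemma differentiable_zetaRegular : Differentiable ℂ zetaRegular :=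
  differentiable_dslope_one (DirichletCharacter.differentiable_LFunctionTrivChar₁ 1)

lemma zetaRegular_of_ne_one {s : ℂ} (hs : s ≠ 1) :
    zetaRegular s = riemannZeta s - 1 / (s - 1) := by
  have hs' : s - 1 ≠ 0 := sub_ne_zero.2 hs
  rw [zetaRegular, dslope_one_of_ne _ hs, LFunctionTrivChar₁_modOne_one,
    LFunctionTrivChar₁_modOne hs, DirichletCharacter.LFunction_modOne_eq, sub_div,
    mul_div_cancel_left₀ _ hs']

lemma exists_norm_zetaRegular_le {ε : ℝ} (hε : 0 < ε) (hε' : ε ≤ 1 / 2) :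
    ∃ C : ℝ, 0 < C ∧ ∀ s : ℂ, 1 - ε ≤ s.re →
      ‖zetaRegular s‖ ≤ C * analyticConductor 1 s.im ^ (2 * ε) := by
  obtain ⟨C, hC, hbound⟩ := exists_norm_normalizedL_le hε hε'
  obtain ⟨B, hB⟩ := (isCompact_closedBall (1 : ℂ) 1).exists_bound_of_continuousOn
    differentiable_zetaRegular.continuous.continuousOn
  refine ⟨max B (3 * C + 1), by positivity, fun s hs ↦ ?_⟩
  have hone : 1 ≤ analyticConductor 1 s.im ^ (2 * ε) :=
    Real.one_le_rpow (one_le_analyticConductor 1 s.im) (by linarith)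
  rcases le_total ‖s - 1‖ 1 with hnear | hfar
  · calc ‖zetaRegular s‖ ≤ B := hB s (mem_closedBall_iff_norm.2 hnear)
      _ ≤ max B (3 * C + 1) := le_max_left _ _
      _ ≤ _ := le_mul_of_one_le_right (by positivity) hone
  have hs₁ : s - 1 ≠ 0 := norm_pos_iff.1 (by linarith)
  have hs₁' : s + 1 ≠ 0 := add_one_ne_zero_of_re_pos (by linarith)
  have hzeta : zetaRegular s = (s + 1) / (s - 1) * normalizedL (1 : DirichletCharacter ℂ 1) s -
      1 / (s - 1) := by
    rw [zetaRegular_of_ne_one (sub_ne_zero.1 hs₁), normalizedL_one_of_ne_one (sub_ne_zero.1 hs₁),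
      DirichletCharacter.LFunction_modOne_eq]
    field_simp
  have hquot : ‖(s + 1) / (s - 1)‖ ≤ 3 := by
    rw [norm_div, div_le_iff₀ (by linarith), show s + 1 = (s - 1) + 2 by ring]
    refine (norm_add_le _ _).trans ?_
    rw [RCLike.norm_ofNat]
    linarith
  have hpole : ‖1 / (s - 1)‖ ≤ 1 := by
    rw [norm_div, norm_one, div_le_one (by linarith)]
    exact hfar
  calc ‖zetaRegular s‖
      ≤ ‖(s + 1) / (s - 1)‖ * ‖normalizedL (1 : DirichletCharacter ℂ 1) s‖ + ‖1 / (s - 1)‖ := by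
        rw [hzeta, ← norm_mul]
        exact norm_sub_le _ _
    _ ≤ 3 * (C * analyticConductor 1 s.im ^ (2 * ε)) + 1 := by gcongr; exact hbound 1 1 s hs
    _ ≤ (3 * C + 1) * analyticConductor 1 s.im ^ (2 * ε) := by linarith
    _ ≤ _ := by gcongr; exact le_max_right _ _

section

variable {q : ℕ}

/-- The von Mangoldt function restricted to the class of `a`, minus its mean value `1 / φ(q)`. -/
noncomputable def vonMangoldtError (a : ZMod q) (n : ℕ) : ℝ :=
  ArithmeticFunction.vonMangoldt.residueClass a n - (q.totient : ℝ)⁻¹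

lemma LSeriesSummable_residueClass (a : ZMod q) {s : ℂ} (hs : 1 < s.re) :
    LSeriesSummable (fun n ↦ (ArithmeticFunction.vonMangoldt.residueClass a n : ℂ)) s :=
  LSeriesSummable_of_abscissaOfAbsConv_lt_re <|
    (ArithmeticFunction.vonMangoldt.abscissaOfAbsConv_residueClass_le_one a).trans_lt
      (by exact_mod_cast hs)

lemma ofReal_vonMangoldtError (a : ZMod q) : (fun n ↦ (vonMangoldtError a n : ℂ)) =
    (fun n ↦ (ArithmeticFunction.vonMangoldt.residueClass a n : ℂ)) -
      ((q.totient : ℂ)⁻¹ • (1 : ℕ → ℂ)) := by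
  ext n
  simp [vonMangoldtError]

lemma abscissaOfAbsConv_vonMangoldtError_le_one (a : ZMod q) :
    LSeries.abscissaOfAbsConv (fun n ↦ (vonMangoldtError a n : ℂ)) ≤ 1 := by
  refine LSeries.abscissaOfAbsConv_le_of_forall_lt_LSeriesSummable fun y hy ↦ ?_
  have hy' : 1 < (y : ℂ).re := by simpa using hy
  rw [ofReal_vonMangoldtError]
  exact (LSeriesSummable_residueClass a hy').sub ((LSeriesSummable_one_iff.2 hy').smul _)

variable [NeZero q]

lemma deriv_div_LFunction_one {s : ℂ} (hs : 1 < s.re) :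
    deriv (1 : DirichletCharacter ℂ q).LFunction s / (1 : DirichletCharacter ℂ q).LFunction s =
      logDeriv (normalizedL (1 : DirichletCharacter ℂ q)) s + (1 / (s + 1) - 1 / (s - 1)) := by
  have hs₁ : s ≠ 1 := by rintro rfl; simp at hs
  have hsub : s - 1 ≠ 0 := sub_ne_zero.2 hs₁
  have hadd : s + 1 ≠ 0 := add_one_ne_zero_of_re_pos (by linarith)
  have hL : (1 : DirichletCharacter ℂ q).LFunction s ≠ 0 :=
    DirichletCharacter.LFunction_ne_zero_of_one_le_re 1 (.inr hs₁) hs.le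
  have heq : normalizedL (1 : DirichletCharacter ℂ q) =ᶠ[𝓝 s]
      fun w ↦ (w - 1) / (w + 1) * (1 : DirichletCharacter ℂ q).LFunction w := by
    filter_upwards [isOpen_ne.mem_nhds hs₁] with w hw
    exact normalizedL_one_of_ne_one hw
  have hlog : logDeriv (normalizedL (1 : DirichletCharacter ℂ q)) s =
      logDeriv (fun w ↦ (w - 1) / (w + 1) * (1 : DirichletCharacter ℂ q).LFunction w) s := by
    rw [logDeriv_apply, logDeriv_apply, heq.deriv_eq, heq.eq_of_nhds]
  rw [hlog, logDeriv_mul (f := fun w ↦ (w - 1) / (w + 1)) s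
      (div_ne_zero hsub hadd) hL (by fun_prop (disch := exact hadd))
      (DirichletCharacter.differentiableAt_LFunction 1 s (.inl hs₁)),
    logDeriv_div (f := fun w ↦ w - 1) (g := fun w ↦ w + 1) s hsub hadd (by fun_prop)
      (by fun_prop)]
  simp only [logDeriv_apply, deriv_sub_const_fun, deriv_id'',
    show deriv (fun w : ℂ ↦ w + 1) s = 1 by simp]
  ring

/-- For a unit `a`, the meromorphic continuation of the Dirichlet series of `vonMangoldtError a`.
Its only possible poles in `0 < Re s` are the zeros of the functions `normalizedL χ`. -/
noncomputable def vonMangoldtErrorSeries (a : ZMod q) (s : ℂ) : ℂ :=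
  -(q.totient : ℂ)⁻¹ * (∑ χ : DirichletCharacter ℂ q, χ a⁻¹ * logDeriv (normalizedL χ) s +
    (1 / (s + 1) + zetaRegular s))

lemma LSeries_vonMangoldtError {a : ZMod q} (ha : IsUnit a) {s : ℂ} (hs : 1 < s.re) :
    LSeries (fun n ↦ (vonMangoldtError a n : ℂ)) s = vonMangoldtErrorSeries a s := by
  classical
  have hs₁ : s ≠ 1 := by rintro rfl; simp at hs
  have hlog (χ : DirichletCharacter ℂ q) : deriv χ.LFunction s / χ.LFunction s =
      logDeriv (normalizedL χ) s + if χ = 1 then 1 / (s + 1) - 1 / (s - 1) else 0 := by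
    split_ifs with hχ
    · rw [hχ, deriv_div_LFunction_one hs]
    · rw [normalizedL_of_ne_one hχ, logDeriv_apply, add_zero]
  have hone : (1 : DirichletCharacter ℂ q) a⁻¹ = 1 := by
    obtain ⟨u, rfl⟩ := ha
    rw [ZMod.inv_coe_unit]
    exact MulChar.one_apply u⁻¹.isUnit
  rw [ofReal_vonMangoldtError, LSeries_sub (LSeriesSummable_residueClass a hs)
      ((LSeriesSummable_one_iff.2 hs).smul _), LSeries_smul, LSeries_one_eq_riemannZeta hs,
    ArithmeticFunction.vonMangoldt.LSeries_residueClass_eq ha hs]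
  simp_rw [hlog, mul_add, sum_add_distrib, mul_ite, mul_zero]
  rw [sum_ite_eq' univ (1 : DirichletCharacter ℂ q), if_pos (mem_univ _), hone,
    vonMangoldtErrorSeries, zetaRegular_of_ne_one hs₁]
  ring

end

lemma norm_sum_dirichletCharacter_mul_le {q : ℕ} [NeZero q] (a : ZMod q)
    {f : DirichletCharacter ℂ q → ℂ} {M : ℝ} (hf : ∀ χ, ‖f χ‖ ≤ M) :
    ‖∑ χ, χ a * f χ‖ ≤ q.totient * M :=
  calc ‖∑ χ, χ a * f χ‖ ≤ ∑ _χ : DirichletCharacter ℂ q, M :=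
        norm_sum_le_of_le _ fun χ _ ↦ by
          rw [norm_mul]
          exact (mul_le_of_le_one_left (norm_nonneg _) (χ.norm_le_one a)).trans (hf χ)
    _ = q.totient * M := by
        rw [sum_const, nsmul_eq_mul, card_univ, ← Nat.card_eq_fintype_card,
          DirichletCharacter.card_eq_totient_of_hasEnoughRootsOfUnity ℂ q]

lemma exists_norm_one_div_add_zetaRegular_le {ε : ℝ} (hε : 0 < ε) (hε' : ε ≤ 1 / 2) :
    ∃ C : ℝ, 0 < C ∧ ∀ (q : ℕ) [NeZero q] (s : ℂ), 1 < s.re →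
      ∀ z ∈ Metric.closedBall s (ε / 2),
        ‖1 / (z + 1) + zetaRegular z‖ ≤ C * analyticConductor q s.im ^ (2 * ε) := by
  obtain ⟨B, hB, hzeta⟩ := exists_norm_zetaRegular_le hε hε'
  refine ⟨1 + 2 * B, by positivity, fun q _ s hs z hz ↦ ?_⟩
  have hre := sub_le_re_of_mem_closedBall hz
  have hone : 1 ≤ analyticConductor q s.im ^ (2 * ε) :=
    Real.one_le_rpow (one_le_analyticConductor q s.im) (by linarith)
  have hpole : ‖1 / (z + 1)‖ ≤ 1 := by
    have hnorm := re_le_norm (z + 1)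
    rw [add_re, one_re] at hnorm
    rw [norm_div, norm_one]
    exact div_le_one_of_le₀ (by linarith) (norm_nonneg _)
  have hconductor : analyticConductor 1 z.im ^ (2 * ε) ≤
      2 * analyticConductor q s.im ^ (2 * ε) :=
    calc analyticConductor 1 z.im ^ (2 * ε) ≤ 2 * analyticConductor 1 s.im ^ (2 * ε) :=
          analyticConductor_rpow_le_two_mul
            (by linarith [abs_im_le_of_mem_closedBall hz, abs_nonneg s.im]) (by linarith)
            (by linarith)
      _ ≤ 2 * analyticConductor q s.im ^ (2 * ε) := by
          gcongr
          · exact (analyticConductor_pos 1 s.im).le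
          · exact analyticConductor_one_le q s.im
  calc ‖1 / (z + 1) + zetaRegular z‖ ≤ ‖1 / (z + 1)‖ + ‖zetaRegular z‖ := norm_add_le _ _
    _ ≤ analyticConductor q s.im ^ (2 * ε) +
          B * (2 * analyticConductor q s.im ^ (2 * ε)) :=
        add_le_add (hpole.trans hone)
          ((hzeta z (by linarith)).trans (mul_le_mul_of_nonneg_left hconductor hB.le))
    _ = (1 + 2 * B) * analyticConductor q s.im ^ (2 * ε) := by ring

lemma exists_norm_vonMangoldtErrorSeries_le {ε : ℝ} (hε : 0 < ε) (hε' : ε ≤ 1 / 2) :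
    ∃ κ C : ℝ, 0 < κ ∧ 0 < C ∧ ∀ (q : ℕ) [NeZero q] (a : ZMod q) (s : ℂ), 1 < s.re → s.re ≤ 2 →
      ∀ z ∈ Metric.closedBall s (κ * analyticConductor q s.im ^ (-(3 * ε))),
        DifferentiableAt ℂ (vonMangoldtErrorSeries a) z ∧
          ‖vonMangoldtErrorSeries a z‖ ≤ C * analyticConductor q s.im ^ (3 * ε) := by
  obtain ⟨κ, C, hκ, hκε, hC, hlog⟩ := exists_norm_logDeriv_normalizedL_le hε hε'
  obtain ⟨B, hB, hzeta⟩ := exists_norm_one_div_add_zetaRegular_le hε hε'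
  refine ⟨κ, C + B, hκ, by positivity, fun q _ a s hs hs₂ z hz ↦ ?_⟩
  have hlog (χ : DirichletCharacter ℂ q) := hlog q χ s hs hs₂ z hz
  set N := analyticConductor q s.im
  have hN : 1 ≤ N := one_le_analyticConductor q s.im
  have hpow : N ^ (-(3 * ε)) ≤ 1 := Real.rpow_le_one_of_one_le_of_nonpos hN (by linarith)
  have hz' := Metric.closedBall_subset_closedBall
    ((mul_le_of_le_one_right hκ.le hpow).trans hκε) hz
  have hadd : z + 1 ≠ 0 :=
    add_one_ne_zero_of_re_pos (by linarith [sub_le_re_of_mem_closedBall hz'])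
  refine ⟨((DifferentiableAt.fun_sum fun χ _ ↦ (hlog χ).1.const_mul _).add
    (DifferentiableAt.add (by fun_prop (disch := exact hadd))
      differentiable_zetaRegular.differentiableAt)).const_mul _, ?_⟩
  have hφ : (1 : ℝ) ≤ q.totient := by exact_mod_cast Nat.totient_pos.2 (NeZero.pos q)
  have hzeta' : ‖1 / (z + 1) + zetaRegular z‖ ≤ q.totient * (B * N ^ (3 * ε)) :=
    calc ‖1 / (z + 1) + zetaRegular z‖ ≤ B * N ^ (2 * ε) := hzeta q s hs z hz'
      _ ≤ B * N ^ (3 * ε) := by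
          gcongr
          norm_num
      _ ≤ q.totient * (B * N ^ (3 * ε)) := le_mul_of_one_le_left (by positivity) hφ
  calc ‖vonMangoldtErrorSeries a z‖
      ≤ (q.totient : ℝ)⁻¹ *
          (q.totient * (C * N ^ (3 * ε)) + q.totient * (B * N ^ (3 * ε))) := by
        rw [vonMangoldtErrorSeries, norm_mul, norm_neg, norm_inv, norm_natCast]
        gcongr
        exact (norm_add_le _ _).trans
          (add_le_add (norm_sum_dirichletCharacter_mul_le _ fun χ ↦ (hlog χ).2) hzeta')
    _ = (C + B) * N ^ (3 * ε) := by field_simp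

lemma iterate_logMul_ofReal (f : ℕ → ℝ) (k : ℕ) : LSeries.logMul^[k] (fun n ↦ (f n : ℂ)) =
    fun n : ℕ ↦ ((Real.log n ^ k * f n : ℝ) : ℂ) := by
  induction k with
  | zero => simp
  | succ k ih =>
    rw [Function.iterate_succ', Function.comp_apply, ih]
    ext n
    rw [LSeries.logMul, ← natCast_log, ← ofReal_mul, pow_succ', mul_assoc]

lemma abscissaOfAbsConv_log_pow_mul_vonMangoldtError_le_one {q : ℕ} (a : ZMod q) (k : ℕ) :
    LSeries.abscissaOfAbsConv (fun n : ℕ ↦ ((Real.log n ^ k * vonMangoldtError a n : ℝ) : ℂ)) ≤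
      1 := by
  rw [← iterate_logMul_ofReal, LSeries.absicssaOfAbsConv_logPowMul]
  exact abscissaOfAbsConv_vonMangoldtError_le_one a

/-- Up to sign the series is a `k`-th derivative, which Cauchy's estimate bounds. -/
theorem exists_norm_LSeries_log_pow_mul_vonMangoldtError_le (k : ℕ) {δ : ℝ} (hδ : 0 < δ) :
    ∃ C : ℝ, 0 < C ∧ ∀ (q : ℕ) [NeZero q] (a : ZMod q) (s : ℂ), IsUnit a → 1 < s.re → s.re ≤ 2 →
      ‖LSeries (fun n : ℕ ↦ ((Real.log n ^ k * vonMangoldtError a n : ℝ) : ℂ)) s‖ ≤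
        C * analyticConductor q s.im ^ δ := by
  obtain ⟨ε, hε, hε', hεδ⟩ : ∃ ε : ℝ, 0 < ε ∧ ε ≤ 1 / 2 ∧ 3 * ε * (k + 1) ≤ δ :=
    ⟨min (1 / 2) (δ / (3 * (k + 1))), by positivity, min_le_left _ _, by
      rw [mul_right_comm, ← le_div_iff₀' (by positivity)]; exact min_le_right _ _⟩
  obtain ⟨κ, C, hκ, hC, hbound⟩ := exists_norm_vonMangoldtErrorSeries_le hε hε'
  refine ⟨k.factorial * C / κ ^ k, by positivity, fun q _ a s ha hs hs₂ ↦ ?_⟩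
  have hbound := hbound q a s hs hs₂
  have hN := analyticConductor_pos q s.im
  have hN₁ := one_le_analyticConductor q s.im
  have heq : LSeries (fun n ↦ (vonMangoldtError a n : ℂ)) =ᶠ[𝓝 s] vonMangoldtErrorSeries a := by
    filter_upwards [(isOpen_lt continuous_const continuous_re).mem_nhds hs] with w hw
    exact LSeries_vonMangoldtError ha hw
  have hderiv := LSeries_iteratedDeriv k
    ((abscissaOfAbsConv_vonMangoldtError_le_one a).trans_lt (by exact_mod_cast hs))
  rw [iterate_logMul_ofReal, heq.iteratedDeriv_eq] at hderiv
  set N := analyticConductor q s.im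
  have hdiff : DifferentiableOn ℂ (vonMangoldtErrorSeries a)
      (Metric.closedBall s (κ * N ^ (-(3 * ε)))) :=
    fun z hz ↦ (hbound z hz).1.differentiableWithinAt
  have hcauchy := norm_iteratedDeriv_le_of_forall_mem_sphere_norm_le k (by positivity)
    (hdiff.diffContOnCl_ball subset_rfl)
    fun z hz ↦ (hbound z (Metric.sphere_subset_closedBall hz)).2
  rw [hderiv, norm_mul, norm_pow, norm_neg, norm_one, one_pow, one_mul] at hcauchy
  calc _ ≤ k.factorial * (C * N ^ (3 * ε)) / (κ * N ^ (-(3 * ε))) ^ k := hcauchy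
    _ = k.factorial * C / κ ^ k * N ^ (3 * ε * (k + 1)) := by
        rw [mul_pow, ← Real.rpow_mul_natCast hN.le, mul_add, mul_one, Real.rpow_add hN,
          neg_mul, Real.rpow_neg hN.le]
        field_simp
    _ ≤ k.factorial * C / κ ^ k * N ^ δ := by gcongr

/-! ### A smoothed Perron formula -/

/-- The Mellin transform `s ↦ ∫₀¹ (1 - u) u ^ (s - 1) du` of the tent `u ↦ max (1 - u) 0`, in the
half-plane `0 < Re s`. -/
noncomputable def tentMellin (s : ℂ) : ℂ := 1 / (s * (s + 1))

lemma hasMellin_max_one_sub {s : ℂ} (hs : 0 < s.re) :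
    HasMellin (fun u : ℝ ↦ ((max (1 - u) 0 : ℝ) : ℂ)) s (tentMellin s) := by
  have hone := hasMellin_one_Ioc hs
  have hid := hasMellin_cpow_Ioc 1 (s := s) (by simpa using hs.trans (lt_add_one s.re))
  have hsub := hasMellin_sub hone.1 hid.1
  have hs₀ : s ≠ 0 := fun h ↦ by simp [h] at hs
  have hs₁ := add_one_ne_zero_of_re_pos hs
  have htent : ∀ u ∈ Set.Ioi (0 : ℝ), Set.indicator (Set.Ioc 0 1) (fun _ ↦ (1 : ℂ)) u -
      Set.indicator (Set.Ioc 0 1) (fun t : ℝ ↦ (t : ℂ) ^ (1 : ℂ)) u =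
        ((max (1 - u) 0 : ℝ) : ℂ) := by
    intro u hu
    by_cases hu₁ : u ≤ 1
    · have hmem : u ∈ Set.Ioc (0 : ℝ) 1 := ⟨hu, hu₁⟩
      rw [Set.indicator_of_mem hmem, Set.indicator_of_mem hmem, max_eq_left (by linarith), cpow_one]
      push_cast
      ring
    · have hmem : u ∉ Set.Ioc (0 : ℝ) 1 := fun h ↦ hu₁ h.2
      rw [Set.indicator_of_notMem hmem, Set.indicator_of_notMem hmem, max_eq_right (by linarith),
        sub_zero, ofReal_zero]
  have hcongr : ∀ u ∈ Set.Ioi (0 : ℝ), (u : ℂ) ^ (s - 1) •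
      (Set.indicator (Set.Ioc 0 1) (fun _ ↦ (1 : ℂ)) u -
        Set.indicator (Set.Ioc 0 1) (fun t : ℝ ↦ (t : ℂ) ^ (1 : ℂ)) u) =
      (u : ℂ) ^ (s - 1) • ((max (1 - u) 0 : ℝ) : ℂ) :=
    fun u hu ↦ by rw [htent u hu]
  refine ⟨hsub.1.congr_fun hcongr measurableSet_Ioi,
    (setIntegral_congr_fun measurableSet_Ioi hcongr).symm.trans (hsub.2.trans ?_)⟩
  rw [hone.2, hid.2, tentMellin]
  field_simp
  ring

section

variable {c : ℝ} (hc : 1 ≤ c)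

include hc

lemma re_add_mul_I_pos (y : ℝ) : 0 < ((c : ℂ) + y * I).re := by
  simpa using zero_lt_one.trans_le hc

lemma norm_tentMellin_le (y : ℝ) :
    ‖tentMellin ((c : ℂ) + y * I)‖ ≤ 2 * (1 + ‖y‖) ^ (-2 : ℝ) := by
  have hlower : 1 + y ^ 2 ≤ ‖((c : ℂ) + y * I) * ((c : ℂ) + y * I + 1)‖ := by
    have hs : ‖(c : ℂ) + y * I‖ ^ 2 = c ^ 2 + y ^ 2 := by
      rw [Complex.sq_norm, normSq_add_mul_I]
    have hs₁ : ‖(c : ℂ) + y * I + 1‖ ^ 2 = (c + 1) ^ 2 + y ^ 2 := by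
      rw [show (c : ℂ) + y * I + 1 = ((c + 1 : ℝ) : ℂ) + y * I by push_cast; ring,
        Complex.sq_norm, normSq_add_mul_I]
    refine le_of_pow_le_pow_left₀ two_ne_zero (norm_nonneg _) ?_
    rw [norm_mul, mul_pow, hs, hs₁]
    nlinarith [sq_nonneg y, mul_nonneg (sq_nonneg y) (sq_nonneg y)]
  rw [tentMellin, norm_div, norm_one, Real.rpow_neg (by positivity), ← div_eq_mul_inv,
    Real.norm_eq_abs, div_le_div_iff₀ (by nlinarith [sq_nonneg y]) (by positivity), Real.rpow_two,
    one_mul]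
  nlinarith [sq_nonneg (1 - |y|), sq_abs y]

lemma continuous_tentMellin : Continuous fun y : ℝ ↦ tentMellin ((c : ℂ) + y * I) := by
  refine Continuous.div continuous_const (by fun_prop) fun y ↦ ?_
  have hre := re_add_mul_I_pos hc y
  exact mul_ne_zero (fun h ↦ by simp [h] at hre) (add_one_ne_zero_of_re_pos hre)

lemma integrable_tentMellin : Integrable fun y : ℝ ↦ tentMellin ((c : ℂ) + y * I) :=
  ((integrable_one_add_norm (by simp)).const_mul 2).mono'
    (continuous_tentMellin hc).aestronglyMeasurable (.of_forall (norm_tentMellin_le hc))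

lemma integral_cpow_neg_mul_tentMellin {u : ℝ} (hu : 0 < u) :
    ∫ y : ℝ, (u : ℂ) ^ (-((c : ℂ) + y * I)) * tentMellin ((c : ℂ) + y * I) =
      2 * Real.pi * ((max (1 - u) 0 : ℝ) : ℂ) := by
  have hmellin (y : ℝ) := (hasMellin_max_one_sub (re_add_mul_I_pos hc y)).2
  have hre : 0 < (c : ℂ).re := by simpa using zero_lt_one.trans_le hc
  have hvert : VerticalIntegrable (mellin fun u : ℝ ↦ ((max (1 - u) 0 : ℝ) : ℂ)) c := by
    simpa only [VerticalIntegrable, hmellin] using integrable_tentMellin hc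
  have hinv := mellinInv_mellin_eq c (fun u : ℝ ↦ ((max (1 - u) 0 : ℝ) : ℂ)) hu
    (hasMellin_max_one_sub hre).1 hvert (by fun_prop)
  simp_rw [mellinInv, hmellin, smul_eq_mul, real_smul] at hinv
  have hpi : 2 * (Real.pi : ℂ) * ((1 / (2 * Real.pi) : ℝ) : ℂ) = 1 := by
    exact_mod_cast mul_one_div_cancel Real.two_pi_pos.ne'
  rw [← hinv, ← mul_assoc, hpi, one_mul]

end

section

variable {b : ℕ → ℂ} {c x : ℝ}

lemma integral_term_mul_tentMellin (hc : 1 ≤ c) (hx : 0 < x) {n : ℕ} (hn : n ≠ 0) :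
    ∫ y : ℝ, LSeries.term b ((c : ℂ) + y * I) n *
        ((x : ℂ) ^ ((c : ℂ) + y * I) * tentMellin ((c : ℂ) + y * I)) =
      2 * Real.pi * (b n * ((max (1 - n / x) 0 : ℝ) : ℂ)) := by
  have hn₀ : (0 : ℝ) < n := by exact_mod_cast Nat.pos_of_ne_zero hn
  have hcpow (s : ℂ) : ((n / x : ℝ) : ℂ) ^ (-s) = (x : ℂ) ^ s / (n : ℂ) ^ s := by
    rw [ofReal_div, div_eq_mul_inv, ← ofReal_inv, mul_cpow_ofReal_nonneg hn₀.le (by positivity),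
      cpow_neg, cpow_neg, ofReal_inv, inv_cpow, inv_inv, ofReal_natCast]
    · ring
    · rw [arg_ofReal_of_nonneg hx.le]
      exact Real.pi_pos.ne
  have hterm (y : ℝ) : LSeries.term b ((c : ℂ) + y * I) n *
      ((x : ℂ) ^ ((c : ℂ) + y * I) * tentMellin ((c : ℂ) + y * I)) =
      b n * (((n / x : ℝ) : ℂ) ^ (-((c : ℂ) + y * I)) * tentMellin ((c : ℂ) + y * I)) := by
    rw [LSeries.term_of_ne_zero hn, hcpow]
    ring
  simp_rw [hterm]
  rw [integral_const_mul, integral_cpow_neg_mul_tentMellin hc (by positivity)]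
  ring

lemma norm_term_mul_tentMellin (hx : 0 < x) (n : ℕ) (y : ℝ) :
    ‖LSeries.term b ((c : ℂ) + y * I) n *
        ((x : ℂ) ^ ((c : ℂ) + y * I) * tentMellin ((c : ℂ) + y * I))‖ =
      ‖LSeries.term b c n‖ * (x ^ c * ‖tentMellin ((c : ℂ) + y * I)‖) := by
  rw [norm_mul, norm_mul, norm_cpow_eq_rpow_re_of_pos hx, LSeries.norm_term_eq,
    LSeries.norm_term_eq]
  simp

lemma integrable_term_mul_tentMellin (hc : 1 ≤ c) (hx : 0 < x) (n : ℕ) :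
    Integrable fun y : ℝ ↦ LSeries.term b ((c : ℂ) + y * I) n *
      ((x : ℂ) ^ ((c : ℂ) + y * I) * tentMellin ((c : ℂ) + y * I)) := by
  refine (((integrable_tentMellin hc).norm.const_mul (x ^ c)).const_mul
    ‖LSeries.term b c n‖).mono' ?_ (.of_forall fun y ↦ (norm_term_mul_tentMellin hx n y).le)
  rcases eq_or_ne n 0 with rfl | hn
  · simp only [LSeries.term_zero, zero_mul]
    exact aestronglyMeasurable_const
  · simp only [LSeries.term_of_ne_zero hn]
    have hn₀ : (n : ℂ) ≠ 0 := Nat.cast_ne_zero.2 hn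
    have hx₀ : (x : ℂ) ≠ 0 := ofReal_ne_zero.2 hx.ne'
    have hpow {w : ℂ} (hw : w ≠ 0) : Continuous fun y : ℝ ↦ w ^ ((c : ℂ) + y * I) :=
      Continuous.const_cpow (by fun_prop) (.inl hw)
    exact ((continuous_const.div (hpow hn₀) fun y ↦ by simp [cpow_eq_zero_iff, hn₀]).mul
      ((hpow hx₀).mul (continuous_tentMellin hc))).aestronglyMeasurable

theorem integral_LSeries_mul_tentMellin (hc : 1 ≤ c) (hx : 0 < x) (hb : LSeriesSummable b c) :
    ∫ y : ℝ, LSeries b ((c : ℂ) + y * I) *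
        ((x : ℂ) ^ ((c : ℂ) + y * I) * tentMellin ((c : ℂ) + y * I)) =
      2 * Real.pi * ∑ n ∈ Icc 1 ⌊x⌋₊, b n * ((1 - n / x : ℝ) : ℂ) := by
  have hsummable : Summable fun n ↦ ∫ y : ℝ, ‖LSeries.term b ((c : ℂ) + y * I) n *
      ((x : ℂ) ^ ((c : ℂ) + y * I) * tentMellin ((c : ℂ) + y * I))‖ := by
    simp_rw [norm_term_mul_tentMellin hx, integral_const_mul]
    exact hb.norm.mul_right _
  have htsum := (hasSum_integral_of_summable_integral_norm
    (integrable_term_mul_tentMellin hc hx) hsummable).tsum_eq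
  simp_rw [tsum_mul_right] at htsum
  rw [mul_sum]
  refine htsum.symm.trans ((tsum_eq_sum fun n hn ↦ ?_).trans (sum_congr rfl fun n hn ↦ ?_))
  · rcases eq_or_ne n 0 with rfl | hn₀
    · simp
    · have hlt : ⌊x⌋₊ < n := by
        by_contra hle
        exact hn (mem_Icc.2 ⟨Nat.one_le_iff_ne_zero.2 hn₀, not_lt.1 hle⟩)
      have hdiv : 1 < n / x := (one_lt_div hx).2 (Nat.lt_of_floor_lt hlt)
      rw [integral_term_mul_tentMellin hc hx hn₀, max_eq_right (by linarith), ofReal_zero,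
        mul_zero, mul_zero]
  · obtain ⟨hn₁, hnx⟩ := mem_Icc.1 hn
    have hdiv : n / x ≤ 1 := (div_le_one hx).2 ((Nat.le_floor_iff hx.le).1 hnx)
    rw [integral_term_mul_tentMellin hc hx (by omega), max_eq_left (by linarith)]

end

theorem exists_norm_sum_mul_one_sub_div_le {δ : ℝ} (hδ : 0 ≤ δ) (hδ' : δ < 1) :
    ∃ C : ℝ, 0 < C ∧ ∀ (b : ℕ → ℂ) (c x K : ℝ), 1 ≤ c → 0 < x → LSeriesSummable b c →
      (∀ y : ℝ, ‖LSeries b ((c : ℂ) + y * I)‖ ≤ K * (|y| + 2) ^ δ) →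
      ‖∑ n ∈ Icc 1 ⌊x⌋₊, b n * ((1 - n / x : ℝ) : ℂ)‖ ≤ C * K * x ^ c := by
  have hint : Integrable fun y : ℝ ↦ 4 * (1 + ‖y‖) ^ (-(2 - δ)) :=
    (integrable_one_add_norm (by simp; linarith)).const_mul 4
  have hnonneg : 0 ≤ ∫ y : ℝ, 4 * (1 + ‖y‖) ^ (-(2 - δ)) :=
    integral_nonneg fun y ↦ by positivity
  refine ⟨(∫ y : ℝ, 4 * (1 + ‖y‖) ^ (-(2 - δ))) + 1, by linarith, fun b c x K hc hx hb hL ↦ ?_⟩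
  have hK : 0 ≤ K :=
    nonneg_of_mul_nonneg_left ((norm_nonneg _).trans (hL 0)) (by positivity)
  have hpow (y : ℝ) : (|y| + 2) ^ δ ≤ 2 * (1 + ‖y‖) ^ δ :=
    calc (|y| + 2) ^ δ ≤ (2 * (1 + ‖y‖)) ^ δ :=
          Real.rpow_le_rpow (by positivity) (by rw [Real.norm_eq_abs]; linarith [abs_nonneg y]) hδ
      _ = 2 ^ δ * (1 + ‖y‖) ^ δ := Real.mul_rpow (by norm_num) (by positivity)
      _ ≤ 2 * (1 + ‖y‖) ^ δ := mul_le_mul_of_nonneg_right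
          (by simpa using Real.rpow_le_rpow_of_exponent_le one_le_two hδ'.le) (by positivity)
  have hbound (y : ℝ) : ‖LSeries b ((c : ℂ) + y * I) *
      ((x : ℂ) ^ ((c : ℂ) + y * I) * tentMellin ((c : ℂ) + y * I))‖ ≤
      K * x ^ c * (4 * (1 + ‖y‖) ^ (-(2 - δ))) := by
    have hre : ((c : ℂ) + y * I).re = c := by simp
    rw [norm_mul, norm_mul, norm_cpow_eq_rpow_re_of_pos hx, hre]
    calc ‖LSeries b ((c : ℂ) + y * I)‖ * (x ^ c * ‖tentMellin ((c : ℂ) + y * I)‖)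
        ≤ K * (2 * (1 + ‖y‖) ^ δ) * (x ^ c * (2 * (1 + ‖y‖) ^ (-2 : ℝ))) := by
          gcongr
          · exact (hL y).trans (mul_le_mul_of_nonneg_left (hpow y) hK)
          · exact norm_tentMellin_le hc y
      _ = K * x ^ c * (4 * ((1 + ‖y‖) ^ δ * (1 + ‖y‖) ^ (-2 : ℝ))) := by ring
      _ = K * x ^ c * (4 * (1 + ‖y‖) ^ (-(2 - δ))) := by
          rw [← Real.rpow_add (by positivity)]
          ring_nf
  have htotal := norm_integral_le_of_norm_le (hint.const_mul (K * x ^ c)) (.of_forall hbound)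
  rw [integral_LSeries_mul_tentMellin hc hx hb, integral_const_mul, norm_mul] at htotal
  have hpi : 1 ≤ ‖(2 * Real.pi : ℂ)‖ := by
    rw [norm_mul, norm_ofNat, norm_real, Real.norm_of_nonneg Real.pi_pos.le]
    linarith [Real.pi_gt_three]
  have hKx : 0 ≤ K * x ^ c := by positivity
  nlinarith [norm_nonneg (∑ n ∈ Icc 1 ⌊x⌋₊, b n * ((1 - n / x : ℝ) : ℂ))]

/-! ### Riesz sums and their unsmoothing -/

/-- The Riesz sum `∑ n ≤ y, f n * (y - n)`, that is, the integral over `[0, y]` of the summatory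
function of `f`; differencing it in `y` recovers sums of `f` without a smooth weight. -/
noncomputable def rieszSum (f : ℕ → ℝ) (y : ℝ) : ℝ := ∑ n ∈ Icc 1 ⌊y⌋₊, f n * (y - n)

section

variable {f g : ℕ → ℝ} {y z : ℝ}

lemma rieszSum_eq_sum_max (f : ℕ → ℝ) (hy : 0 ≤ y) {N : ℕ} (hN : ⌊y⌋₊ ≤ N) :
    rieszSum f y = ∑ n ∈ Icc 1 N, f n * max (y - n) 0 := by
  rw [rieszSum, ← sum_subset (Icc_subset_Icc_right hN)]
  · refine sum_congr rfl fun n hn ↦ ?_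
    have hny := (Nat.le_floor_iff hy).1 (mem_Icc.1 hn).2
    rw [max_eq_left (by linarith)]
  · intro n hn hn'
    have hlt : ⌊y⌋₊ < n := by
      by_contra hle
      exact hn' (mem_Icc.2 ⟨(mem_Icc.1 hn).1, not_lt.1 hle⟩)
    rw [max_eq_right (by linarith [Nat.lt_of_floor_lt hlt]), mul_zero]

lemma ofReal_rieszSum (f : ℕ → ℝ) (hy : 0 < y) : ((rieszSum f y : ℝ) : ℂ) =
    y * ∑ n ∈ Icc 1 ⌊y⌋₊, (f n : ℂ) * ((1 - n / y : ℝ) : ℂ) := by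
  simp only [rieszSum, mul_sum, ofReal_sum, ← ofReal_mul]
  refine sum_congr rfl fun n _ ↦ congrArg _ ?_
  field_simp

lemma mul_sum_le_rieszSum_sub (hf : ∀ n, 0 ≤ f n) (hy : 0 ≤ y) (hyz : y ≤ z) :
    (z - y) * ∑ n ∈ Icc 1 ⌊y⌋₊, f n ≤ rieszSum f z - rieszSum f y := by
  have hfloor : ⌊y⌋₊ ≤ ⌊z⌋₊ := Nat.floor_mono hyz
  rw [rieszSum_eq_sum_max f (hy.trans hyz) le_rfl, rieszSum_eq_sum_max f hy hfloor,
    ← sum_sub_distrib, mul_sum]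
  refine (sum_le_sum fun n hn ↦ ?_).trans
    (sum_le_sum_of_subset_of_nonneg (Icc_subset_Icc_right hfloor) fun n _ _ ↦ ?_)
  · have hny := (Nat.le_floor_iff hy).1 (mem_Icc.1 hn).2
    rw [max_eq_left (by linarith), max_eq_left (by linarith)]
    linarith
  · rw [← mul_sub]
    exact mul_nonneg (hf n) (sub_nonneg.2 (max_le_max (by linarith) le_rfl))

lemma rieszSum_sub_le_mul_sum (hf : ∀ n, 0 ≤ f n) (hy : 0 ≤ y) (hyz : y ≤ z) :
    rieszSum f z - rieszSum f y ≤ (z - y) * ∑ n ∈ Icc 1 ⌊z⌋₊, f n := by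
  rw [rieszSum_eq_sum_max f (hy.trans hyz) le_rfl, rieszSum_eq_sum_max f hy (Nat.floor_mono hyz),
    ← sum_sub_distrib, mul_sum]
  refine sum_le_sum fun n hn ↦ ?_
  have hnz := (Nat.le_floor_iff (hy.trans hyz)).1 (mem_Icc.1 hn).2
  rw [← mul_sub, mul_comm, max_eq_left (by linarith : (0 : ℝ) ≤ z - n)]
  exact mul_le_mul_of_nonneg_right (by linarith [le_max_left (y - n) 0]) (hf n)

lemma sum_Icc_floor_le_add {G : ℝ} (hy : 0 ≤ y) (hyz : y ≤ z) (hG : 0 ≤ G)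
    (hg : ∀ n : ℕ, 1 ≤ n → n ≤ z → g n ≤ G) :
    ∑ n ∈ Icc 1 ⌊z⌋₊, g n ≤ ∑ n ∈ Icc 1 ⌊y⌋₊, g n + (z - y + 1) * G := by
  have hfloor : ⌊y⌋₊ ≤ ⌊z⌋₊ := Nat.floor_mono hyz
  have hsdiff : Icc 1 ⌊z⌋₊ \ Icc 1 ⌊y⌋₊ = Ioc ⌊y⌋₊ ⌊z⌋₊ := by
    ext n
    rw [Finset.mem_sdiff, mem_Icc, mem_Icc, mem_Ioc]
    omega
  rw [← sum_sdiff (Icc_subset_Icc_right hfloor : Icc 1 ⌊y⌋₊ ⊆ Icc 1 ⌊z⌋₊), add_comm, hsdiff]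
  gcongr
  calc ∑ n ∈ Ioc ⌊y⌋₊ ⌊z⌋₊, g n
      ≤ ∑ _ ∈ Ioc ⌊y⌋₊ ⌊z⌋₊, G := by
        refine sum_le_sum fun n hn ↦ ?_
        obtain ⟨hyn, hnz⟩ := mem_Ioc.1 hn
        exact hg n (by omega) ((Nat.le_floor_iff (hy.trans hyz)).1 hnz)
    _ = ((⌊z⌋₊ : ℝ) - ⌊y⌋₊) * G := by
        rw [sum_const, Nat.card_Ioc, nsmul_eq_mul, Nat.cast_sub hfloor]
    _ ≤ (z - y + 1) * G := by
        gcongr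
        linarith [Nat.floor_le (hy.trans hyz), Nat.lt_floor_add_one y]

/-- As `f` is nonnegative, its sum up to `x` lies between the increments of its Riesz sum over
`[x - h, x]` and `[x, x + h]`, divided by `h`. -/
lemma abs_sum_sub_le_of_abs_rieszSum_sub_le {G R x h : ℝ} (hf : ∀ n, 0 ≤ f n) (hg : ∀ n, 0 ≤ g n)
    (hG : 0 ≤ G) (hh : 0 < h) (hhx : h ≤ x)
    (hR : ∀ y, 0 ≤ y → y ≤ 2 * x → |rieszSum f y - rieszSum g y| ≤ R)
    (hgG : ∀ n : ℕ, 1 ≤ n → n ≤ 2 * x → g n ≤ G) :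
    |∑ n ∈ Icc 1 ⌊x⌋₊, f n - ∑ n ∈ Icc 1 ⌊x⌋₊, g n| ≤ (h + 1) * G + 2 * R / h := by
  have hR₀ := abs_le.1 (hR x (by linarith) (by linarith))
  have hRLeft := abs_le.1 (hR (x - h) (by linarith) (by linarith))
  have hRRight := abs_le.1 (hR (x + h) (by linarith) (by linarith))
  have hx : 0 ≤ x := by linarith
  have hfRight := mul_sum_le_rieszSum_sub hf hx (le_add_of_nonneg_right hh.le)
  have hgRight := rieszSum_sub_le_mul_sum hg hx (le_add_of_nonneg_right hh.le)
  have hfLeft := rieszSum_sub_le_mul_sum hf (sub_nonneg.2 hhx) (sub_le_self x hh.le)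
  have hgLeft := mul_sum_le_rieszSum_sub hg (sub_nonneg.2 hhx) (sub_le_self x hh.le)
  have hshortRight := sum_Icc_floor_le_add hx (le_add_of_nonneg_right hh.le) hG
    fun n hn hnx ↦ hgG n hn (by linarith)
  have hshortLeft := sum_Icc_floor_le_add (sub_nonneg.2 hhx) (sub_le_self x hh.le) hG
    fun n hn hnx ↦ hgG n hn (by linarith)
  rw [add_sub_cancel_left] at hfRight hgRight hshortRight
  rw [sub_sub_cancel] at hfLeft hgLeft hshortLeft
  have hscaledRight := mul_le_mul_of_nonneg_left hshortRight hh.le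
  have hscaledLeft := mul_le_mul_of_nonneg_left hshortLeft hh.le
  have hRh : h * (2 * R / h) = 2 * R := mul_div_cancel₀ _ hh.ne'
  rw [abs_le]
  constructor <;> refine le_of_mul_le_mul_left ?_ hh <;> linarith

end

lemma abs_sum_Ioc_mul_le {c w : ℕ → ℝ} {V : ℝ} {M N : ℕ} (hMN : M < N)
    (hV : ∀ n, M < n → n ≤ N → |∑ k ∈ Ioc M n, c k| ≤ V)
    (hw : ∀ n, M < n → w (n + 1) ≤ w n) (hw₀ : ∀ n, M < n → 0 ≤ w n) :
    |∑ n ∈ Ioc M N, c n * w n| ≤ V * w (M + 1) := by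
  suffices hparts : |∑ n ∈ Ioc M N, c n * w n - (∑ n ∈ Ioc M N, c n) * w N| ≤
      V * (w (M + 1) - w N) by
    have hlast : |(∑ n ∈ Ioc M N, c n) * w N| ≤ V * w N := by
      rw [abs_mul, abs_of_nonneg (hw₀ N hMN)]
      exact mul_le_mul_of_nonneg_right (hV N hMN le_rfl) (hw₀ N hMN)
    have htri := abs_add_le (∑ n ∈ Ioc M N, c n * w n - (∑ n ∈ Ioc M N, c n) * w N)
      ((∑ n ∈ Ioc M N, c n) * w N)
    rw [sub_add_cancel] at htri
    linarith
  induction N, hMN using Nat.le_induction with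
  | base => simp
  | succ N hN ih =>
    have hprev := ih fun n hn hnN ↦ hV n hn (hnN.trans N.le_succ)
    have hstep : ∑ n ∈ Ioc M (N + 1), c n * w n - (∑ n ∈ Ioc M (N + 1), c n) * w (N + 1) =
        (∑ n ∈ Ioc M N, c n * w n - (∑ n ∈ Ioc M N, c n) * w N) +
          (∑ n ∈ Ioc M N, c n) * (w N - w (N + 1)) := by
      rw [sum_Ioc_succ_top (by omega), sum_Ioc_succ_top (by omega)]
      ring
    have hinc : |(∑ n ∈ Ioc M N, c n) * (w N - w (N + 1))| ≤ V * (w N - w (N + 1)) := by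
      rw [abs_mul, abs_of_nonneg (sub_nonneg.2 (hw N hN))]
      exact mul_le_mul_of_nonneg_right (hV N hN N.le_succ) (sub_nonneg.2 (hw N hN))
    rw [hstep]
    linarith [abs_add_le (∑ n ∈ Ioc M N, c n * w n - (∑ n ∈ Ioc M N, c n) * w N)
      ((∑ n ∈ Ioc M N, c n) * (w N - w (N + 1)))]

lemma log_pow_le_factorial_mul {x : ℝ} (m : ℕ) (hx : 1 ≤ x) :
    Real.log x ^ m ≤ m.factorial * x := by
  have h := Real.pow_div_factorial_le_exp (Real.log x) (Real.log_nonneg hx) m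
  rwa [Real.exp_log (by linarith), div_le_iff₀' (by positivity)] at h

lemma sqrt_mul_log_pow_le {x : ℝ} (m : ℕ) (hx : 1 ≤ x) :
    √x * Real.log x ^ m ≤ 2 ^ m * m.factorial * x := by
  have hlog : Real.log x = 2 * Real.log √x := by
    rw [Real.log_sqrt (by linarith)]
    ring
  calc √x * Real.log x ^ m = √x * (2 ^ m * Real.log √x ^ m) := by rw [hlog, mul_pow]
    _ ≤ √x * (2 ^ m * (m.factorial * √x)) := by
        gcongr
        exact log_pow_le_factorial_mul m (Real.one_le_sqrt.2 hx)
    _ = 2 ^ m * m.factorial * (√x * √x) := by ring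
    _ = 2 ^ m * m.factorial * x := by rw [Real.mul_self_sqrt (by linarith)]

lemma one_le_log_of_three_le {x : ℝ} (hx : 3 ≤ x) : 1 ≤ Real.log x := by
  rw [Real.le_log_iff_exp_le (by linarith)]
  linarith [Real.exp_one_lt_d9]

lemma rpow_one_add_one_div_log_le {y : ℝ} (hy : 0 ≤ y) :
    y ^ (1 + 1 / Real.log (y + 3)) ≤ Real.exp 1 * (y + 3) := by
  have hlog : 1 ≤ Real.log (y + 3) := one_le_log_of_three_le (by linarith)
  calc y ^ (1 + 1 / Real.log (y + 3)) ≤ (y + 3) ^ (1 + 1 / Real.log (y + 3)) :=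
        Real.rpow_le_rpow hy (by linarith) (by positivity)
    _ = Real.exp 1 * (y + 3) := by
        rw [Real.rpow_add (by linarith), Real.rpow_one, Real.rpow_def_of_pos (by linarith),
          mul_one_div_cancel (by linarith), mul_comm]

/-! ### Sums of the von Mangoldt error -/

open ArithmeticFunction (vonMangoldt vonMangoldt_le_log)

section

variable {q : ℕ} (a : ZMod q)

lemma abs_vonMangoldtError_le (n : ℕ) : |vonMangoldtError a n| ≤ Real.log n + 1 := by
  have hnonneg : 0 ≤ vonMangoldt.residueClass a n := vonMangoldt.residueClass_nonneg a n
  have hle : vonMangoldt.residueClass a n ≤ Real.log n :=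
    (vonMangoldt.residueClass_le a n).trans vonMangoldt_le_log
  have htot : (q.totient : ℝ)⁻¹ ≤ 1 := Nat.cast_inv_le_one _
  have htot₀ : 0 ≤ (q.totient : ℝ)⁻¹ := by positivity
  rw [vonMangoldtError, abs_le]
  constructor <;> linarith

lemma abs_vonMangoldtError_div_log_le {n : ℕ} (hn : 2 ≤ n) :
    |vonMangoldtError a n / Real.log n| ≤ 3 := by
  have hlog : Real.log 2 ≤ Real.log n := Real.log_le_log two_pos (by exact_mod_cast hn)
  have hpos : 0 < Real.log n := (Real.log_pos one_lt_two).trans_le hlog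
  rw [abs_div, abs_of_pos hpos, div_le_iff₀ hpos]
  linarith [abs_vonMangoldtError_le a n, Real.log_two_gt_d9]

end

theorem exists_abs_rieszSum_log_pow_mul_vonMangoldtError_le (k : ℕ) {δ : ℝ} (hδ : 0 < δ)
    (hδ' : δ < 1) :
    ∃ C : ℝ, 0 < C ∧ ∀ (q : ℕ) [NeZero q] (a : ZMod q) (y : ℝ), IsUnit a → 0 ≤ y →
      |rieszSum (fun n ↦ Real.log n ^ k * vonMangoldtError a n) y| ≤
        C * (q : ℝ) ^ δ * (y + 3) ^ 2 := by
  obtain ⟨K, hK, hperron⟩ := exists_norm_sum_mul_one_sub_div_le hδ.le hδ'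
  obtain ⟨C, hC, hseries⟩ := exists_norm_LSeries_log_pow_mul_vonMangoldtError_le k hδ
  refine ⟨K * C * Real.exp 1, by positivity, fun q _ a y ha hy ↦ ?_⟩
  rcases hy.eq_or_lt with rfl | hy
  · simp only [rieszSum, Nat.floor_zero, zero_lt_one, Icc_eq_empty_of_lt, sum_empty, abs_zero]
    positivity
  set L := Real.log (y + 3)
  have hL₁ : 1 ≤ L := one_le_log_of_three_le (by linarith)
  have hLinv : 0 < 1 / L := by positivity
  have hLinv' : 1 / L ≤ 1 := by rw [div_le_one (by linarith)]; exact hL₁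
  have hre (t : ℝ) : (((1 + 1 / L : ℝ) : ℂ) + t * I).re = 1 + 1 / L := by simp
  have him (t : ℝ) : (((1 + 1 / L : ℝ) : ℂ) + t * I).im = t := by simp
  have hsummable : LSeriesSummable
      (fun n : ℕ ↦ ((Real.log n ^ k * vonMangoldtError a n : ℝ) : ℂ)) ((1 + 1 / L : ℝ) : ℂ) := by
    refine LSeriesSummable_of_abscissaOfAbsConv_lt_re
      ((abscissaOfAbsConv_log_pow_mul_vonMangoldtError_le_one a k).trans_lt ?_)
    rw [ofReal_re]
    exact_mod_cast (by linarith : (1 : ℝ) < 1 + 1 / L)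
  have hsum := hperron _ (1 + 1 / L) y (C * (q : ℝ) ^ δ) (by linarith) hy hsummable fun t ↦ by
    have h := hseries q a (((1 + 1 / L : ℝ) : ℂ) + t * I) ha (by rw [hre]; linarith)
      (by rw [hre]; linarith)
    rwa [him, analyticConductor, Real.mul_rpow (by positivity) (by positivity), ← mul_assoc] at h
  rw [← Real.norm_eq_abs, ← norm_real, ofReal_rieszSum _ hy, norm_mul, norm_real,
    Real.norm_of_nonneg hy.le]
  calc y * _ ≤ y * (K * (C * (q : ℝ) ^ δ) * (Real.exp 1 * (y + 3))) := by
        gcongr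
        exact hsum.trans (by gcongr; exact rpow_one_add_one_div_log_le hy.le)
    _ ≤ (y + 3) * (K * (C * (q : ℝ) ^ δ) * (Real.exp 1 * (y + 3))) := by
        gcongr
        linarith
    _ = K * C * Real.exp 1 * (q : ℝ) ^ δ * (y + 3) ^ 2 := by ring

lemma rieszSum_sub (f g : ℕ → ℝ) (y : ℝ) :
    rieszSum f y - rieszSum g y = rieszSum (fun n ↦ f n - g n) y := by
  simp only [rieszSum, ← sum_sub_distrib, ← sub_mul]

lemma log_pow_le_two_mul_log_pow {x : ℝ} (hx : 2 ≤ x) {n : ℕ} (hn : 1 ≤ n) (hnx : n ≤ 2 * x)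
    (k : ℕ) : Real.log n ^ k ≤ (2 * Real.log x) ^ k := by
  have hn₁ : (1 : ℝ) ≤ n := by exact_mod_cast hn
  refine pow_le_pow_left₀ (Real.log_nonneg hn₁) ?_ k
  rw [← Real.log_rpow (by linarith), Real.rpow_two]
  exact Real.log_le_log (by linarith) (by nlinarith)

/-- The unsmoothing parameter `x / log x ^ m` is chosen so that, for the weight `log n ^ (2 * m)`,
the trivial bound on short intervals and the bound on Riesz sums both give `x * log x ^ m`. -/
theorem exists_abs_sum_log_pow_mul_vonMangoldtError_le (m : ℕ) {δ : ℝ} (hδ : 0 < δ)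
    (hδ' : δ < 1) :
    ∃ C : ℝ, 0 < C ∧ ∀ (q : ℕ) [NeZero q] (a : ZMod q) (x : ℝ), IsUnit a → 3 ≤ x →
      |∑ n ∈ Icc 1 ⌊x⌋₊, Real.log n ^ (2 * m) * vonMangoldtError a n| ≤
        C * (q : ℝ) ^ δ * (x * Real.log x ^ m) := by
  obtain ⟨C, hC, hriesz⟩ := exists_abs_rieszSum_log_pow_mul_vonMangoldtError_le (2 * m) hδ hδ'
  refine ⟨(1 + m.factorial) * 2 ^ (2 * m) + 18 * C, by positivity, fun q _ a x ha hx ↦ ?_⟩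
  have hq : 1 ≤ (q : ℝ) ^ δ := Real.one_le_rpow (by exact_mod_cast NeZero.one_le) hδ.le
  set L := Real.log x ^ m with hL
  have hL₁ : 1 ≤ L := one_le_pow₀ (one_le_log_of_three_le hx)
  have hLx : L ≤ m.factorial * x := log_pow_le_factorial_mul m (by linarith)
  have hsplit (n : ℕ) : Real.log n ^ (2 * m) * vonMangoldtError a n =
      Real.log n ^ (2 * m) * vonMangoldt.residueClass a n -
        Real.log n ^ (2 * m) * (q.totient : ℝ)⁻¹ := by
    rw [vonMangoldtError, mul_sub]
  have hweight (n : ℕ) : 0 ≤ Real.log n ^ (2 * m) := (even_two_mul m).pow_nonneg _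
  have hdensity (n : ℕ) (hn : 1 ≤ n) (hnx : n ≤ 2 * x) :
      Real.log n ^ (2 * m) * (q.totient : ℝ)⁻¹ ≤ 2 ^ (2 * m) * L ^ 2 :=
    calc Real.log n ^ (2 * m) * (q.totient : ℝ)⁻¹ ≤ (2 * Real.log x) ^ (2 * m) * 1 :=
          mul_le_mul (log_pow_le_two_mul_log_pow (by linarith) hn hnx _) (Nat.cast_inv_le_one _)
            (by positivity) ((even_two_mul m).pow_nonneg _)
      _ = 2 ^ (2 * m) * L ^ 2 := by rw [hL, mul_one, mul_pow, ← pow_mul, mul_comm m 2]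
  have hunsmooth := abs_sum_sub_le_of_abs_rieszSum_sub_le
    (R := C * (q : ℝ) ^ δ * (3 * x) ^ 2) (h := x / L)
    (fun n ↦ mul_nonneg (hweight n) (vonMangoldt.residueClass_nonneg a n))
    (fun n ↦ mul_nonneg (hweight n) (by positivity)) (by positivity) (by positivity)
    (div_le_self (by linarith) hL₁) (fun y hy hyx ↦ ?_) hdensity
  · simp only [hsplit, sum_sub_distrib]
    calc _ ≤ (x / L + 1) * (2 ^ (2 * m) * L ^ 2) +
          2 * (C * (q : ℝ) ^ δ * (3 * x) ^ 2) / (x / L) := hunsmooth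
      _ = 1 * (2 ^ (2 * m) * L * (x + L)) + 18 * C * (q : ℝ) ^ δ * (x * L) := by
          field_simp
          ring
      _ ≤ (q : ℝ) ^ δ * (2 ^ (2 * m) * L * (x + m.factorial * x)) +
          18 * C * (q : ℝ) ^ δ * (x * L) := by gcongr
      _ = ((1 + m.factorial) * 2 ^ (2 * m) + 18 * C) * (q : ℝ) ^ δ * (x * L) := by ring
  · simp only [rieszSum_sub, ← hsplit]
    refine (hriesz q a y ha hy).trans ?_
    gcongr
    linarith

lemma abs_sum_vonMangoldtError_div_log_le_sqrt {q : ℕ} (a : ZMod q) (x : ℝ) :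
    |∑ n ∈ Ioc 1 ⌊√x⌋₊, vonMangoldtError a n / Real.log n| ≤ 3 * √x :=
  calc |∑ n ∈ Ioc 1 ⌊√x⌋₊, vonMangoldtError a n / Real.log n|
      ≤ ∑ n ∈ Ioc 1 ⌊√x⌋₊, |vonMangoldtError a n / Real.log n| := abs_sum_le_sum_abs _ _
    _ ≤ ∑ _ ∈ Ioc 1 ⌊√x⌋₊, (3 : ℝ) :=
        sum_le_sum fun n hn ↦ abs_vonMangoldtError_div_log_le a (mem_Ioc.1 hn).1
    _ ≤ 3 * ⌊√x⌋₊ := by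
        rw [sum_const, Nat.card_Ioc, nsmul_eq_mul, mul_comm]
        gcongr
        omega
    _ ≤ 3 * √x := by
        gcongr
        exact Nat.floor_le (by positivity)

lemma abs_sum_Ioc_le_two_mul {f : ℕ → ℝ} {M n : ℕ} {V : ℝ} (hMn : M ≤ n)
    (hM : |∑ k ∈ Icc 1 M, f k| ≤ V) (hn : |∑ k ∈ Icc 1 n, f k| ≤ V) :
    |∑ k ∈ Ioc M n, f k| ≤ 2 * V := by
  have hsplit : ∑ k ∈ Icc 1 M, f k + ∑ k ∈ Ioc M n, f k = ∑ k ∈ Icc 1 n, f k :=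
    sum_Ioc_consecutive f M.zero_le hMn
  rw [abs_le] at hM hn ⊢
  constructor <;> linarith

lemma abs_sum_div_log_pow_le {f : ℕ → ℝ} {M N : ℕ} {V : ℝ} (hM : 1 ≤ M) (hMN : M < N)
    (hf : ∀ n, M < n → n ≤ N → |∑ k ∈ Ioc M n, f k| ≤ V) (k : ℕ) :
    |∑ n ∈ Ioc M N, f n / Real.log n ^ k| ≤ V / Real.log ((M + 1 : ℕ) : ℝ) ^ k := by
  have hlog (n : ℕ) (hn : M < n) : 0 < Real.log n :=
    Real.log_pos (by exact_mod_cast hM.trans_lt hn)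
  have hmono (n : ℕ) (hn : M < n) : Real.log n ≤ Real.log ((n + 1 : ℕ) : ℝ) :=
    Real.log_le_log (by exact_mod_cast (by omega : 0 < n)) (by push_cast; linarith)
  exact abs_sum_Ioc_mul_le (w := fun n ↦ (Real.log n ^ k)⁻¹) hMN hf
    (fun n hn ↦ inv_anti₀ (pow_pos (hlog n hn) k) (pow_le_pow_left₀ (hlog n hn).le (hmono n hn) k))
    fun n hn ↦ inv_nonneg.2 (pow_nonneg (hlog n hn).le k)

lemma abs_sum_div_log_le_of_abs_sum_log_pow_le {r : ℕ → ℝ} {m : ℕ} {x V : ℝ} (hx : 9 ≤ x)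
    (hV : ∀ n : ℕ, 3 ≤ n → n ≤ x → |∑ k ∈ Icc 1 n, Real.log k ^ m * r k| ≤ V) :
    |∑ n ∈ Ioc ⌊√x⌋₊ ⌊x⌋₊, r n / Real.log n| ≤ 2 ^ (m + 2) * V / Real.log x ^ (m + 1) := by
  have hx₀ : 0 ≤ x := by linarith
  have hsqrt : 3 ≤ √x := Real.le_sqrt_of_sq_le (by linarith)
  have hM : 3 ≤ ⌊√x⌋₊ := Nat.le_floor (by exact_mod_cast hsqrt)
  have hMle : (⌊√x⌋₊ : ℝ) ≤ √x := Nat.floor_le (by positivity)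
  have hMx : √x + 1 ≤ x := by nlinarith [Real.mul_self_sqrt hx₀]
  have hlogx : 0 < Real.log x := Real.log_pos (by linarith)
  have hV₀ : 0 ≤ V := (abs_nonneg _).trans (hV 3 le_rfl (by push_cast; linarith))
  have hterm : ∑ n ∈ Ioc ⌊√x⌋₊ ⌊x⌋₊, r n / Real.log n =
      ∑ n ∈ Ioc ⌊√x⌋₊ ⌊x⌋₊, Real.log n ^ m * r n / Real.log n ^ (m + 1) := by
    refine sum_congr rfl fun n hn ↦ ?_
    have hn₁ : 1 < n := by have := (mem_Ioc.1 hn).1; omega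
    have hn₀ : 0 < Real.log n := Real.log_pos (by exact_mod_cast hn₁)
    rw [pow_succ]
    field_simp
  have hhalf : Real.log x / 2 ≤ Real.log ((⌊√x⌋₊ + 1 : ℕ) : ℝ) := by
    rw [← Real.log_sqrt hx₀]
    exact Real.log_le_log (by linarith) (by push_cast; exact (Nat.lt_floor_add_one _).le)
  rw [hterm]
  calc |∑ n ∈ Ioc ⌊√x⌋₊ ⌊x⌋₊, Real.log n ^ m * r n / Real.log n ^ (m + 1)|
      ≤ 2 * V / Real.log ((⌊√x⌋₊ + 1 : ℕ) : ℝ) ^ (m + 1) :=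
        abs_sum_div_log_pow_le (by omega) (Nat.le_floor (by push_cast; linarith))
          (fun n hn hnx ↦ abs_sum_Ioc_le_two_mul hn.le (hV _ hM (by linarith))
            (hV n (by omega) ((Nat.le_floor_iff hx₀).1 hnx))) _
    _ ≤ 2 * V / (Real.log x / 2) ^ (m + 1) := by gcongr
    _ = 2 ^ (m + 2) * V / Real.log x ^ (m + 1) := by
        rw [div_pow, div_div_eq_mul_div]
        ring

theorem exists_abs_sum_vonMangoldtError_div_log_le (m : ℕ) {δ : ℝ} (hδ : 0 < δ) (hδ' : δ < 1) :
    ∃ C : ℝ, 0 < C ∧ ∀ (q : ℕ) [NeZero q] (a : ZMod q) (x : ℝ), IsUnit a → 9 ≤ x →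
      |∑ n ∈ Ioc 1 ⌊x⌋₊, vonMangoldtError a n / Real.log n| ≤
        C * (q : ℝ) ^ δ * (x / Real.log x ^ m) := by
  obtain ⟨C, hC, hsum⟩ := exists_abs_sum_log_pow_mul_vonMangoldtError_le m hδ hδ'
  refine ⟨3 * (2 ^ m * m.factorial) + 2 ^ (2 * m + 2) * C, by positivity, fun q _ a x ha hx ↦ ?_⟩
  have hq : 1 ≤ (q : ℝ) ^ δ := Real.one_le_rpow (by exact_mod_cast NeZero.one_le) hδ.le
  have hlog : 1 ≤ Real.log x := one_le_log_of_three_le (by linarith)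
  have hlarge := abs_sum_div_log_le_of_abs_sum_log_pow_le hx
    (V := C * (q : ℝ) ^ δ * (x * Real.log x ^ m)) fun n hn hnx ↦ by
      have hn₃ : (3 : ℝ) ≤ n := by exact_mod_cast hn
      have h := hsum q a n ha hn₃
      rw [Nat.floor_natCast] at h
      have hpow : Real.log n ^ m ≤ Real.log x ^ m :=
        pow_le_pow_left₀ (Real.log_natCast_nonneg n) (Real.log_le_log (by linarith) hnx) m
      exact h.trans (by gcongr)
  have hsqrt : √x ≤ 2 ^ m * m.factorial * (x / Real.log x ^ m) := by
    rw [← mul_div_assoc, le_div_iff₀ (by positivity)]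
    exact sqrt_mul_log_pow_le m (by linarith)
  have hM : 1 ≤ ⌊√x⌋₊ := Nat.le_floor (by simpa using (by linarith : 1 ≤ x))
  have hMx : ⌊√x⌋₊ ≤ ⌊x⌋₊ := Nat.floor_mono (Real.sqrt_le_iff.2 ⟨by linarith, by nlinarith⟩)
  rw [← sum_Ioc_consecutive _ hM hMx]
  calc _ ≤ |∑ n ∈ Ioc 1 ⌊√x⌋₊, vonMangoldtError a n / Real.log n| +
        |∑ n ∈ Ioc ⌊√x⌋₊ ⌊x⌋₊, vonMangoldtError a n / Real.log n| := abs_add_le _ _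
    _ ≤ 3 * (1 * √x) + 2 ^ (2 * m + 2) * (C * (q : ℝ) ^ δ * (x * Real.log x ^ m)) /
        Real.log x ^ (2 * m + 1) := by
        rw [one_mul]
        exact add_le_add (abs_sum_vonMangoldtError_div_log_le_sqrt a x) hlarge
    _ = 3 * (1 * √x) + 2 ^ (2 * m + 2) * C * (q : ℝ) ^ δ * (x / Real.log x ^ m) *
        (1 / Real.log x) := by
        rw [show Real.log x ^ (2 * m + 1) = Real.log x ^ m * Real.log x ^ m * Real.log x by ring]
        field_simp
    _ ≤ 3 * ((q : ℝ) ^ δ * (2 ^ m * m.factorial * (x / Real.log x ^ m))) +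
        2 ^ (2 * m + 2) * C * (q : ℝ) ^ δ * (x / Real.log x ^ m) * 1 := by
        gcongr
        rw [div_le_one (by linarith)]
        exact hlog
    _ = _ := by ring

/-! ### The logarithmic integral -/

/-- The offset logarithmic integral `∫₂ˣ du / log u`, the main term in the prime number theorem. -/
noncomputable def logIntegral (x : ℝ) : ℝ := ∫ u in (2 : ℝ)..x, 1 / Real.log u

lemma antitoneOn_one_div_log : AntitoneOn (fun u : ℝ ↦ 1 / Real.log u) (Set.Ici 2) :=
  fun u hu v _ huv ↦ by
    have hu₂ : 2 ≤ u := hu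
    exact one_div_le_one_div_of_le (Real.log_pos (by linarith))
      (Real.log_le_log (by linarith) huv)

lemma one_div_log_nonneg {u : ℝ} (hu : 2 ≤ u) : 0 ≤ 1 / Real.log u :=
  one_div_nonneg.2 (Real.log_nonneg (by linarith))

lemma one_div_log_le_two {u : ℝ} (hu : 2 ≤ u) : 1 / Real.log u ≤ 2 := by
  refine (antitoneOn_one_div_log (Set.mem_Ici.2 le_rfl) hu hu).trans ?_
  rw [div_le_iff₀ (Real.log_pos one_lt_two)]
  linarith [Real.log_two_gt_d9]

section

variable {b c : ℝ} (hb : 2 ≤ b) (hbc : b ≤ c)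

include hb hbc

lemma intervalIntegrable_one_div_log :
    IntervalIntegrable (fun u : ℝ ↦ 1 / Real.log u) volume b c := by
  refine (antitoneOn_one_div_log.mono ?_).intervalIntegrable
  rw [Set.uIcc_of_le hbc]
  exact fun u hu ↦ hb.trans hu.1

lemma integral_one_div_log_nonneg : 0 ≤ ∫ u in b..c, 1 / Real.log u :=
  intervalIntegral.integral_nonneg hbc fun _ hu ↦ one_div_log_nonneg (hb.trans hu.1)

lemma integral_one_div_log_le : ∫ u in b..c, 1 / Real.log u ≤ 2 * (c - b) := by
  rw [mul_comm, ← smul_eq_mul, ← intervalIntegral.integral_const]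
  exact intervalIntegral.integral_mono_on hbc (intervalIntegrable_one_div_log hb hbc)
    intervalIntegrable_const fun u hu ↦ one_div_log_le_two (hb.trans hu.1)

end

lemma abs_sum_one_div_log_sub_logIntegral_le {x : ℝ} (hx : 2 ≤ x) :
    |∑ n ∈ Ioc 1 ⌊x⌋₊, 1 / Real.log n - logIntegral x| ≤ 2 := by
  set N := ⌊x⌋₊
  have hN : 2 ≤ N := Nat.le_floor (by exact_mod_cast hx)
  have hN' : (2 : ℝ) ≤ N := by exact_mod_cast hN
  have hNx : (N : ℝ) ≤ x := Nat.floor_le (by linarith)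
  have hxN : x < N + 1 := Nat.lt_floor_add_one x
  have hanti : AntitoneOn (fun u : ℝ ↦ 1 / Real.log u) (Set.Icc ((2 : ℕ) : ℝ) N) :=
    antitoneOn_one_div_log.mono fun u hu ↦ by exact_mod_cast hu.1
  have hlower := hanti.sum_le_integral_Ico hN
  have hupper := hanti.integral_le_sum_Ico hN
  rw [Nat.cast_ofNat] at hlower hupper
  have hIoc : Ioc 1 N = Ico 2 (N + 1) := by
    ext n
    rw [mem_Ioc, mem_Ico]
    omega
  have hsum_bot : ∑ n ∈ Ioc 1 N, 1 / Real.log n = 1 / Real.log 2 +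
      ∑ i ∈ Ico 2 N, 1 / Real.log ((i + 1 : ℕ) : ℝ) := by
    rw [sum_Ico_add' (fun n : ℕ ↦ 1 / Real.log (n : ℝ)) 2 N 1, hIoc,
      sum_eq_sum_Ico_succ_bot (by omega), Nat.cast_ofNat]
  have hsum_top : ∑ n ∈ Ioc 1 N, 1 / Real.log n =
      ∑ i ∈ Ico 2 N, 1 / Real.log (i : ℝ) + 1 / Real.log N := by
    rw [hIoc, sum_Ico_succ_top (by omega)]
  rw [logIntegral, ← intervalIntegral.integral_add_adjacent_intervals
    (intervalIntegrable_one_div_log le_rfl hN') (intervalIntegrable_one_div_log hN' hNx), abs_le]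
  constructor <;> linarith [one_div_log_nonneg hN', one_div_log_le_two hN',
    one_div_log_nonneg (le_refl (2 : ℝ)), one_div_log_le_two (le_refl (2 : ℝ)),
    integral_one_div_log_nonneg hN' hNx, integral_one_div_log_le hN' hNx]

/-! ### Counting primes in a residue class -/

/-- The number `π(x; q, a)` of primes up to `x` in the residue class `a` modulo `q`. -/
noncomputable def primeCountingMod {q : ℕ} (a : ZMod q) (x : ℝ) : ℕ :=
  ((Icc 1 ⌊x⌋₊).filter fun p : ℕ ↦ p.Prime ∧ (p : ZMod q) = a).card

section

variable {q : ℕ} (a : ZMod q)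

lemma primeCountingMod_eq_sum {x : ℝ} (hx : 1 ≤ x) : (primeCountingMod a x : ℝ) =
    ∑ n ∈ Ioc 1 ⌊x⌋₊, if n.Prime ∧ (n : ZMod q) = a then (1 : ℝ) else 0 := by
  have hIcc : Icc 1 ⌊x⌋₊ = Ioc 0 ⌊x⌋₊ := rfl
  have hIoc : Ioc 0 1 = {1} := rfl
  rw [primeCountingMod, card_filter, hIcc,
    ← sum_Ioc_consecutive _ zero_le_one (Nat.le_floor (by simpa using hx) : 1 ≤ ⌊x⌋₊),
    hIoc, sum_singleton, if_neg fun h ↦ Nat.not_prime_one h.1, zero_add]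
  push_cast
  rfl

lemma abs_residueClass_div_log_sub_le {n : ℕ} (hn : 2 ≤ n) :
    |vonMangoldt.residueClass a n / Real.log n -
        if n.Prime ∧ (n : ZMod q) = a then (1 : ℝ) else 0| ≤
      2 * (vonMangoldt n - if n.Prime then Real.log n else 0) := by
  have hn₂ : (2 : ℝ) ≤ n := by exact_mod_cast hn
  by_cases hp : n.Prime
  · rw [if_pos hp, ArithmeticFunction.vonMangoldt_apply_prime hp, sub_self, mul_zero,
      vonMangoldt.residueClass]
    by_cases hna : (n : ZMod q) = a
    · rw [if_pos ⟨hp, hna⟩, Set.indicator_of_mem (by exact hna),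
        ArithmeticFunction.vonMangoldt_apply_prime hp,
        div_self (Real.log_pos (by linarith)).ne', sub_self, abs_zero]
    · rw [if_neg fun h ↦ hna h.2, Set.indicator_of_notMem (by exact hna), zero_div, sub_zero,
        abs_zero]
  · have hnonneg := vonMangoldt.residueClass_nonneg a n
    have hle := vonMangoldt.residueClass_le a n
    rw [if_neg fun h ↦ hp h.1, if_neg hp, sub_zero, sub_zero, div_eq_mul_one_div,
      abs_of_nonneg (mul_nonneg hnonneg (one_div_log_nonneg hn₂)), mul_comm 2]
    exact mul_le_mul hle (one_div_log_le_two hn₂) (one_div_log_nonneg hn₂) (hnonneg.trans hle)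

/-- The difference comes from the prime powers, which are counted by `ψ - θ`. -/
lemma abs_sum_residueClass_div_log_sub_primeCountingMod_le {x : ℝ} (hx : 1 ≤ x) :
    |∑ n ∈ Ioc 1 ⌊x⌋₊, vonMangoldt.residueClass a n / Real.log n - primeCountingMod a x| ≤
      4 * √x * Real.log x := by
  have hpsi := Chebyshev.psi_sub_theta_le hx
  rw [Chebyshev.psi, Chebyshev.theta, sum_filter, ← sum_sub_distrib] at hpsi
  have hnonneg (n : ℕ) : 0 ≤ vonMangoldt n - if n.Prime then Real.log n else 0 := by
    split_ifs with hp
    · rw [ArithmeticFunction.vonMangoldt_apply_prime hp, sub_self]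
    · rw [sub_zero]
      exact ArithmeticFunction.vonMangoldt_nonneg
  rw [primeCountingMod_eq_sum a hx, ← sum_sub_distrib]
  calc _ ≤ ∑ n ∈ Ioc 1 ⌊x⌋₊, |vonMangoldt.residueClass a n / Real.log n -
        if n.Prime ∧ (n : ZMod q) = a then (1 : ℝ) else 0| := abs_sum_le_sum_abs _ _
    _ ≤ ∑ n ∈ Ioc 1 ⌊x⌋₊, 2 * (vonMangoldt n - if n.Prime then Real.log n else 0) :=
        sum_le_sum fun n hn ↦ abs_residueClass_div_log_sub_le a (mem_Ioc.1 hn).1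
    _ ≤ ∑ n ∈ Ioc 0 ⌊x⌋₊, 2 * (vonMangoldt n - if n.Prime then Real.log n else 0) :=
        sum_le_sum_of_subset_of_nonneg (Ioc_subset_Ioc_left zero_le_one)
          fun n _ _ ↦ mul_nonneg zero_le_two (hnonneg n)
    _ ≤ 2 * (2 * √x * Real.log x) := by
        rw [← mul_sum]
        gcongr
    _ = 4 * √x * Real.log x := by ring

lemma primeCountingMod_le {x : ℝ} (hx : 0 ≤ x) :
    (primeCountingMod a x : ℝ) ≤ x / q + 1 := by
  have hcard : primeCountingMod a x ≤ #(range (⌊x⌋₊ / q + 1)) := by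
    refine card_le_card_of_injOn (fun n ↦ n / q) (fun n hn ↦ ?_) fun n hn k hk hnk ↦ ?_
    · have hnx := (mem_Icc.1 (mem_filter.1 (mem_coe.1 hn)).1).2
      exact mem_coe.2 (mem_range.2 (Nat.lt_succ_of_le (Nat.div_le_div_right hnx)))
    · have hna := (mem_filter.1 (mem_coe.1 hn)).2.2
      have hka := (mem_filter.1 (mem_coe.1 hk)).2.2
      have hmod : n % q = k % q := (ZMod.natCast_eq_natCast_iff' n k q).1 (hna.trans hka.symm)
      have hdiv : n / q = k / q := hnk
      rw [← Nat.div_add_mod n q, ← Nat.div_add_mod k q, hmod, hdiv]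
  rw [card_range] at hcard
  calc (primeCountingMod a x : ℝ) ≤ ((⌊x⌋₊ / q + 1 : ℕ) : ℝ) := by exact_mod_cast hcard
    _ ≤ (⌊x⌋₊ : ℝ) / q + 1 := by
        push_cast
        gcongr
        exact Nat.cast_div_le
    _ ≤ x / q + 1 := by
        gcongr
        exact Nat.floor_le hx

lemma abs_primeCountingMod_sub_logIntegral_le [NeZero q] {x : ℝ} (hx : 2 ≤ x) :
    |primeCountingMod a x - (q.totient : ℝ)⁻¹ * logIntegral x| ≤
      3 * ((q.totient : ℝ)⁻¹ * x) + 1 := by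
  have htot : (0 : ℝ) < q.totient := by exact_mod_cast Nat.totient_pos.2 (NeZero.pos q)
  have hli₀ : 0 ≤ (q.totient : ℝ)⁻¹ * logIntegral x :=
    mul_nonneg (by positivity) (integral_one_div_log_nonneg le_rfl hx)
  have hli : (q.totient : ℝ)⁻¹ * logIntegral x ≤ (q.totient : ℝ)⁻¹ * (2 * x) :=
    mul_le_mul_of_nonneg_left ((integral_one_div_log_le le_rfl hx).trans (by linarith))
      (by positivity)
  have hcount : (primeCountingMod a x : ℝ) ≤ (q.totient : ℝ)⁻¹ * x + 1 := by
    refine (primeCountingMod_le a (by linarith)).trans ?_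
    rw [div_eq_inv_mul]
    gcongr
    exact q.totient_le
  rw [abs_le]
  constructor <;> linarith [(primeCountingMod a x).cast_nonneg (α := ℝ)]

end

lemma exists_mul_rpow_le_totient {ε : ℝ} (hε : 0 < ε) :
    ∃ c : ℝ, 0 < c ∧ ∀ q : ℕ, q ≠ 0 → c * (q : ℝ) ^ (1 - ε) ≤ q.totient := by
  obtain ⟨c, hc, hprod⟩ := exists_mul_rpow_neg_le_prod_one_sub_inv hε
  refine ⟨c, hc, fun q hq ↦ ?_⟩
  have hq₀ : (0 : ℝ) < q := by exact_mod_cast Nat.pos_of_ne_zero hq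
  have htot : (q.totient : ℝ) = q * ∏ p ∈ q.primeFactors, (1 - (p : ℝ)⁻¹) := by
    have htot_rat := congrArg (fun t : ℚ ↦ (t : ℝ)) (Nat.totient_eq_mul_prod_factors q)
    push_cast at htot_rat
    exact htot_rat
  calc c * (q : ℝ) ^ (1 - ε) = q * (c * (q : ℝ) ^ (-ε)) := by
        rw [sub_eq_add_neg, Real.rpow_add hq₀, Real.rpow_one]
        ring
    _ ≤ q.totient := by
        rw [htot]
        exact mul_le_mul_of_nonneg_left (hprod q hq) hq₀.le

/-! ### The prime number theorem in a residue class -/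

theorem exists_abs_primeCountingMod_sub_logIntegral_le (m : ℕ) {δ : ℝ} (hδ : 0 < δ)
    (hδ' : δ < 1) :
    ∃ C : ℝ, 0 < C ∧ ∀ (q : ℕ) [NeZero q] (a : ZMod q) (x : ℝ), IsUnit a → 9 ≤ x →
      |primeCountingMod a x - (q.totient : ℝ)⁻¹ * logIntegral x| ≤
        C * (q : ℝ) ^ δ * (x / Real.log x ^ m) := by
  obtain ⟨C, hC, hsum⟩ := exists_abs_sum_vonMangoldtError_div_log_le m hδ hδ'
  refine ⟨C + 6 * (2 ^ (m + 1) * (m + 1).factorial), by positivity, fun q _ a x ha hx ↦ ?_⟩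
  have hq : 1 ≤ (q : ℝ) ^ δ := Real.one_le_rpow (by exact_mod_cast NeZero.one_le) hδ.le
  have hlog : 1 ≤ Real.log x := one_le_log_of_three_le (by linarith)
  have hsqrt : 1 ≤ √x := Real.one_le_sqrt.2 (by linarith)
  set R := ∑ n ∈ Ioc 1 ⌊x⌋₊, vonMangoldt.residueClass a n / Real.log n
  set T := ∑ n ∈ Ioc 1 ⌊x⌋₊, 1 / Real.log n
  have herror : ∑ n ∈ Ioc 1 ⌊x⌋₊, vonMangoldtError a n / Real.log n =
      R - (q.totient : ℝ)⁻¹ * T := by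
    rw [mul_sum, ← sum_sub_distrib]
    refine sum_congr rfl fun n _ ↦ ?_
    rw [vonMangoldtError]
    ring
  have hli : |(q.totient : ℝ)⁻¹ * (T - logIntegral x)| ≤ 1 * 2 := by
    rw [abs_mul, abs_of_nonneg (by positivity)]
    exact mul_le_mul (Nat.cast_inv_le_one _)
      (abs_sum_one_div_log_sub_logIntegral_le (by linarith)) (abs_nonneg _) zero_le_one
  have hsmall : √x * Real.log x ≤ 2 ^ (m + 1) * (m + 1).factorial * (x / Real.log x ^ m) := by
    rw [← mul_div_assoc, le_div_iff₀ (by positivity), mul_assoc, ← pow_succ']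
    exact sqrt_mul_log_pow_le (m + 1) (by linarith)
  have hR := abs_sum_residueClass_div_log_sub_primeCountingMod_le a (by linarith : 1 ≤ x)
  calc |primeCountingMod a x - (q.totient : ℝ)⁻¹ * logIntegral x|
      = |(R - (q.totient : ℝ)⁻¹ * T) + (q.totient : ℝ)⁻¹ * (T - logIntegral x) -
          (R - primeCountingMod a x)| := by ring_nf
    _ ≤ |R - (q.totient : ℝ)⁻¹ * T| + |(q.totient : ℝ)⁻¹ * (T - logIntegral x)| +
          |R - primeCountingMod a x| :=
        (abs_sub _ _).trans (add_le_add (abs_add_le _ _) le_rfl)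
    _ ≤ C * (q : ℝ) ^ δ * (x / Real.log x ^ m) + 1 * 2 + 4 * √x * Real.log x :=
        add_le_add (add_le_add (herror ▸ hsum q a x ha hx) hli) hR
    _ ≤ C * (q : ℝ) ^ δ * (x / Real.log x ^ m) + 6 * (1 * (√x * Real.log x)) := by nlinarith
    _ ≤ C * (q : ℝ) ^ δ * (x / Real.log x ^ m) + 6 * ((q : ℝ) ^ δ *
          (2 ^ (m + 1) * (m + 1).factorial * (x / Real.log x ^ m))) := by gcongr
    _ = _ := by ring

section

variable {A x : ℝ}

lemma log_rpow_le_log_pow_ceil (A : ℝ) (hx : 3 ≤ x) : Real.log x ^ A ≤ Real.log x ^ ⌈A⌉₊ := by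
  rw [← Real.rpow_natCast]
  exact Real.rpow_le_rpow_of_exponent_le (one_le_log_of_three_le hx) (Nat.le_ceil A)

lemma exists_abs_primeCountingMod_sub_le_of_le_log_rpow (hA : 0 < A) :
    ∃ C : ℝ, 0 < C ∧ ∀ (q : ℕ) [NeZero q] (a : ZMod q) (x : ℝ), IsUnit a → 9 ≤ x →
      (q : ℝ) ≤ Real.log x ^ (2 * A + 1) →
      |primeCountingMod a x - (q.totient : ℝ)⁻¹ * logIntegral x| ≤ C * (x / Real.log x ^ A) := by
  obtain ⟨C, hC, hbound⟩ := exists_abs_primeCountingMod_sub_logIntegral_le (⌈A⌉₊ + 1)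
    (δ := (2 * A + 1)⁻¹) (by positivity) (inv_lt_one_of_one_lt₀ (by linarith))
  refine ⟨C, hC, fun q _ a x ha hx hq ↦ ?_⟩
  have hlog : 0 < Real.log x := Real.log_pos (by linarith)
  have hqlog : (q : ℝ) ^ (2 * A + 1)⁻¹ ≤ Real.log x :=
    (Real.rpow_inv_le_iff_of_pos (by positivity) hlog.le (by positivity)).2 hq
  calc _ ≤ C * (q : ℝ) ^ (2 * A + 1)⁻¹ * (x / Real.log x ^ (⌈A⌉₊ + 1)) := hbound q a x ha hx
    _ ≤ C * Real.log x * (x / Real.log x ^ (⌈A⌉₊ + 1)) := by gcongr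
    _ = C * (x / Real.log x ^ ⌈A⌉₊) := by
        rw [pow_succ]
        field_simp
    _ ≤ C * (x / Real.log x ^ A) := by
        gcongr
        exact log_rpow_le_log_pow_ceil A (by linarith)

lemma exists_abs_primeCountingMod_sub_le_of_log_rpow_lt (A : ℝ) :
    ∃ C : ℝ, 0 < C ∧ ∀ (q : ℕ) [NeZero q] (a : ZMod q) (x : ℝ), 9 ≤ x →
      Real.log x ^ (2 * A + 1) < q →
      |primeCountingMod a x - (q.totient : ℝ)⁻¹ * logIntegral x| ≤ C * (x / Real.log x ^ A) := by
  obtain ⟨c, hc, htot⟩ := exists_mul_rpow_le_totient (ε := 1 / 2) (by norm_num)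
  refine ⟨3 * c⁻¹ + ⌈A⌉₊.factorial, by positivity, fun q _ a x hx hq ↦ ?_⟩
  have hlog : 1 ≤ Real.log x := one_le_log_of_three_le (by linarith)
  have hsqrt : Real.log x ^ A ≤ (q : ℝ) ^ (1 - 1 / 2 : ℝ) :=
    calc Real.log x ^ A = (Real.log x ^ (2 * A)) ^ (1 - 1 / 2 : ℝ) := by
          rw [← Real.rpow_mul (by linarith)]
          ring_nf
      _ ≤ (q : ℝ) ^ (1 - 1 / 2 : ℝ) := by
          refine Real.rpow_le_rpow (by positivity) (le_trans ?_ hq.le) (by norm_num)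
          exact Real.rpow_le_rpow_of_exponent_le hlog (by linarith)
  have hinv : (q.totient : ℝ)⁻¹ ≤ c⁻¹ * (Real.log x ^ A)⁻¹ := by
    rw [← mul_inv]
    exact inv_anti₀ (by positivity)
      ((mul_le_mul_of_nonneg_left hsqrt hc.le).trans (htot q (NeZero.ne q)))
  have hone : 1 ≤ ⌈A⌉₊.factorial * (x / Real.log x ^ A) := by
    rw [← mul_div_assoc, one_le_div (by positivity)]
    exact (log_rpow_le_log_pow_ceil A (by linarith)).trans
      (log_pow_le_factorial_mul _ (by linarith))
  calc _ ≤ 3 * ((q.totient : ℝ)⁻¹ * x) + 1 :=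
        abs_primeCountingMod_sub_logIntegral_le a (by linarith)
    _ ≤ 3 * (c⁻¹ * (Real.log x ^ A)⁻¹ * x) + ⌈A⌉₊.factorial * (x / Real.log x ^ A) := by
        gcongr
    _ = _ := by ring

lemma abs_primeCountingMod_sub_le_of_lt_nine (hA : 0 ≤ A) {q : ℕ} [NeZero q] (a : ZMod q)
    (hx : 2 ≤ x) (hx₉ : x < 9) :
    |primeCountingMod a x - (q.totient : ℝ)⁻¹ * logIntegral x| ≤
      28 * 9 ^ A * (x / Real.log x ^ A) := by
  have hlog : 0 < Real.log x := Real.log_pos (by linarith)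
  have hlog₉ : Real.log x ^ A ≤ 9 ^ A := Real.rpow_le_rpow hlog.le
    (by linarith [Real.log_le_sub_one_of_pos (by linarith : 0 < x)]) hA
  have hone : 1 ≤ 9 ^ A * (x / Real.log x ^ A) := by
    rw [← mul_div_assoc, one_le_div (by positivity)]
    exact hlog₉.trans (le_mul_of_one_le_right (by positivity) (by linarith))
  have htot : (q.totient : ℝ)⁻¹ * x ≤ 1 * x :=
    mul_le_mul_of_nonneg_right (Nat.cast_inv_le_one _) (by linarith)
  linarith [abs_primeCountingMod_sub_logIntegral_le a hx]

end

theorem exists_abs_primeCountingMod_sub_le_div_log_rpow {A : ℝ} (hA : 0 < A) :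
    ∃ C : ℝ, 0 < C ∧ ∀ (q : ℕ) [NeZero q] (a : ZMod q) (x : ℝ), IsUnit a → 2 ≤ x →
      |primeCountingMod a x - (q.totient : ℝ)⁻¹ * logIntegral x| ≤ C * (x / Real.log x ^ A) := by
  obtain ⟨C₁, hC₁, hsmall⟩ := exists_abs_primeCountingMod_sub_le_of_le_log_rpow hA
  obtain ⟨C₂, hC₂, hlarge⟩ := exists_abs_primeCountingMod_sub_le_of_log_rpow_lt A
  refine ⟨C₁ + C₂ + 28 * 9 ^ A, by positivity, fun q _ a x ha hx ↦ ?_⟩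
  have hlog : 0 < Real.log x := Real.log_pos (by linarith)
  have hnonneg : 0 ≤ x / Real.log x ^ A := by positivity
  suffices h : ∃ C ≤ C₁ + C₂ + 28 * 9 ^ A,
      |primeCountingMod a x - (q.totient : ℝ)⁻¹ * logIntegral x| ≤ C * (x / Real.log x ^ A) by
    obtain ⟨C, hC, hbound⟩ := h
    exact hbound.trans (mul_le_mul_of_nonneg_right hC hnonneg)
  have hpow : (0 : ℝ) < 9 ^ A := by positivity
  rcases lt_or_ge x 9 with hx₉ | hx₉
  · exact ⟨_, by linarith, abs_primeCountingMod_sub_le_of_lt_nine hA.le a hx hx₉⟩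
  · rcases le_or_gt (q : ℝ) (Real.log x ^ (2 * A + 1)) with hq | hq
    · exact ⟨C₁, by linarith, hsmall q a x ha hx₉ hq⟩
    · exact ⟨C₂, by linarith, hlarge q a x hx₉ hq⟩

end SiegelWalfisz

open Finset in
/-- **Siegel–Walfisz theorem.** For fixed `A > 0` there is `C(A) > 0` such that for all
`q ≥ 1`, integers `a` coprime to `q`, and real `x ≥ 2`,
`|π(x;q,a) - (1/φ(q)) ∫₂ˣ du / log u| ≤ C(A) x / (log x)^A`. -/
theorem siegel_walfisz (A : ℝ) (hA : 0 < A) :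
    ∃ C : ℝ, 0 < C ∧
      ∀ (q : ℕ) (a : ℤ), 1 ≤ q → Int.gcd a q = 1 → ∀ x : ℝ, 2 ≤ x →
        |(((Icc 1 ⌊x⌋₊).filter (fun p : ℕ => p.Prime ∧ (p : ℤ) % (q : ℤ) = a % (q : ℤ))).card : ℝ) -
            (1 / (Nat.totient q : ℝ)) * ∫ u in (2:ℝ)..x, 1 / Real.log u| ≤
          C * x / Real.log x ^ A := by
  obtain ⟨C, hC, hbound⟩ := SiegelWalfisz.exists_abs_primeCountingMod_sub_le_div_log_rpow hA
  refine ⟨C, hC, fun q a hq hgcd x hx ↦ ?_⟩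
  have : NeZero q := ⟨by omega⟩
  have ha : IsUnit (a : ZMod q) := by
    rw [ZMod.coe_int_isUnit_iff_isCoprime, isCoprime_comm]
    exact Int.isCoprime_iff_gcd_eq_one.2 hgcd
  have hclass (p : ℕ) : (p : ℤ) % q = a % q ↔ (p : ZMod q) = a := by
    simpa using (ZMod.intCast_eq_intCast_iff' (p : ℤ) a q).symm
  simp only [hclass, mul_div_assoc, one_div (Nat.totient q : ℝ)]
  exact hbound q a x ha hx
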